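/- Up to isomorphism, the oddly (2)-bipancyclic graphs on v vertices with at most v + 4 edges are: exactly 2 of order 9, exactly 3 of order 15, exactly 8 of order 21, and exactly 4 of order 25; in particular every such graph has v ∈ {9, 15, 21, 25}. -/

import Mathlib

open SimpleGraph

/-- The number of cycles of length `k` in `G`, counted as subgraphs of `G`
isomorphic to the cycle graph `C_k`. -/
noncomputable def cycleCount {V : Type*} (G : SimpleGraph V) (k : ℕ) : ℕ :=
  {H : G.Subgraph | Nonempty (H.coe ≃g cycleGraph k)}.ncard

/-- A bipartite graph on an odd number `v` of vertices with minimum degree at least `2`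
is oddly `(r)`-bipancyclic if it contains precisely `r` cycles of each even length
from `4` to `v - 1`. -/
def IsOddlyRBipancyclic {V : Type*} [Fintype V] (G : SimpleGraph V) (r : ℕ) : Prop :=
  G.Colorable 2 ∧ Odd (Fintype.card V) ∧ (∀ x : V, 2 ≤ (G.neighborSet x).ncard) ∧
    ∀ k : ℕ, 4 ≤ k → k ≤ Fintype.card V - 1 → Even k → cycleCount G k = r

/-- There are, up to isomorphism, exactly `N` graphs on `v` vertices with at most
`b` edges satisfying the given pancyclicity property with parameter `r`. -/
def ExactlyNUpToIso (r N v b : ℕ) : Prop :=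
  ∃ Gs : Fin N → SimpleGraph (Fin v),
    (∀ i j : Fin N, i ≠ j → IsEmpty (Gs i ≃g Gs j)) ∧
    (∀ i : Fin N, IsOddlyRBipancyclic (Gs i) r ∧ (Gs i).edgeSet.ncard ≤ b) ∧
    (∀ (W : Type) [Fintype W] (G : SimpleGraph W), Fintype.card W = v →
      G.edgeSet.ncard ≤ b → IsOddlyRBipancyclic G r → ∃ i : Fin N, Nonempty (G ≃g Gs i))

set_option linter.unusedSectionVars false
set_option linter.unusedVariables false
set_option linter.style.haveILetI false

namespace OB



/-! ### Part A: cycles as minimal even edge sets -/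

section PartA
variable {V : Type*} [Fintype V]

/-- the boundary of a mod 2 edge chain -/
def bd (f : Sym2 V → ZMod 2) (v : V) : ZMod 2 := ∑ w, f s(v, w)

/-- minimal nonzero even chains supported in `E` -/
structure IsCyc (E : Set (Sym2 V)) (f : Sym2 V → ZMod 2) : Prop where
  ne : f ≠ 0
  even : ∀ v, bd f v = 0
  sub : ∀ e, f e ≠ 0 → e ∈ E
  min : ∀ g : Sym2 V → ZMod 2, g ≠ 0 → (∀ v, bd g v = 0) → (∀ e, g e ≠ 0 → f e ≠ 0) → g = f

theorem zmod2 (x : ZMod 2) : x = 0 ∨ x = 1 := by revert x; decide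
theorem zmod2_ne (x : ZMod 2) : x ≠ 0 ↔ x = 1 := by revert x; decide
theorem zmod2_ext {x y : ZMod 2} (h : x ≠ 0 ↔ y ≠ 0) : x = y := by revert x y; decide
theorem zmod2_add {x y : ZMod 2} (h : x + y = 0) : x = y := by revert x y; decide

theorem fin_two_ne (l : ℕ) : (1 : Fin (l+3)) + 1 ≠ 0 := by
  intro h
  have := congrArg Fin.val h
  simp [Fin.val_add, Nat.mod_eq_of_lt] at this

theorem fin_pm_ne (l : ℕ) (i : Fin (l+3)) : i - 1 ≠ i + 1 := by
  intro h
  apply fin_two_ne l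
  have : i + (1 + 1) = i := by rw [← add_assoc, ← h, sub_add_cancel]
  simpa using this

/-- the chain of a closed vertex sequence -/
theorem bd_cyc {l : ℕ} (φ : Fin (l+3) → V) (hφ : Function.Injective φ) (g : Sym2 V → ZMod 2)
    (hg : ∀ e, g e ≠ 0 → ∃ i, e = s(φ i, φ (i+1))) (i : Fin (l+3)) :
    bd g (φ i) = g s(φ (i-1), φ i) + g s(φ i, φ (i+1)) := by
  classical
  unfold bd
  rw [Finset.sum_eq_add (φ (i-1)) (φ (i+1))]
  · rw [Sym2.eq_swap]
  · intro h; exact fin_pm_ne l i (hφ h)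
  · intro c _ hc
    by_contra hne
    obtain ⟨j, hj⟩ := hg _ hne
    rw [Sym2.eq_iff] at hj
    rcases hj with ⟨h1, h2⟩ | ⟨h1, h2⟩
    · have := hφ h1; subst this; exact hc.2 h2
    · have := hφ h1; subst this; apply hc.1; rw [h2]; simp
  · simp
  · simp

theorem bd_cyc_out {l : ℕ} (φ : Fin (l+3) → V) (g : Sym2 V → ZMod 2)
    (hg : ∀ e, g e ≠ 0 → ∃ i, e = s(φ i, φ (i+1))) (v : V) (hv : v ∉ Set.range φ) :
    bd g v = 0 := by
  unfold bd
  apply Finset.sum_eq_zero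
  intro w _
  by_contra hne
  obtain ⟨j, hj⟩ := hg _ hne
  rw [Sym2.eq_iff] at hj
  rcases hj with ⟨h1, h2⟩ | ⟨h1, h2⟩
  · exact hv ⟨_, h1.symm⟩
  · exact hv ⟨_, h1.symm⟩

theorem fin_const {α : Type*} {l : ℕ} (h : Fin (l+3) → α) (hh : ∀ i, h (i-1) = h i) (i : Fin (l+3)) :
    h i = h 0 := by
  have key : ∀ m : ℕ, ∀ hm : m < l + 3, h ⟨m, hm⟩ = h 0 := by
    intro m
    induction m with
    | zero => intro hm; rfl
    | succ m ih =>
      intro hm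
      rw [← hh, ← ih (by omega)]
      congr 1
      apply sub_eq_of_eq_add
      apply Fin.ext
      rw [Fin.val_add, Fin.val_one, Nat.mod_eq_of_lt]
      exact hm
  exact key i.1 i.2

theorem cyc_of_fn {l : ℕ} (φ : Fin (l+3) → V) (hφ : Function.Injective φ) (f : Sym2 V → ZMod 2)
    (hf : ∀ e, f e ≠ 0 ↔ ∃ i, e = s(φ i, φ (i+1))) (E : Set (Sym2 V)) (hE : ∀ i, s(φ i, φ (i+1)) ∈ E) :
    IsCyc E f ∧ {e | f e ≠ 0}.ncard = l + 3 := by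
  refine ⟨⟨?_, ?_, ?_, ?_⟩, ?_⟩
  · intro h
    have := (hf s(φ 0, φ (0+1))).2 ⟨0, rfl⟩
    rw [h] at this; exact this rfl
  · intro v
    by_cases hv : v ∈ Set.range φ
    · obtain ⟨i, rfl⟩ := hv
      rw [bd_cyc φ hφ f (fun e => (hf e).1)]
      have h1 := (zmod2_ne _).1 ((hf s(φ (i-1), φ i)).2 ⟨i-1, by simp⟩)
      have h2 := (zmod2_ne _).1 ((hf s(φ (i), φ (i+1))).2 ⟨i, by simp⟩)
      rw [h1, h2]; decide
    · exact bd_cyc_out φ f (fun e => (hf e).1) v hv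
  · intro e he
    obtain ⟨i, rfl⟩ := (hf e).1 he
    exact hE i
  · intro g g0 gev gs
    have hg : ∀ e, g e ≠ 0 → ∃ i, e = s(φ i, φ (i+1)) := fun e he => (hf e).1 (gs e he)
    have hc := fin_const (fun i => g s(φ i, φ (i+1))) (fun i => by
      have := gev (φ i)
      rw [bd_cyc φ hφ g hg] at this
      simpa using zmod2_add this)
    have h0 : g s(φ 0, φ (0+1)) ≠ 0 := by
      intro h0
      apply g0
      funext e
      by_contra he
      obtain ⟨i, rfl⟩ := hg e he
      have := hc i
      rw [h0] at this
      exact he this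
    funext e
    apply zmod2_ext
    refine ⟨gs e, fun he => ?_⟩
    obtain ⟨i, rfl⟩ := (hf e).1 he
    have := hc i
    rw [this]; exact h0
  · have : {e | f e ≠ 0} = Set.range (fun i => s(φ i, φ (i+1))) := by
      ext e
      simp only [Set.mem_ofPred_eq, hf e, Set.mem_range]
      exact ⟨fun ⟨i, h⟩ => ⟨i, h.symm⟩, fun ⟨i, h⟩ => ⟨i, h.symm⟩⟩
    rw [this, ← Set.image_univ, Set.ncard_image_of_injective, Set.ncard_univ, Nat.card_eq_fintype_card, Fintype.card_fin]
    intro i j hij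
    simp only [Sym2.eq_iff] at hij
    rcases hij with ⟨h1, h2⟩ | ⟨h1, h2⟩
    · exact hφ h1
    · exfalso
      have h1 := hφ h1
      have h2 := hφ h2
      subst h1
      apply fin_pm_ne l (j + 1)
      simpa using h2.symm

open Classical in
/-- indicator chain of a subgraph -/
noncomputable def chi {G : SimpleGraph V} (H : G.Subgraph) : Sym2 V → ZMod 2 :=
  fun e => if e ∈ H.edgeSet then 1 else 0

theorem chi_ne {G : SimpleGraph V} (H : G.Subgraph) (e : Sym2 V) : chi H e ≠ 0 ↔ e ∈ H.edgeSet := by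
  unfold chi; split_ifs <;> simp_all

theorem copy_edge {G : SimpleGraph V} {l : ℕ} (c : Copy (cycleGraph (l+3)) G) (e : Sym2 V) :
    e ∈ c.toSubgraph.edgeSet ↔ ∃ i, e = s(c i, c (i+1)) := by
  induction e using Sym2.ind with
  | _ x y =>
  rw [Subgraph.mem_edgeSet, Subgraph.map_adj, Relation.map_apply]
  constructor
  · rintro ⟨i, j, hij, rfl, rfl⟩
    rw [Subgraph.top_adj, cycleGraph_adj] at hij
    rcases hij with h | h
    · refine ⟨j, ?_⟩
      have : j + 1 = i := by rw [← h]; simp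
      rw [this]; exact Sym2.eq_swap
    · refine ⟨i, ?_⟩
      have : i + 1 = j := by rw [← h]; simp
      rw [this]; rfl
  · rintro ⟨i, hi⟩
    have ha : (cycleGraph (l+3)).Adj i (i+1) := by rw [cycleGraph_adj]; right; simp
    rw [Sym2.eq_iff] at hi
    rcases hi with ⟨h1, h2⟩ | ⟨h1, h2⟩
    · exact ⟨i, i+1, ha, h1.symm, h2.symm⟩
    · exact ⟨i+1, i, ha.symm, h1.symm, h2.symm⟩

theorem copy_isCyc {G : SimpleGraph V} {l : ℕ} (c : Copy (cycleGraph (l+3)) G) :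
    IsCyc G.edgeSet (chi c.toSubgraph) ∧ {e | chi c.toSubgraph e ≠ 0}.ncard = l + 3 := by
  apply cyc_of_fn (fun i => c i) c.injective
  · intro e; rw [chi_ne, copy_edge]
  · intro i
    exact c.toSubgraph.edgeSet_subset ((copy_edge c _).2 ⟨i, rfl⟩)

theorem exists_copy {f : Sym2 V → ZMod 2} (ne : f ≠ 0) (ev : ∀ v, bd f v = 0)
    (nd : ∀ v, f s(v, v) = 0) :
    ∃ l, Nonempty (Copy (cycleGraph (l+3)) (fromEdgeSet {e | f e ≠ 0})) := by
  classical
  set G' := fromEdgeSet {e | f e ≠ 0} with hG'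
  have hadj : ∀ x y, G'.Adj x y ↔ f s(x,y) ≠ 0 := by
    intro x y
    rw [hG', fromEdgeSet_adj]
    constructor
    · exact fun h => h.1
    · intro h; refine ⟨h, ?_⟩; rintro rfl; exact h (nd _)
  by_contra hno
  have hac : G'.IsAcyclic := by
    rw [isAcyclic_iff_free_cycleGraph]
    rintro n hn ⟨c⟩
    obtain ⟨l, rfl⟩ := Nat.exists_eq_add_of_le' hn
    exact hno ⟨l, ⟨c⟩⟩
  obtain ⟨e, he⟩ := Function.ne_iff.1 ne
  induction e using Sym2.ind with
  | _ x y =>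
  have hxy : G'.Adj x y := (hadj x y).2 he
  let C := G'.connectedComponentMk x
  have hC := hac.isTree_connectedComponent C
  have hx : x ∈ C.supp := rfl
  have hy : y ∈ C.supp := (ConnectedComponent.eq.2 hxy.reachable).symm
  have : Nontrivial C := ⟨⟨⟨x, hx⟩, ⟨y, hy⟩, fun h => hxy.ne (congrArg Subtype.val h)⟩⟩
  obtain ⟨⟨v, hv⟩, hdeg⟩ := hC.exists_vert_degree_one_of_nontrivial
  rw [degree_eq_one_iff_existsUnique_adj] at hdeg
  obtain ⟨⟨w, hw⟩, haw, huniq⟩ := hdeg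
  have hvw : G'.Adj v w := haw
  have hsum : bd f v = f s(v, w) := by
    unfold bd
    apply Finset.sum_eq_single
    · intro b _ hb
      by_contra hne
      have hvb : G'.Adj v b := (hadj v b).2 hne
      have hbC : b ∈ C.supp := by
        have hv' : G'.connectedComponentMk v = C := hv
        change G'.connectedComponentMk b = C
        rw [← hv']
        exact (ConnectedComponent.eq.2 hvb.reachable).symm
      have := huniq ⟨b, hbC⟩ hvb
      exact hb (congrArg Subtype.val this)
    · simp
  rw [ev] at hsum
  exact (hadj v w).1 hvw hsum.symm

theorem cycleCount_eq (G : SimpleGraph V) {ℓ : ℕ} (hℓ : 3 ≤ ℓ) :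
    cycleCount G ℓ = {f | IsCyc G.edgeSet f ∧ {e | f e ≠ 0}.ncard = ℓ}.ncard := by
  obtain ⟨l, rfl⟩ := Nat.exists_eq_add_of_le' hℓ
  have hS : {H : G.Subgraph | Nonempty (H.coe ≃g cycleGraph (l+3))} =
      Set.range (Copy.toSubgraph (A := cycleGraph (l+3)) (B := G)) := by
    rw [Copy.range_toSubgraph]
    ext H
    exact ⟨fun ⟨h⟩ => ⟨h.symm⟩, fun ⟨h⟩ => ⟨h.symm⟩⟩
  unfold cycleCount
  rw [hS]
  apply Set.ncard_congr (fun H _ => chi H)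
  · rintro _ ⟨c, rfl⟩
    exact copy_isCyc c
  · rintro _ _ ⟨c, rfl⟩ ⟨d, rfl⟩ h
    have he : ∀ e, e ∈ c.toSubgraph.edgeSet ↔ e ∈ d.toSubgraph.edgeSet := by
      intro e; rw [← chi_ne, ← chi_ne, h]
    have ha : c.toSubgraph.Adj = d.toSubgraph.Adj := by
      funext x y
      have := he s(x, y)
      rw [Subgraph.mem_edgeSet, Subgraph.mem_edgeSet] at this
      exact propext this
    apply Subgraph.ext _ ha
    have hv : ∀ (c : Copy (cycleGraph (l+3)) G) x, x ∈ c.toSubgraph.verts ↔ ∃ y, c.toSubgraph.Adj x y := by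
      intro c x
      constructor
      · rintro ⟨i, _, rfl⟩
        refine ⟨c (i+1), ?_⟩
        rw [← Subgraph.mem_edgeSet, copy_edge]
        exact ⟨i, rfl⟩
      · rintro ⟨y, hy⟩
        exact c.toSubgraph.edge_vert hy
    ext x
    rw [hv, hv, ha]
  · rintro f ⟨hf, hcard⟩
    have nd : ∀ v, f s(v,v) = 0 := by
      intro v
      by_contra h
      have := hf.sub _ h
      simp at this
    obtain ⟨m, ⟨c⟩⟩ := exists_copy hf.ne hf.even nd
    have hle : fromEdgeSet {e | f e ≠ 0} ≤ G := by
      intro x y hxy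
      rw [fromEdgeSet_adj] at hxy
      exact hf.sub _ hxy.1
    let c' : Copy (cycleGraph (m+3)) G := (Copy.ofLE _ _ hle).comp c
    have hc' : ∀ i, c' i = c i := fun i => rfl
    have h1 := copy_isCyc c'
    have h2 : chi c'.toSubgraph = f := by
      apply hf.min _ h1.1.ne h1.1.even
      intro e he
      rw [chi_ne, copy_edge] at he
      obtain ⟨i, rfl⟩ := he
      rw [hc', hc']
      have := c.toSubgraph.edgeSet_subset ((copy_edge c _).2 ⟨i, rfl⟩)
      rw [mem_edgeSet, fromEdgeSet_adj] at this
      exact this.1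
    have h3 := h1.2
    rw [h2, hcard] at h3
    have h4 : l = m := by omega
    subst h4
    exact ⟨_, ⟨c', rfl⟩, h2⟩

end PartA


/-! ### Part C: the labelled model and its cycles as masks -/

section PartC0
variable {V : Type*} [Fintype V]

theorem bd_add (f g : Sym2 V → ZMod 2) (v : V) : bd (f + g) v = bd f v + bd g v := by
  simp [bd, Finset.sum_add_distrib]

theorem bd_zero (v : V) : bd (0 : Sym2 V → ZMod 2) v = 0 := by simp [bd]

theorem bd_sum {ι : Type*} (S : Finset ι) (f : ι → Sym2 V → ZMod 2) (v : V) :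
    bd (∑ i ∈ S, f i) v = ∑ i ∈ S, bd (f i) v := by
  classical
  induction S using Finset.induction_on with
  | empty => simp [bd]
  | insert a s ha ih => rw [Finset.sum_insert ha, Finset.sum_insert ha, bd_add, ih]

variable [DecidableEq V]

/-- indicator of a vertex -/
def dl (a v : V) : ZMod 2 := if v = a then 1 else 0

theorem bd_single {a b : V} (h : a ≠ b) (v : V) :
    bd (Pi.single s(a, b) (1 : ZMod 2)) v = dl a v + dl b v := by
  unfold bd dl
  by_cases h1 : v = a
  · subst h1
    rw [Finset.sum_eq_single b]
    · simp [h]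
    · intro w _ hw
      rw [Pi.single_apply, if_neg]
      intro h'
      rw [Sym2.eq_iff] at h'
      rcases h' with ⟨_, h2⟩ | ⟨h2, _⟩
      · exact hw h2
      · exact h h2
    · simp
  · by_cases h2 : v = b
    · subst h2
      rw [Finset.sum_eq_single a]
      · simp [Ne.symm h, Sym2.eq_swap]
      · intro w _ hw
        rw [Pi.single_apply, if_neg]
        intro h'
        rw [Sym2.eq_iff] at h'
        rcases h' with ⟨h2, _⟩ | ⟨_, h2⟩
        · exact h h2.symm
        · exact hw h2
      · simp
    · rw [Finset.sum_eq_zero]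
      · simp [h1, h2]
      · intro w _
        rw [Pi.single_apply, if_neg]
        intro h'
        rw [Sym2.eq_iff] at h'
        rcases h' with ⟨h3, _⟩ | ⟨h3, _⟩
        · exact h1 h3
        · exact h2 h3


theorem exists_cyc_le {E : Set (Sym2 V)} : ∀ (N : ℕ) (f : Sym2 V → ZMod 2), {e | f e ≠ 0}.ncard ≤ N →
    f ≠ 0 → (∀ v, bd f v = 0) → (∀ e, f e ≠ 0 → e ∈ E) →
    ∃ c, IsCyc E c ∧ ∀ e, c e ≠ 0 → f e ≠ 0 := by
  intro N
  induction N with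
  | zero =>
    intro f hN h0 _ _
    exfalso
    apply h0
    rw [Nat.le_zero, Set.ncard_eq_zero (Set.toFinite _)] at hN
    funext e
    by_contra he
    have : e ∈ {e | f e ≠ 0} := he
    rw [hN] at this
    exact this
  | succ N ih =>
    intro f hN h0 hev hsub
    by_cases hmin : ∀ g : Sym2 V → ZMod 2, g ≠ 0 → (∀ v, bd g v = 0) → (∀ e, g e ≠ 0 → f e ≠ 0) → g = f
    · exact ⟨f, ⟨h0, hev, hsub, hmin⟩, fun _ h => h⟩
    · push Not at hmin
      obtain ⟨g, g0, gev, gs, gne⟩ := hmin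
      have hlt : {e | g e ≠ 0}.ncard < {e | f e ≠ 0}.ncard := by
        apply Set.ncard_lt_ncard _ (Set.toFinite _)
        refine ⟨fun e he => gs e he, fun hle => gne ?_⟩
        funext e
        exact zmod2_ext ⟨gs e, fun h => hle h⟩
      obtain ⟨c, hc, hcs⟩ := ih g (by omega) g0 gev (fun e he => hsub e (gs e he))
      exact ⟨c, hc, fun e he => gs e (hcs e he)⟩

end PartC0

section PartC
variable {n : ℕ} [NeZero n]

/-- cycle edges -/
def ce (n x : ℕ) : Sym2 (Option (ZMod n)) := s(some (x : ZMod n), some ((x : ZMod n) + 1))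

def cycE (n : ℕ) : Set (Sym2 (Option (ZMod n))) := {e | ∃ x : ℕ, x < n ∧ e = ce n x}

def pt (n k : ℕ) (P : ℕ → ℕ) (q : ℕ) : Option (ZMod n) := if q = k then none else some (P q : ZMod n)

def ed (n k : ℕ) (P xi xj : ℕ → ℕ) (t : ℕ) : Sym2 (Option (ZMod n)) :=
  s(pt n k P (xi t), pt n k P (xj t))

def bl (n k : ℕ) (P xi xj : ℕ → ℕ) (i : ℕ) : Sym2 (Option (ZMod n)) → ZMod 2 :=
  if i < k then ∑ x ∈ Finset.Ico (P i) (P (i+1)), Pi.single (ce n x) 1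
  else Pi.single (ed n k P xi xj (i-k)) 1

def beta (n k : ℕ) (P xi xj : ℕ → ℕ) (K s : ℕ) : Sym2 (Option (ZMod n)) → ZMod 2 :=
  ∑ i ∈ Finset.range K, if s.testBit i then bl n k P xi xj i else 0

structure Data (n k : ℕ) (P xi xj : ℕ → ℕ) (M : ℕ) : Prop where
  hn : 3 ≤ n
  hk : 1 ≤ k
  P0 : P 0 = 0
  Pk : P k = n
  mono : ∀ i < k, P i < P (i+1)
  xi0 : xi 0 = 0
  xj0 : xj 0 = k
  lt : ∀ t < M, xi t < xj t
  le : ∀ t < M, xj t ≤ k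
  ncyc : ∀ t < M, ed n k P xi xj t ∉ cycE n
  inj : ∀ t < M, ∀ t' < M, ed n k P xi xj t = ed n k P xi xj t' → t = t'

theorem natCast_ne {n a b : ℕ} (ha : a < n) (hb : b < n) (h : (a : ZMod n) = b) : a = b := by
  rw [ZMod.natCast_eq_natCast_iff'] at h
  rwa [Nat.mod_eq_of_lt ha, Nat.mod_eq_of_lt hb] at h

theorem some_add_ne (hn : 3 ≤ n) (x : ZMod n) : some x ≠ some (x + 1) := by
  intro h
  have h := Option.some.inj h
  have : (1 : ZMod n) = 0 := by
    simpa using h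
  have h2 : ((1 : ℕ) : ZMod n) = (0 : ℕ) := by simpa using this
  have := natCast_ne (by omega) (by omega) h2
  omega

theorem ce_inj (hn : 3 ≤ n) {x y : ℕ} (hx : x < n) (hy : y < n) (h : ce n x = ce n y) : x = y := by
  unfold ce at h
  rw [Sym2.eq_iff] at h
  simp only [Option.some.injEq] at h
  rcases h with ⟨h, _⟩ | ⟨h1, h2⟩
  · exact natCast_ne hx hy h
  · exfalso
    rw [h1, add_assoc] at h2
    have h3 : (1 + 1 : ZMod n) = 0 := by simpa using h2
    have h4 : ((2 : ℕ) : ZMod n) = (0 : ℕ) := by push_cast; rw [← h3]; norm_num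
    have := natCast_ne (by omega) (by omega) h4
    omega

variable {k : ℕ} {P xi xj : ℕ → ℕ} {M : ℕ}

theorem Data.mono_le (D : Data n k P xi xj M) {i j : ℕ} (hij : i ≤ j) (hj : j ≤ k) : P i ≤ P j := by
  induction j, hij using Nat.le_induction with
  | base => rfl
  | succ j hij ih => exact (ih (by omega)).trans (D.mono j (by omega)).le

theorem Data.mono_lt (D : Data n k P xi xj M) {i j : ℕ} (hij : i < j) (hj : j ≤ k) : P i < P j :=
  (D.mono i (by omega)).trans_le (D.mono_le hij hj)

theorem Data.P_lt (D : Data n k P xi xj M) {i : ℕ} (hi : i < k) : P i < n := by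
  rw [← D.Pk]; exact D.mono_lt hi le_rfl

theorem Data.P_le (D : Data n k P xi xj M) {i : ℕ} (hi : i ≤ k) : P i ≤ n := by
  rw [← D.Pk]; exact D.mono_le hi le_rfl

theorem Data.pt_inj (D : Data n k P xi xj M) {i j : ℕ} (hi : i ≤ k) (hj : j ≤ k)
    (h : pt n k P i = pt n k P j) : i = j := by
  unfold pt at h
  split_ifs at h with h1 h2 h2
  · omega
  · have := natCast_ne (D.P_lt (by omega)) (D.P_lt (by omega)) (Option.some.inj h)
    by_contra hne
    rcases Nat.lt_or_gt_of_ne hne with h3 | h3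
    · have := D.mono_lt h3 hj; omega
    · have := D.mono_lt h3 hi; omega

/-- value of an arc block -/
theorem bl_arc (D : Data n k P xi xj M) {i : ℕ} (hi : i < k) (e : Sym2 (Option (ZMod n))) :
    bl n k P xi xj i e ≠ 0 ↔ ∃ x, P i ≤ x ∧ x < P (i+1) ∧ e = ce n x := by
  unfold bl
  rw [if_pos hi, Finset.sum_apply]
  constructor
  · intro h
    obtain ⟨x, hx, hne⟩ := Finset.exists_ne_zero_of_sum_ne_zero h
    rw [Finset.mem_Ico] at hx
    refine ⟨x, hx.1, hx.2, ?_⟩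
    by_contra h'
    rw [Pi.single_apply, if_neg h'] at hne
    exact hne rfl
  · rintro ⟨x, h1, h2, rfl⟩
    rw [Finset.sum_eq_single x]
    · simp
    · intro y hy hyx
      rw [Finset.mem_Ico] at hy
      rw [Pi.single_apply, if_neg]
      intro h
      have hle := D.P_le (i := i+1) (by omega)
      exact hyx (ce_inj D.hn (by omega) (by omega) h.symm)
    · intro h; exact absurd (Finset.mem_Ico.2 ⟨h1, h2⟩) h

theorem bl_ext {i : ℕ} (hi : k ≤ i) (e : Sym2 (Option (ZMod n))) :
    bl n k P xi xj i e ≠ 0 ↔ e = ed n k P xi xj (i - k) := by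
  unfold bl
  rw [if_neg (by omega), Pi.single_apply]
  split_ifs <;> simp_all

theorem bl_disj (D : Data n k P xi xj M) {i j : ℕ} (hi : i < k + M) (hj : j < k + M) (e : Sym2 (Option (ZMod n)))
    (h1 : bl n k P xi xj i e ≠ 0) (h2 : bl n k P xi xj j e ≠ 0) : i = j := by
  by_cases hik : i < k <;> by_cases hjk : j < k
  · rw [bl_arc D hik] at h1
    rw [bl_arc D hjk] at h2
    obtain ⟨x, hx1, hx2, rfl⟩ := h1
    obtain ⟨y, hy1, hy2, hxy⟩ := h2
    have ha := D.P_le (i := i+1) (by omega)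
    have hb := D.P_le (i := j+1) (by omega)
    have := ce_inj D.hn (by omega) (by omega) hxy
    subst this
    by_contra hne
    rcases Nat.lt_or_gt_of_ne hne with h3 | h3
    · have := D.mono_le (i := i+1) (j := j) h3 (by omega); omega
    · have := D.mono_le (i := j+1) (j := i) h3 (by omega); omega
  · rw [bl_arc D hik] at h1
    rw [bl_ext (by omega)] at h2
    obtain ⟨x, hx1, hx2, hx⟩ := h1
    exfalso
    have ha := D.P_le (i := i+1) (by omega)
    exact D.ncyc (j - k) (by omega) ⟨x, by omega, h2 ▸ hx⟩
  · rw [bl_arc D hjk] at h2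
    rw [bl_ext (by omega)] at h1
    obtain ⟨x, hx1, hx2, hx⟩ := h2
    exfalso
    have ha := D.P_le (i := j+1) (by omega)
    exact D.ncyc (i - k) (by omega) ⟨x, by omega, h1 ▸ hx⟩
  · rw [bl_ext (by omega)] at h1 h2
    have := D.inj (i-k) (by omega) (j-k) (by omega) (h1 ▸ h2)
    omega

theorem bl_nonempty (D : Data n k P xi xj M) (i : ℕ) : ∃ e, bl n k P xi xj i e ≠ 0 := by
  by_cases hik : i < k
  · exact ⟨_, (bl_arc D hik _).2 ⟨P i, le_rfl, D.mono i hik, rfl⟩⟩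
  · exact ⟨_, (bl_ext (by omega) _).2 rfl⟩

theorem beta_apply_of (D : Data n k P xi xj M) {i : ℕ} (hi : i < k + M) (s : ℕ) {e : Sym2 (Option (ZMod n))}
    (h : bl n k P xi xj i e ≠ 0) : beta n k P xi xj (k+M) s e ≠ 0 ↔ s.testBit i := by
  unfold beta
  rw [Finset.sum_apply, Finset.sum_eq_single i]
  · by_cases hb : s.testBit i <;> simp [hb, h]
  · intro j hj hne
    by_cases hb : s.testBit j
    · simp only [hb, if_true]
      by_contra h'
      exact hne (bl_disj D (Finset.mem_range.1 hj) hi e h' h)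
    · simp [hb]
  · intro h'; exact absurd (Finset.mem_range.2 hi) h'

theorem beta_ne (D : Data n k P xi xj M) (s : ℕ) (e : Sym2 (Option (ZMod n))) :
    beta n k P xi xj (k+M) s e ≠ 0 ↔ ∃ i < k + M, s.testBit i ∧ bl n k P xi xj i e ≠ 0 := by
  constructor
  · intro h
    have h' := h
    unfold beta at h
    rw [Finset.sum_apply] at h
    obtain ⟨i, hi, hne⟩ := Finset.exists_ne_zero_of_sum_ne_zero h
    by_cases hb : s.testBit i
    · simp only [hb, if_true] at hne
      exact ⟨i, Finset.mem_range.1 hi, hb, hne⟩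
    · simp [hb] at hne
  · rintro ⟨i, hi, hb, hne⟩
    rwa [beta_apply_of D hi s hne]

theorem beta_sub (D : Data n k P xi xj M) {s t : ℕ} (hs : s < 2^(k+M)) :
    (∀ e, beta n k P xi xj (k+M) s e ≠ 0 → beta n k P xi xj (k+M) t e ≠ 0) ↔ s &&& t = s := by
  constructor
  · intro h
    apply Nat.eq_of_testBit_eq
    intro i
    rw [Nat.testBit_land]
    by_cases hi : i < k + M
    · obtain ⟨e, he⟩ := bl_nonempty (P := P) D i
      have := h e
      rw [beta_apply_of D hi s he, beta_apply_of D hi t he] at this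
      cases hb : s.testBit i <;> simp_all
    · have : s.testBit i = false := Nat.testBit_lt_two_pow (hs.trans_le (Nat.pow_le_pow_right (by norm_num) (by omega)))
      simp [this]
  · intro h e
    rw [beta_ne D, beta_ne D]
    rintro ⟨i, hi, hb, hne⟩
    refine ⟨i, hi, ?_, hne⟩
    rw [← h, Nat.testBit_land] at hb
    simp_all

theorem beta_inj (D : Data n k P xi xj M) {s t : ℕ} (hs : s < 2^(k+M)) (ht : t < 2^(k+M))
    (h : beta n k P xi xj (k+M) s = beta n k P xi xj (k+M) t) : s = t := by
  have h1 := (beta_sub D hs (t := t)).1 (by rw [h]; exact fun _ h => h)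
  have h2 := (beta_sub D ht (t := s)).1 (by rw [h]; exact fun _ h => h)
  rw [← h1, Nat.land_comm, h2]

theorem beta_xor (K s t : ℕ) : beta n k P xi xj K (s ^^^ t) = beta n k P xi xj K s + beta n k P xi xj K t := by
  unfold beta
  rw [← Finset.sum_add_distrib]
  apply Finset.sum_congr rfl
  intro i _
  rw [Nat.testBit_xor]
  have h2 : ∀ f : Sym2 (Option (ZMod n)) → ZMod 2, f + f = 0 := by
    intro f; funext e; exact CharTwo.add_self_eq_zero _
  cases s.testBit i <;> cases t.testBit i <;> simp [h2]

theorem beta_zero (K : ℕ) : beta n k P xi xj K 0 = 0 := by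
  unfold beta; simp

/-- length of block -/
def alen (k : ℕ) (P : ℕ → ℕ) (i : ℕ) : ℕ := if i < k then P (i+1) - P i else 1

def mlen (k : ℕ) (P : ℕ → ℕ) (K s : ℕ) : ℕ :=
  ∑ i ∈ Finset.range K, if s.testBit i then alen k P i else 0

theorem bl_card (D : Data n k P xi xj M) (i : ℕ) : {e | bl n k P xi xj i e ≠ 0}.ncard = alen k P i := by
  unfold alen
  split_ifs with h
  · have : {e | bl n k P xi xj i e ≠ 0} = ce n '' (Finset.Ico (P i) (P (i+1)) : Set ℕ) := by
      ext e
      rw [Set.mem_ofPred_eq, bl_arc D h]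
      simp only [Finset.coe_Ico, Set.mem_image, Set.mem_Ico]
      constructor
      · rintro ⟨x, h1, h2, h3⟩; exact ⟨x, ⟨h1, h2⟩, h3.symm⟩
      · rintro ⟨x, ⟨h1, h2⟩, h3⟩; exact ⟨x, h1, h2, h3.symm⟩
    rw [this, Set.InjOn.ncard_image, Set.ncard_coe_finset, Nat.card_Ico]
    intro x hx y hy hxy
    have ha := D.P_le (i := i+1) (by omega)
    simp at hx hy
    exact ce_inj D.hn (by omega) (by omega) hxy
  · have : {e | bl n k P xi xj i e ≠ 0} = {ed n k P xi xj (i-k)} := by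
      ext e
      rw [Set.mem_ofPred_eq, bl_ext (by omega)]; rfl
    rw [this, Set.ncard_singleton]

theorem beta_card (D : Data n k P xi xj M) (s : ℕ) :
    {e | beta n k P xi xj (k+M) s e ≠ 0}.ncard = mlen k P (k+M) s := by
  classical
  have hU : {e | beta n k P xi xj (k+M) s e ≠ 0} =
      (((Finset.range (k+M)).filter (fun i => s.testBit i)).biUnion
        (fun i => Finset.univ.filter (fun e => bl n k P xi xj i e ≠ 0)) : Finset _) := by
    ext e
    rw [Set.mem_ofPred_eq, beta_ne D]
    simp [and_assoc]
  rw [hU, Set.ncard_coe_finset, Finset.card_biUnion]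
  · unfold mlen
    rw [Finset.sum_filter]
    apply Finset.sum_congr rfl
    intro i _
    split_ifs
    · rw [← bl_card D i, ← Set.ncard_coe_finset]
      congr 1
      ext e; simp
    · rfl
  · intro i hi j hj hij
    rw [Function.onFun, Finset.disjoint_left]
    intro e he he'
    simp at hi hj he he'
    exact hij (bl_disj D hi.1 hj.1 e he he')

end PartC


section PartC2
variable {n : ℕ} [NeZero n] {k : ℕ} {P xi xj : ℕ → ℕ} {M : ℕ}

theorem bd_path (hn : 3 ≤ n) (a b : ℕ) (h : a ≤ b) (v : Option (ZMod n)) :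
    bd (∑ x ∈ Finset.Ico a b, Pi.single (ce n x) (1 : ZMod 2)) v
      = dl (some (a : ZMod n)) v + dl (some (b : ZMod n)) v := by
  induction b, h using Nat.le_induction with
  | base => simp [bd_zero, CharTwo.add_self_eq_zero]
  | succ b hb ih =>
    rw [Finset.sum_Ico_succ_top hb, bd_add, ih, ce, bd_single (some_add_ne hn _)]
    push_cast
    have : ∀ a b c : ZMod 2, a + b + (b + c) = a + c := by decide
    exact this _ _ _

theorem bd_arc (D : Data n k P xi xj M) {i : ℕ} (hi : i < k) (v : Option (ZMod n)) :
    bd (bl n k P xi xj i) v = dl (some (P i : ZMod n)) v + dl (some (P (i+1) : ZMod n)) v := by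
  unfold bl
  rw [if_pos hi]
  exact bd_path D.hn _ _ (D.mono i hi).le v

theorem beta_pow {K i : ℕ} (hi : i < K) : beta n k P xi xj K (2^i) = bl n k P xi xj i := by
  unfold beta
  rw [Finset.sum_eq_single i]
  · simp [Nat.testBit_two_pow_self]
  · intro j _ hj
    simp [Nat.testBit_two_pow, hj.symm]
  · intro h; exact absurd (Finset.mem_range.2 hi) h

theorem beta_low {K q : ℕ} (hq : q ≤ K) :
    beta n k P xi xj K (2^q - 1) = ∑ i ∈ Finset.range q, bl n k P xi xj i := by
  unfold beta
  simp only [Nat.testBit_two_pow_sub_one]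
  rw [← Finset.sum_filter_add_sum_filter_not (Finset.range K) (fun i => i < q)]
  have h1 : (Finset.range K).filter (fun i => i < q) = Finset.range q := by
    ext i; simp; omega
  rw [h1]
  have h2 : (∑ i ∈ (Finset.range K).filter (fun i => ¬ i < q),
      if decide (i < q) = true then bl n k P xi xj i else 0) = 0 := by
    apply Finset.sum_eq_zero
    intro i hi
    simp at hi
    simp [Nat.not_lt.2 hi.2]
  rw [h2, add_zero]
  apply Finset.sum_congr rfl
  intro i hi
  simp [Finset.mem_range.1 hi]

theorem bd_low (D : Data n k P xi xj M) {q : ℕ} (hq : q ≤ k) (v : Option (ZMod n)) :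
    bd (beta n k P xi xj (k+M) (2^q - 1)) v = dl (some (0 : ZMod n)) v + dl (some (P q : ZMod n)) v := by
  rw [beta_low (by omega)]
  induction q with
  | zero => simp [bd_zero, D.P0, CharTwo.add_self_eq_zero]
  | succ q ih =>
    rw [Finset.sum_range_succ, bd_add, ih (by omega), bd_arc D (by omega)]
    have : ∀ a b c : ZMod 2, a + b + (b + c) = a + c := by decide
    exact this _ _ _

theorem bd_ed (D : Data n k P xi xj M) {t : ℕ} (ht : t < M) (v : Option (ZMod n)) :
    bd (bl n k P xi xj (k + t)) v = dl (some (P (xi t) : ZMod n)) v + dl (pt n k P (xj t)) v := by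
  unfold bl
  rw [if_neg (by omega), Nat.add_sub_cancel_left]
  unfold ed
  have h1 := D.lt t ht
  have h2 := D.le t ht
  rw [bd_single]
  · congr 2
    unfold pt
    rw [if_neg (by omega)]
  · intro h
    have := D.pt_inj (by omega) (by omega) h
    omega

/-- generator mask of extra number `m` with end points `i`, `j` -/
def gen (k i j m : ℕ) : ℕ :=
  (((2^j - 1) ^^^ (2^i - 1)) ^^^ 2^(k+m)) ^^^ (if j = k then 2^k else 0)

theorem gen_even (D : Data n k P xi xj M) {t : ℕ} (h0 : 0 < t) (ht : t < M) (v : Option (ZMod n)) :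
    bd (beta n k P xi xj (k+M) (gen k (xi t) (xj t) t)) v = 0 := by
  have h1 := D.lt t ht
  have h2 := D.le t ht
  unfold gen
  rw [beta_xor, beta_xor, beta_xor, bd_add, bd_add, bd_add, bd_low D h2, bd_low D (by omega),
    beta_pow (by omega), bd_ed D ht]
  split_ifs with hk
  · rw [hk, beta_pow (by omega)]
    have := bd_ed D (t := 0) (by omega) v
    rw [Nat.add_zero] at this
    rw [this, D.xi0, D.xj0, D.P0, D.Pk, ZMod.natCast_self, Nat.cast_zero]
    have : ∀ a b c : ZMod 2, a + a + (a + b) + (b + c) + (a + c) = 0 := by decide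
    exact this _ _ _
  · rw [beta_zero, bd_zero]
    have : pt n k P (xj t) = some (P (xj t) : ZMod n) := by
      unfold pt; rw [if_neg hk]
    rw [this]
    have : ∀ a b c : ZMod 2, a + c + (a + b) + (b + c) + 0 = 0 := by decide
    exact this _ _ _

theorem gen_lt {i j m k : ℕ} (hij : i < j) (hj : j ≤ k) : gen k i j m < 2^(k+m+1) := by
  unfold gen
  have hp : ∀ q, q ≤ k + m → 2^q < 2^(k+m+1) := fun q hq => Nat.pow_lt_pow_right (by norm_num) (by omega)
  have h1 := hp j (by omega)
  have h2 := hp i (by omega)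
  apply Nat.xor_lt_two_pow
  · apply Nat.xor_lt_two_pow
    · apply Nat.xor_lt_two_pow
      · exact Nat.lt_of_le_of_lt (Nat.sub_le _ _) h1
      · exact Nat.lt_of_le_of_lt (Nat.sub_le _ _) h2
    · exact hp _ (by omega)
  · split_ifs
    · exact hp _ (by omega)
    · positivity

theorem gen_testBit {i j m k : ℕ} (hij : i < j) (hj : j ≤ k) (hm : 0 < m) :
    (gen k i j m).testBit (k+m) = true := by
  unfold gen
  simp only [Nat.testBit_xor, Nat.testBit_two_pow_sub_one, Nat.testBit_two_pow_self]
  have h1 : ¬ (k + m < j) := by omega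
  have h2 : ¬ (k + m < i) := by omega
  have h3 : Nat.testBit (if j = k then 2^k else 0) (k+m) = false := by
    split_ifs
    · rw [Nat.testBit_two_pow]; simp; omega
    · simp
  simp [h1, h2, h3]

/-- edges of the model with `m` extras -/
def Em (n k : ℕ) (P xi xj : ℕ → ℕ) (m : ℕ) : Set (Sym2 (Option (ZMod n))) :=
  cycE n ∪ {e | ∃ t < m, e = ed n k P xi xj t}

def EL (k : ℕ) (xi xj : ℕ → ℕ) : ℕ → List ℕ
  | 0 => [2^k - 1, 0]
  | m+1 => (EL k xi xj m).map (· ^^^ gen k (xi (m+1)) (xj (m+1)) (m+1)) ++ EL k xi xj m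

def noSub (l : List ℕ) (s : ℕ) : Bool := l.all fun f => !(f &&& s == f)

def PS (k : ℕ) (xi xj : ℕ → ℕ) : ℕ → List ℕ
  | 0 => [2^k - 1]
  | m+1 => ((EL k xi xj m).map (· ^^^ gen k (xi (m+1)) (xj (m+1)) (m+1))).filter (noSub (PS k xi xj m))
      ++ PS k xi xj m

theorem beta_sub_Em (D : Data n k P xi xj M) {m s : ℕ} (hm : m ≤ M) (hs : s < 2^(k+m))
    (e : Sym2 (Option (ZMod n))) (he : beta n k P xi xj (k+M) s e ≠ 0) : e ∈ Em n k P xi xj m := by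
  rw [beta_ne D] at he
  obtain ⟨i, hi, hb, hne⟩ := he
  by_cases hik : i < k
  · rw [bl_arc D hik] at hne
    obtain ⟨x, h1, h2, rfl⟩ := hne
    have := D.P_le (i := i+1) (by omega)
    exact Or.inl ⟨x, by omega, rfl⟩
  · rw [bl_ext (by omega)] at hne
    refine Or.inr ⟨i - k, ?_, hne⟩
    by_contra h
    have := Nat.testBit_lt_two_pow (hs.trans_le (Nat.pow_le_pow_right (by norm_num) (by omega : k + m ≤ i)))
    rw [this] at hb
    exact absurd hb (by simp)

theorem base_even (D : Data n k P xi xj M) (hM : 0 < M) {f : Sym2 (Option (ZMod n)) → ZMod 2}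
    (hev : ∀ v, bd f v = 0) (hsub : ∀ e, f e ≠ 0 → e ∈ Em n k P xi xj 1) :
    f = 0 ∨ f = beta n k P xi xj (k+M) (2^k-1) := by
  have hk := D.hk
  have hed : ed n k P xi xj 0 = s(some (0 : ZMod n), none) := by
    unfold ed pt
    rw [D.xi0, D.xj0, if_neg (by omega), if_pos rfl, D.P0, Nat.cast_zero]
  have h0 : f s(none, some (0 : ZMod n)) = 0 := by
    rw [← hev none]
    unfold bd
    symm
    apply Finset.sum_eq_single
    · intro b _ hb
      by_contra h
      rcases hsub _ h with ⟨x, _, hx⟩ | ⟨t, ht, hx⟩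
      · unfold ce at hx; simp [Sym2.eq_iff] at hx
      · obtain rfl : t = 0 := by omega
        rw [hed, Sym2.eq_iff] at hx
        simp at hx
        exact hb hx
    · simp
  have hsub' : ∀ e, f e ≠ 0 → e ∈ cycE n := by
    intro e he
    rcases hsub e he with h | ⟨t, ht, hx⟩
    · exact h
    · exfalso
      obtain rfl : t = 0 := by omega
      rw [hx, hed, Sym2.eq_swap] at he
      exact he h0
  have hcov : ∀ (x : ZMod n), some x = some ((x.val : ℕ) : ZMod n) := by
    intro x; rw [ZMod.natCast_zmod_val]
  have hbeta : ∀ e, beta n k P xi xj (k+M) (2^k-1) e ≠ 0 ↔ e ∈ cycE n := by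
    intro e
    constructor
    · intro he
      rw [beta_ne D] at he
      obtain ⟨i, hi, hb, hne⟩ := he
      rw [Nat.testBit_two_pow_sub_one, decide_eq_true_iff] at hb
      rw [bl_arc D hb] at hne
      obtain ⟨x, h1, h2, rfl⟩ := hne
      have := D.P_le (i := i+1) (by omega)
      exact ⟨x, by omega, rfl⟩
    · rintro ⟨x, hx, rfl⟩
      rw [beta_ne D]
      have : ∃ i < k, P i ≤ x ∧ x < P (i+1) := by
        have : ∀ q ≤ k, x < P q → ∃ i < k, P i ≤ x ∧ x < P (i+1) := by
          intro q
          induction q with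
          | zero => intro _ h; rw [D.P0] at h; omega
          | succ q ih =>
            intro hq h
            by_cases hx : x < P q
            · exact ih (by omega) hx
            · exact ⟨q, by omega, by omega, h⟩
        exact this k le_rfl (by rw [D.Pk]; exact hx)
      obtain ⟨i, hi, h1, h2⟩ := this
      refine ⟨i, by omega, ?_, (bl_arc D hi _).2 ⟨x, h1, h2, rfl⟩⟩
      rw [Nat.testBit_two_pow_sub_one]; simpa using hi
  by_cases hf : f = 0
  · exact Or.inl hf
  right
  have hn := D.hn
  have hce : ∀ e, e ∈ cycE n ↔ ∃ x : ZMod n, e = s(some x, some (x+1)) := by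
    intro e
    constructor
    · rintro ⟨x, _, rfl⟩; exact ⟨_, rfl⟩
    · rintro ⟨x, rfl⟩
      refine ⟨x.val, ZMod.val_lt x, ?_⟩
      unfold ce; rw [ZMod.natCast_zmod_val]
  have hcyc : IsCyc (cycE n) (beta n k P xi xj (k+M) (2^k-1)) := by
    clear hev hsub h0 hsub' hf hcov
    generalize beta n k P xi xj (k+M) (2^k-1) = g at hbeta
    clear D hed
    obtain ⟨l, rfl⟩ := Nat.exists_eq_add_of_le' hn
    refine (cyc_of_fn (l := l) (fun i => (some i : Option (ZMod (l+3)))) (fun a b h => Option.some.inj h) g ?_ (cycE (l+3)) ?_).1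
    · intro e
      rw [hbeta, hce]; rfl
    · intro i
      rw [hce]; exact ⟨i, rfl⟩
  exact hcyc.min f hf hev (fun e he => (hbeta e).2 (hsub' e he))

structure Inv (n k : ℕ) [NeZero n] (P xi xj : ℕ → ℕ) (M m : ℕ) : Prop where
  elb : ∀ s ∈ EL k xi xj m, s < 2^(k+m+1)
  elspec : ∀ f : Sym2 (Option (ZMod n)) → ZMod 2, ((∀ v, bd f v = 0) ∧ ∀ e, f e ≠ 0 → e ∈ Em n k P xi xj (m+1)) ↔
    ∃ s ∈ EL k xi xj m, f = beta n k P xi xj (k+M) s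
  psub : ∀ s ∈ PS k xi xj m, s ∈ EL k xi xj m
  psspec : ∀ f : Sym2 (Option (ZMod n)) → ZMod 2, IsCyc (Em n k P xi xj (m+1)) f ↔
    ∃ s ∈ PS k xi xj m, f = beta n k P xi xj (k+M) s
  eln : (EL k xi xj m).Nodup
  psn : (PS k xi xj m).Nodup

theorem inv0 (D : Data n k P xi xj M) (hM : 0 < M) : Inv n k P xi xj M 0 := by
  have hk := D.hk
  have hpos : 2^k - 1 ≠ 0 := by
    have : 2^1 ≤ 2^k := Nat.pow_le_pow_right (by norm_num) hk
    omega
  have hlt : 2^k - 1 < 2^(k+0+1) := by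
    have : 2^(k+0+1) = 2 * 2^k := by rw [Nat.add_zero, pow_succ]; ring
    have : 0 < 2^k := by positivity
    omega
  have hltM : 2^k - 1 < 2^(k+M) := by
    have : 2^(k+0+1) ≤ 2^(k+M) := Nat.pow_le_pow_right (by norm_num) (by omega)
    omega
  have hb0 : beta n k P xi xj (k+M) (2^k-1) ≠ 0 := by
    intro h
    rw [← beta_zero (k+M)] at h
    exact hpos (beta_inj D hltM (by positivity) h)
  have hbev : ∀ v, bd (beta n k P xi xj (k+M) (2^k-1)) v = 0 := by
    intro v
    rw [bd_low D le_rfl, D.Pk, ZMod.natCast_self, CharTwo.add_self_eq_zero]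
  have hbs : ∀ e, beta n k P xi xj (k+M) (2^k-1) e ≠ 0 → e ∈ Em n k P xi xj 1 := by
    intro e he
    exact beta_sub_Em D (by omega) (by simpa using hlt) e he
  refine ⟨?_, ?_, ?_, ?_, ?_, ?_⟩
  · intro s hs
    simp only [EL, List.mem_cons, List.not_mem_nil, or_false] at hs
    rcases hs with rfl | rfl
    · exact hlt
    · positivity
  · intro f
    simp only [EL, List.mem_cons, List.not_mem_nil, or_false, exists_eq_or_imp, exists_eq_left]
    rw [beta_zero]
    constructor
    · rintro ⟨h1, h2⟩
      exact (base_even D hM h1 h2).symm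
    · rintro (rfl | rfl)
      · exact ⟨hbev, hbs⟩
      · exact ⟨bd_zero, fun e he => absurd rfl he⟩
  · intro s hs
    simp only [PS, EL, List.mem_cons, List.not_mem_nil, or_false] at hs ⊢
    exact Or.inl hs
  · intro f
    simp only [PS, List.mem_cons, List.not_mem_nil, or_false, exists_eq_left]
    constructor
    · intro h
      exact (base_even D hM h.even h.sub).resolve_left h.ne
    · rintro rfl
      refine ⟨hb0, hbev, hbs, ?_⟩
      intro g g0 gev gs
      exact (base_even D hM gev (fun e he => hbs e (gs e he))).resolve_left g0
  · simp [EL, hpos]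
  · simp [PS]

theorem invS (D : Data n k P xi xj M) {m : ℕ} (hm : m + 1 < M) (I : Inv n k P xi xj M m) :
    Inv n k P xi xj M (m+1) := by
  have hlt := D.lt (m+1) hm
  have hle := D.le (m+1) hm
  set g := gen k (xi (m+1)) (xj (m+1)) (m+1) with hg
  set B := beta n k P xi xj (k+M) with hB
  have hgev : ∀ v, bd (B g) v = 0 := gen_even D (by omega) hm
  have hglt : g < 2^(k+(m+1)+1) := gen_lt hlt hle
  have hgb : g.testBit (k+(m+1)) = true := gen_testBit hlt hle (by omega)
  have hele : ∀ s ∈ EL k xi xj m, s < 2^(k+(m+1)+1) := fun s hs =>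
    (I.elb s hs).trans (Nat.pow_lt_pow_right (by norm_num) (by omega))
  have helb : ∀ s ∈ EL k xi xj m, s.testBit (k+(m+1)) = false := fun s hs =>
    Nat.testBit_lt_two_pow (I.elb s hs)
  have hKM : ∀ s, s < 2^(k+(m+1)+1) → s < 2^(k+M) := fun s hs =>
    hs.trans_le (Nat.pow_le_pow_right (by norm_num) (by omega))
  have hE : ∀ e, e ∈ Em n k P xi xj (m+1+1) ↔ e ∈ Em n k P xi xj (m+1) ∨ e = ed n k P xi xj (m+1) := by
    intro e
    unfold Em
    simp only [Set.mem_union, Set.mem_ofPred_eq]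
    constructor
    · rintro (h | ⟨t, ht, h⟩)
      · exact Or.inl (Or.inl h)
      · by_cases htm : t = m + 1
        · subst htm; exact Or.inr h
        · exact Or.inl (Or.inr ⟨t, by omega, h⟩)
    · rintro ((h | ⟨t, ht, h⟩) | h)
      · exact Or.inl h
      · exact Or.inr ⟨t, by omega, h⟩
      · exact Or.inr ⟨m+1, by omega, h⟩
  have hble : bl n k P xi xj (k+(m+1)) (ed n k P xi xj (m+1)) ≠ 0 := by
    rw [bl_ext (by omega), Nat.add_sub_cancel_left]
  set e0 := ed n k P xi xj (m+1) with he0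
  have hB0 : ∀ s, B s e0 ≠ 0 ↔ s.testBit (k+(m+1)) = true := fun s =>
    beta_apply_of D (by omega) s hble
  have hdown : ∀ f : Sym2 (Option (ZMod n)) → ZMod 2, (∀ e, f e ≠ 0 → e ∈ Em n k P xi xj (m+1+1)) →
      f e0 = 0 → ∀ e, f e ≠ 0 → e ∈ Em n k P xi xj (m+1) := by
    intro f hf h0 e he
    rcases (hE e).1 (hf e he) with h | h
    · exact h
    · rw [h] at he; exact absurd h0 he
  have hup : ∀ e, e ∈ Em n k P xi xj (m+1) → e ∈ Em n k P xi xj (m+1+1) := fun e he => (hE e).2 (Or.inl he)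
  have hadd : ∀ f h : Sym2 (Option (ZMod n)) → ZMod 2, f + h + h = f := by
    intro f h; funext e
    have : ∀ a b : ZMod 2, a + b + b = a := by decide
    exact this _ _
  have hBg0 : B g e0 = 1 := (zmod2_ne _).1 ((hB0 g).2 hgb)
  have hBgs : ∀ e, B g e ≠ 0 → e ∈ Em n k P xi xj (m+1+1) :=
    fun e he => beta_sub_Em D (by omega) hglt e he
  have hspec : ∀ f : Sym2 (Option (ZMod n)) → ZMod 2,
      ((∀ v, bd f v = 0) ∧ ∀ e, f e ≠ 0 → e ∈ Em n k P xi xj (m+1+1)) →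
      (f e0 = 0 → ∃ s ∈ EL k xi xj m, f = B s) ∧ (f e0 ≠ 0 → ∃ s ∈ EL k xi xj m, f = B (s ^^^ g)) := by
    rintro f ⟨h1, h2⟩
    refine ⟨fun h0 => (I.elspec f).1 ⟨h1, hdown f h2 h0⟩, fun h0 => ?_⟩
    have h0 := (zmod2_ne _).1 h0
    obtain ⟨s, hs, hfs⟩ := (I.elspec (f + B g)).1 ⟨fun v => by rw [bd_add, h1, hgev]; rfl, hdown _ (by
        intro e he
        by_contra hn
        have ha : f e = 0 := by by_contra h; exact hn (h2 e h)
        have hb : B g e = 0 := by by_contra h; exact hn (hBgs e h)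
        rw [Pi.add_apply, ha, hb] at he
        exact he rfl) (by rw [Pi.add_apply, h0, hBg0]; decide)⟩
    refine ⟨s, hs, ?_⟩
    have hfs' : f + B g = B s := hfs
    rw [hB, beta_xor, ← hB, ← hfs', hadd]
  refine ⟨?_, ?_, ?_, ?_, ?_, ?_⟩
  · intro s hs
    simp only [EL, List.mem_append, List.mem_map] at hs
    rcases hs with ⟨x, hx, rfl⟩ | hs
    · exact Nat.xor_lt_two_pow (hele x hx) hglt
    · exact hele s hs
  · intro f
    constructor
    · intro hf
      obtain ⟨ha, hb⟩ := hspec f hf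
      by_cases h0 : f e0 = 0
      · obtain ⟨s, hs, h⟩ := ha h0
        exact ⟨s, by simp only [EL, List.mem_append]; exact Or.inr hs, h⟩
      · obtain ⟨s, hs, h⟩ := hb h0
        exact ⟨_, by simp only [EL, List.mem_append, List.mem_map]; exact Or.inl ⟨s, hs, rfl⟩, h⟩
    · rintro ⟨s, hs, rfl⟩
      simp only [EL, List.mem_append, List.mem_map] at hs
      rcases hs with ⟨x, hx, rfl⟩ | hs
      · refine ⟨fun v => ?_, fun e he => beta_sub_Em D (by omega) (Nat.xor_lt_two_pow (hele x hx) hglt) e he⟩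
        rw [beta_xor, bd_add, ((I.elspec _).2 ⟨x, hx, rfl⟩).1, ← hg, ← hB, hgev]; rfl
      · have := (I.elspec _).2 ⟨s, hs, rfl⟩
        exact ⟨this.1, fun e he => hup e (this.2 e he)⟩
  · intro s hs
    simp only [PS, EL, List.mem_append, List.mem_filter] at hs ⊢
    rcases hs with hs | hs
    · exact Or.inl hs.1
    · exact Or.inr (I.psub s hs)
  · intro f
    have hcycup : IsCyc (Em n k P xi xj (m+1)) f → IsCyc (Em n k P xi xj (m+1+1)) f :=
      fun h => ⟨h.ne, h.even, fun e he => hup e (h.sub e he), h.min⟩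
    have hnoSub : ∀ x ∈ EL k xi xj m, noSub (PS k xi xj m) (x ^^^ g) = true ↔
        ∀ c, IsCyc (Em n k P xi xj (m+1)) c → ¬ ∀ e, c e ≠ 0 → B (x ^^^ g) e ≠ 0 := by
      intro x hx
      unfold noSub
      rw [List.all_eq_true]
      constructor
      · intro h c hc hsub
        obtain ⟨s, hs, rfl⟩ := (I.psspec c).1 hc
        have := h s hs
        have h2 := (beta_sub D (hKM s (hele s (I.psub s hs)))).1 hsub
        rw [h2] at this
        simp at this
      · intro h s hs
        have := h _ ((I.psspec _).2 ⟨s, hs, rfl⟩)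
        rw [hB, beta_sub D (hKM s (hele s (I.psub s hs)))] at this
        simpa using this
    constructor
    · intro hf
      obtain ⟨ha, hb⟩ := hspec f ⟨hf.even, hf.sub⟩
      by_cases h0 : f e0 = 0
      · obtain ⟨s, hs, h⟩ := (I.psspec f).1 ⟨hf.ne, hf.even, hdown f hf.sub h0, hf.min⟩
        exact ⟨s, by simp only [PS, List.mem_append]; exact Or.inr hs, h⟩
      · obtain ⟨x, hx, h⟩ := hb h0
        refine ⟨x ^^^ g, ?_, h⟩
        simp only [PS, List.mem_append, List.mem_filter, List.mem_map]
        refine Or.inl ⟨⟨x, hx, rfl⟩, ?_⟩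
        rw [hnoSub x hx]
        intro c hc hsub
        rw [← h] at hsub
        have := hf.min c hc.ne hc.even hsub
        subst this
        obtain ⟨s, hs, h'⟩ := (I.psspec c).1 hc
        rw [h'] at h0
        have := (hB0 s).1 h0
        rw [helb s (I.psub s hs)] at this
        exact absurd this (by simp)
    · rintro ⟨s, hs, rfl⟩
      simp only [PS, List.mem_append, List.mem_filter, List.mem_map] at hs
      rcases hs with ⟨⟨x, hx, rfl⟩, hns⟩ | hs
      · rw [hnoSub x hx] at hns
        rw [← hB]
        have hev : ∀ v, bd (B (x ^^^ g)) v = 0 := by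
          intro v
          rw [hB, beta_xor, bd_add, ((I.elspec _).2 ⟨x, hx, rfl⟩).1, ← hB, hgev]; rfl
        have h0 : B (x ^^^ g) e0 = 1 := by
          rw [← zmod2_ne, hB0, Nat.testBit_xor, helb x hx, hgb]; rfl
        have hsb : ∀ e, B (x ^^^ g) e ≠ 0 → e ∈ Em n k P xi xj (m+1+1) :=
          fun e he => beta_sub_Em D (by omega) (Nat.xor_lt_two_pow (hele x hx) hglt) e he
        have hno : ∀ c : Sym2 (Option (ZMod n)) → ZMod 2, c ≠ 0 → (∀ v, bd c v = 0) →
            (∀ e, c e ≠ 0 → B (x ^^^ g) e ≠ 0) → c e0 ≠ 0 := by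
          intro c c0 cev cs h
          obtain ⟨d, hd, hds⟩ := exists_cyc_le (E := Em n k P xi xj (m+1)) _ c le_rfl c0 cev
            (hdown c (fun e he => hsb e (cs e he)) h)
          exact hns d hd (fun e he => cs e (hds e he))
        refine ⟨fun h => ?_, hev, hsb, ?_⟩
        · rw [h] at h0; exact absurd h0 (by simp)
        · intro c c0 cev cs
          have hc0 := hno c c0 cev cs
          by_contra hne
          refine hno (B (x ^^^ g) + c) ?_ ?_ ?_ ?_
          · intro h
            apply hne
            funext e
            exact (zmod2_add (congrFun h e)).symm
          · intro v; rw [bd_add, hev, cev]; rfl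
          · intro e he hz
            have : c e = 0 := by by_contra h; exact cs e h hz
            rw [Pi.add_apply, hz, this] at he
            exact he rfl
          · rw [Pi.add_apply, h0, (zmod2_ne _).1 hc0]; decide
      · have := (I.psspec _).2 ⟨s, hs, rfl⟩
        exact ⟨this.ne, this.even, fun e he => hup e (this.sub e he), this.min⟩
  · simp only [EL]
    rw [List.nodup_append]
    refine ⟨?_, I.eln, ?_⟩
    · apply I.eln.map
      intro a b h
      exact Nat.xor_left_injective h
    · intro a ha b hb hab
      subst hab
      rw [List.mem_map] at ha
      obtain ⟨x, hx, rfl⟩ := ha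
      have := helb _ hb
      rw [Nat.testBit_xor, helb x hx, ← hg, hgb] at this
      exact absurd this (by simp)
  · simp only [PS]
    rw [List.nodup_append]
    refine ⟨?_, I.psn, ?_⟩
    · apply List.Nodup.filter
      apply I.eln.map
      intro a b h
      exact Nat.xor_left_injective h
    · intro a ha b hb hab
      subst hab
      rw [List.mem_filter, List.mem_map] at ha
      obtain ⟨⟨x, hx, rfl⟩, _⟩ := ha
      have := helb _ (I.psub _ hb)
      rw [Nat.testBit_xor, helb x hx, ← hg, hgb] at this
      exact absurd this (by simp)

theorem inv_all (D : Data n k P xi xj M) (m : ℕ) (hm : m < M) : Inv n k P xi xj M m := by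
  induction m with
  | zero => exact inv0 D hm
  | succ m ih => exact invS D hm (ih (by omega))

theorem cycleCount_model (D : Data n k P xi xj (M+1)) (G : SimpleGraph (Option (ZMod n)))
    (hG : G.edgeSet = Em n k P xi xj (M+1)) {ℓ : ℕ} (hℓ : 3 ≤ ℓ) :
    cycleCount G ℓ = (PS k xi xj M).countP (fun s => mlen k P (k+(M+1)) s = ℓ) := by
  rw [cycleCount_eq G hℓ, hG]
  have I := inv_all D M (by omega)
  have hset : {f | IsCyc (Em n k P xi xj (M+1)) f ∧ {e | f e ≠ 0}.ncard = ℓ} =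
      beta n k P xi xj (k+(M+1)) '' (((PS k xi xj M).filter (fun s => mlen k P (k+(M+1)) s = ℓ)).toFinset : Set ℕ) := by
    ext f
    simp only [Set.mem_ofPred_eq, I.psspec f, Set.mem_image, List.coe_toFinset, List.mem_filter, decide_eq_true_eq]
    constructor
    · rintro ⟨⟨s, hs, rfl⟩, h⟩
      exact ⟨s, ⟨hs, by rw [← h]; exact (beta_card D s).symm⟩, rfl⟩
    · rintro ⟨s, ⟨hs, h⟩, rfl⟩
      exact ⟨⟨s, hs, rfl⟩, by rw [← h]; exact beta_card D s⟩
  rw [hset, Set.InjOn.ncard_image, Set.ncard_coe_finset, List.toFinset_card_of_nodup (I.psn.filter _),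
    List.countP_eq_length_filter]
  intro a ha b hb hab
  simp only [List.coe_toFinset, List.mem_filter, Set.mem_ofPred_eq] at ha hb
  exact beta_inj D (I.elb a (I.psub a ha.1)) (I.elb b (I.psub b hb.1)) hab

end PartC2



/-- evaluation-forcing `let` -/
noncomputable def frc {α : Type} (x : Nat) (f : Nat → α) : α :=
  @Nat.rec (fun _ => α) (f (nat_lit 0)) (fun n _ => f (Nat.succ n)) x

noncomputable def cnd {α : Type} (b : Bool) (t e : α) : α := @Bool.rec (fun _ => α) e t b

/-- evaluate a list and pass it on -/
noncomputable def frcL {α : Type} (l : List Nat) : (List Nat → α) → α :=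
  @List.rec Nat (fun _ => (List Nat → α) → α) (fun k => k [])
    (fun x _ ih k => ih fun r => frc x fun x => k (x :: r)) l

noncomputable def xorAll (g : Nat) (l : List Nat) : List Nat :=
  @List.rec Nat (fun _ => List Nat) [] (fun x _ ih => Nat.xor x g :: ih) l

noncomputable def app (l m : List Nat) : List Nat :=
  @List.rec Nat (fun _ => List Nat) m (fun x _ ih => x :: ih) l

/-- `s` contains no member of the list -/
noncomputable def isMin (s : Nat) (l : List Nat) : Bool :=
  @List.rec Nat (fun _ => Bool) true
    (fun f _ ih => @Bool.rec (fun _ => Bool) ih false (Nat.beq (Nat.land f s) f)) l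

/-- keep the members of `l` that contain no member of `pass`, in front of `acc` -/
noncomputable def keepMin (pass acc l : List Nat) : List Nat :=
  @List.rec Nat (fun _ => List Nat) acc
    (fun s _ ih => @Bool.rec (fun _ => List Nat) ih (s :: ih) (isMin s pass)) l

noncomputable def expand (K : Nat) : Nat → Nat :=
  @Nat.rec (fun _ => Nat → Nat) (fun _ => nat_lit 0)
    (fun _ ih s => Nat.add (Nat.mul (nat_lit 255) (Nat.mod s (nat_lit 2)))
      (Nat.mul (nat_lit 256) (ih (Nat.div s (nat_lit 2))))) K

noncomputable def expandAll (K : Nat) (l : List Nat) : List Nat :=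
  @List.rec Nat (fun _ => List Nat) [] (fun x _ ih => expand K x :: ih) l

noncomputable def loopX (f : Nat → Bool) (c : Nat) : Nat → Bool :=
  @Nat.rec (fun _ => Nat → Bool) (fun _ => true)
    (fun _ ih x => @Bool.rec (fun _ => Bool) false (ih (Nat.add x (nat_lit 2))) (f x)) c

noncomputable def assign (Mn : Nat) (cont : Nat → Nat → Nat → Bool) (c : Nat) :
    Nat → Nat → Nat → Nat → Nat → Nat → Bool :=
  @Nat.rec (fun _ => Nat → Nat → Nat → Nat → Nat → Nat → Bool)
    (fun _ _ _ _ _ _ => true)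
    (fun _ ih p X r W U rem =>
      frc (Nat.mul (nat_lit 255) p) fun p255 =>
      frc (Nat.mul (nat_lit 256) p) fun p' =>
      @Bool.rec (fun _ => Bool)
        (@Bool.rec (fun _ => Bool)
          (frc (Nat.sub X p255) fun X =>
            frc (Nat.mod (Nat.div Mn p) (nat_lit 256)) fun m =>
            frc (Nat.add (Nat.mod (Nat.land Mn X) (nat_lit 255)) m) fun q =>
            @Bool.rec (fun _ => Bool) true
              (frc (Nat.sub U p255) fun U =>
                loopX (fun x => frc (Nat.sub r x) fun r' => frc (Nat.add W (Nat.mul x p)) fun W =>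
                    frc (Nat.sub rem x) fun rem => ih p' X r' W U rem)
                  (Nat.succ (Nat.div (Nat.sub r q) (nat_lit 2))) m)
              (Nat.ble q r))
          (frc (Nat.add W (Nat.mul r p)) fun W => frc (Nat.sub U p255) fun U =>
            frc (Nat.sub rem r) fun rem => cont W U rem)
          (Nat.beq X p255))
        (ih p' X r W U rem)
        (Nat.beq (Nat.land X p255) (nat_lit 0))) c

/-- scan the undetermined cycles, recording lengths seen once / twice -/
noncomputable def scan (W U rem : Nat) (k : Nat → Nat → List Nat → Bool) (l : List Nat) :
    Nat → Nat → List Nat → Bool :=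
  @List.rec Nat (fun _ => Nat → Nat → List Nat → Bool) (fun s1 s2 und => k s1 s2 und)
    (fun s _ ih s1 s2 und =>
      frc (Nat.land U s) fun d =>
      @Bool.rec (fun _ => Bool)
        (@Bool.rec (fun _ => Bool)
          (ih s1 s2 (s :: und))
          (frc (Nat.pow (nat_lit 2) (Nat.add (Nat.mod (Nat.land W s) (nat_lit 255)) rem)) fun b =>
            @Bool.rec (fun _ => Bool)
             true
             (@Bool.rec (fun _ => Bool)
               (frc (Nat.lor s2 b) fun s2 => ih s1 s2 und)
               (frc (Nat.lor s1 b) fun s1 => ih s1 s2 und)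
               (Nat.beq (Nat.land s1 b) (nat_lit 0)))
             (Nat.beq (Nat.land s2 b) (nat_lit 0)))
          (Nat.beq d U))
        (frc (Nat.pow (nat_lit 2) (Nat.mod (Nat.land W s) (nat_lit 255))) fun b =>
            @Bool.rec (fun _ => Bool)
             true
             (@Bool.rec (fun _ => Bool)
               (frc (Nat.lor s2 b) fun s2 => ih s1 s2 und)
               (frc (Nat.lor s1 b) fun s1 => ih s1 s2 und)
               (Nat.beq (Nat.land s1 b) (nat_lit 0)))
             (Nat.beq (Nat.land s2 b) (nat_lit 0)))
        (Nat.beq d (nat_lit 0))) l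

noncomputable def nextT (s2 : Nat) (l : List Nat) : List Nat :=
  @List.rec Nat (fun _ => List Nat) []
    (fun x r ih => @Bool.rec (fun _ => List Nat) ih (x :: r)
      (Nat.beq (Nat.land s2 (Nat.pow (nat_lit 2) x)) (nat_lit 0))) l

noncomputable def branch (Mn k l W U rem : Nat) (cont : Nat → Nat → Nat → Bool) (und : List Nat) : Bool :=
  @List.rec Nat (fun _ => Bool) true
    (fun s _ ih => @Bool.rec (fun _ => Bool) false ih
      (frc (Nat.land U s) fun A =>
       frc (Nat.mod (Nat.land W s) (nat_lit 255)) fun c =>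
       @Bool.rec (fun _ => Bool) true
        (frc (Nat.sub l c) fun r =>
         frc (Nat.xor U A) fun B =>
         @Bool.rec (fun _ => Bool) true
           (@Bool.rec (fun _ => Bool)
              (frc (Nat.sub rem r) fun r => assign Mn cont k (nat_lit 1) B r W U rem)
              (assign Mn cont k (nat_lit 1) A r W U rem)
              (Nat.ble (Nat.add r r) rem))
           (Nat.ble (Nat.add r (Nat.mod (Nat.land Mn B) (nat_lit 255))) rem))
        (Nat.ble (Nat.add c (Nat.mod (Nat.land Mn A) (nat_lit 255))) l))) und

noncomputable def node (Mn k : Nat) (leaf : Nat → Bool) (fuel : Nat) :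
    List Nat → List Nat → Nat → Nat → Nat → Nat → Nat → Bool :=
  @Nat.rec (fun _ => List Nat → List Nat → Nat → Nat → Nat → Nat → Nat → Bool)
    (fun _ _ _ _ _ _ _ => false)
    (fun _ ih tg cyc s1 s2 W U rem =>
      scan W U rem (fun s1 s2 und =>
        @List.rec Nat (fun _ => Bool)
          (@Bool.rec (fun _ => Bool)
            (assign Mn (fun W _ _ => leaf W) k (nat_lit 1) U rem W U rem)
            (leaf W)
            (Nat.beq U (nat_lit 0)))
          (fun l tg _ => branch Mn k l W U rem (ih (l :: tg) und s1 s2) und)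
          (nextT s2 tg)) cyc s1 s2 []) fuel

noncomputable def allEven (w : Nat) (l : List Nat) : Bool :=
  @List.rec Nat (fun _ => Bool) true
    (fun s _ ih => @Bool.rec (fun _ => Bool) false ih
      (Nat.beq (Nat.mod (Nat.mod (Nat.land w s) (nat_lit 255)) (nat_lit 2)) (nat_lit 0))) l

noncomputable def cols (gs : List Nat) (f : Nat → Bool) (c : Nat) : Nat → Nat → Bool :=
  @Nat.rec (fun _ => Nat → Nat → Bool)
    (fun _ w => frc w fun w => @Bool.rec (fun _ => Bool) true (f w) (allEven w gs))
    (fun _ ih p w => frc (Nat.mul (nat_lit 256) p) fun p' => 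
      @Bool.rec (fun _ => Bool) false
      (ih p' (Nat.add (Nat.add w p) p)) (ih p' (Nat.add w p))) c

noncomputable def targets (c : Nat) : Nat → Nat → List Nat :=
  @Nat.rec (fun _ => Nat → Nat → List Nat) (fun _ _ => [])
    (fun _ ih lo hi => @Bool.rec (fun _ => List Nat) (hi :: lo :: ih (Nat.add lo (nat_lit 2)) (Nat.sub hi (nat_lit 2)))
       [lo] (Nat.beq lo hi)) c

noncomputable def ones (p : Nat) (m : Nat) : Nat :=
  @Nat.rec (fun _ => Nat → Nat) (fun _ => nat_lit 0) (fun _ ih p => Nat.add p (ih (Nat.mul (nat_lit 256) p))) m p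

noncomputable def len (l : List Nat) : Nat :=
  @List.rec Nat (fun _ => Nat) (nat_lit 0) (fun _ _ ih => Nat.succ ih) l

/-- `n k m` number of extras, gens, passing -/
noncomputable def typeOK (leaf : Nat → Nat → Bool) (k m : Nat) (gs ps : List Nat) : Bool :=
  frc (len ps) fun T =>
  @Bool.rec (fun _ => Bool) false
  (@Bool.rec (fun _ => Bool) true
    (frc (ones (Nat.pow (nat_lit 256) k) m) fun E =>
     frc (Nat.add T (nat_lit 2)) fun n =>
     frc (Nat.add k m) fun K =>
     frc (Nat.sub (Nat.pow (nat_lit 256) k) (nat_lit 1)) fun U =>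
     frc (Nat.lor (nat_lit 15) (Nat.mul (Nat.pow (nat_lit 2) (Nat.succ n)) (Nat.sub (Nat.pow (nat_lit 2) (nat_lit 64)) (nat_lit 1)))) fun s20 =>
     frcL (expandAll K ps) fun cyc =>
     frcL (targets (Nat.succ (Nat.div T (nat_lit 4))) (nat_lit 4) n) fun tg =>
     frcL (expandAll K gs) fun egs =>
     cols egs (fun w => node w k (leaf n) (nat_lit 12) tg cyc (nat_lit 0) s20 E U n) k (nat_lit 1) E)
    (Nat.beq (Nat.mod T (nat_lit 2)) (nat_lit 0)))
  (Nat.ble T (nat_lit 200))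

noncomputable def popc (c : Nat) : Nat → Nat :=
  @Nat.rec (fun _ => Nat → Nat) (fun _ => nat_lit 0)
    (fun _ ih s => Nat.add (Nat.mod s (nat_lit 2)) (ih (Nat.div s (nat_lit 2)))) c

/-- pairs are coded as `16 * i + j`;  `leaf acc n W` -/
noncomputable def explore (k : Nat) (leaf : List Nat → Nat → Nat → Bool) (ps : List Nat) :
    Nat → Nat → Bool → List Nat → List Nat → List Nat → List Nat → Bool :=
  @List.rec Nat (fun _ => Nat → Nat → Bool → List Nat → List Nat → List Nat → List Nat → Bool)
    (fun m cov sp acc gs el pass => @Bool.rec (fun _ => Bool) true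
      (@Bool.rec (fun _ => Bool) true (typeOK (leaf acc) k m gs pass) sp)
      (Nat.beq cov (Nat.sub (Nat.pow (nat_lit 2) (Nat.succ k)) (nat_lit 1))))
    (fun c _ ih m cov sp acc gs el pass =>
      @Bool.rec (fun _ => Bool)
       (frc (Nat.div c (nat_lit 16)) fun i =>
        frc (Nat.pow (nat_lit 2) i) fun pi =>
        @Bool.rec (fun _ => Bool) true
        (@Bool.rec (fun _ => Bool) true
          (@Bool.rec (fun _ => Bool) false
            (frc (Nat.mod c (nat_lit 16)) fun j =>
             frc (Nat.pow (nat_lit 2) j) fun pj =>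
             frc (@Bool.rec (fun _ => Nat) (nat_lit 0) (Nat.pow (nat_lit 2) k) (Nat.beq j k)) fun sk =>
             frc (Nat.xor (Nat.xor (Nat.xor (Nat.sub pj (nat_lit 1)) (Nat.sub pi (nat_lit 1))) (Nat.pow (nat_lit 2) (Nat.add k m))) sk) fun g =>
             frcL (xorAll g el) fun new =>
             frcL (keepMin pass pass new) fun pass' =>
             frc (Nat.lor cov (Nat.lor pi pj)) fun cov =>
             ih (Nat.succ m) cov (@Bool.rec (fun _ => Bool) sp true (Nat.beq j k)) (c :: acc) (g :: gs)
              (app new el) pass')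
            (ih m cov sp acc gs el pass))
          (Nat.ble (Nat.succ k) (Nat.add (popc (Nat.succ k) cov) (Nat.mul (nat_lit 2) (Nat.sub (nat_lit 5) m)))))
        (Nat.beq (Nat.land cov (Nat.sub pi (nat_lit 1))) (Nat.sub pi (nat_lit 1))))
       (@Bool.rec (fun _ => Bool) true
        (@Bool.rec (fun _ => Bool) true (typeOK (leaf acc) k m gs pass) sp)
        (Nat.beq cov (Nat.sub (Nat.pow (nat_lit 2) (Nat.succ k)) (nat_lit 1))))
       (Nat.beq m (nat_lit 5))) ps

def pairs (k : Nat) : List Nat :=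
  (List.range k).flatMap fun i => (List.range (k + 1)).filterMap fun j =>
    if i < j && !(i == 0 && j == k) then some (16 * i + j) else none

noncomputable def kOK (leaf : Nat → List Nat → Nat → Nat → Bool) (k : Nat) : Bool :=
  frcL (pairs k) fun ps => frc (Nat.sub (Nat.pow (nat_lit 2) k) (nat_lit 1)) fun full =>
  explore k (leaf k) ps (nat_lit 1) (Nat.add (Nat.pow (nat_lit 2) k) (nat_lit 1)) false []
    [full] [full, nat_lit 0] [full]


/-! ### Part D: soundness of the solver -/

theorem frc_eq {α : Type} (x : ℕ) (f : ℕ → α) : frc x f = f x := by cases x <;> rfl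

theorem frcL_eq {α : Type} (l : List ℕ) (k : List ℕ → α) : frcL l k = k l := by
  induction l generalizing k with
  | nil => rfl
  | cons x l ih =>
    have : frcL (x :: l) k = frcL l (fun r => frc x fun x => k (x :: r)) := rfl
    rw [this, ih, frc_eq]

theorem brec {α : Type} (b : Bool) (t e : α) : @Bool.rec (fun _ => α) e t b = bif b then t else e := by
  cases b <;> rfl

theorem xorAll_eq (g : ℕ) (l : List ℕ) : xorAll g l = l.map (· ^^^ g) := by
  induction l with
  | nil => rfl
  | cons x l ih => 
    have : xorAll g (x :: l) = Nat.xor x g :: xorAll g l := rfl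
    rw [this, ih]; rfl

theorem app_eq (l m : List ℕ) : app l m = l ++ m := by
  induction l with
  | nil => rfl
  | cons x l ih =>
    have : app (x :: l) m = x :: app l m := rfl
    rw [this, ih]; rfl

theorem beq_eq_beq (a b : ℕ) : Nat.beq a b = (a == b) := by
  rw [Bool.eq_iff_iff, Nat.beq_eq, beq_iff_eq]

theorem isMin_eq (s : ℕ) (l : List ℕ) : isMin s l = noSub l s := by
  induction l with
  | nil => rfl
  | cons f l ih =>
    have : isMin s (f :: l) = @Bool.rec (fun _ => Bool) (isMin s l) false (Nat.beq (Nat.land f s) f) := rfl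
    have h2 : noSub (f :: l) s = (!(f &&& s == f) && noSub l s) := by simp [noSub]
    rw [this, h2, brec, ih, beq_eq_beq]
    change (bif (f &&& s == f) then false else _) = _
    cases (f &&& s == f) <;> simp

theorem keepMin_eq (pass acc l : List ℕ) : keepMin pass acc l = l.filter (noSub pass) ++ acc := by
  induction l with
  | nil => rfl
  | cons s l ih =>
    have : keepMin pass acc (s :: l) = @Bool.rec (fun _ => List ℕ) (keepMin pass acc l) (s :: keepMin pass acc l) (isMin s pass) := rfl
    rw [this, brec, ih, isMin_eq, List.filter_cons]
    cases noSub pass s <;> simp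

theorem len_eq (l : List ℕ) : len l = l.length := by
  induction l with
  | nil => rfl
  | cons x l ih =>
    have : len (x :: l) = Nat.succ (len l) := rfl
    rw [this, ih]; rfl

/-! packed vectors of bytes -/

def pk (K : ℕ) (f : ℕ → ℕ) : ℕ := ∑ i ∈ Finset.range K, f i * 256^i

/-- byte mask -/
def bm (p : ℕ → Bool) (i : ℕ) : ℕ := if p i then 255 else 0

def wt (K : ℕ) (p : ℕ → Bool) (f : ℕ → ℕ) : ℕ := ∑ i ∈ Finset.range K, if p i then f i else 0

theorem pk_succ (K : ℕ) (f : ℕ → ℕ) : pk (K+1) f = 256 * pk K (fun i => f (i+1)) + f 0 := by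
  unfold pk
  rw [Finset.sum_range_succ', Finset.mul_sum]
  congr 1
  · apply Finset.sum_congr rfl; intro i _; ring
  · simp

theorem pk_zero (f : ℕ → ℕ) : pk 0 f = 0 := rfl

theorem pk_congr {K : ℕ} {f g : ℕ → ℕ} (h : ∀ i < K, f i = g i) : pk K f = pk K g := by
  apply Finset.sum_congr rfl; intro i hi; rw [h i (Finset.mem_range.1 hi)]

theorem wt_congr {K : ℕ} {p q : ℕ → Bool} {f : ℕ → ℕ} (h : ∀ i < K, p i = q i) : wt K p f = wt K q f := by
  apply Finset.sum_congr rfl; intro i hi; rw [h i (Finset.mem_range.1 hi)]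

theorem land_byte {a b c d : ℕ} (hb : b < 256) (hd : d < 256) :
    (256 * a + b) &&& (256 * c + d) = 256 * (a &&& c) + (b &&& d) := by
  apply Nat.eq_of_testBit_eq
  intro j
  have e : (256 : ℕ) = 2^8 := by norm_num
  have hbd : b &&& d < 2^8 := Nat.and_lt_two_pow _ (by omega)
  rw [Nat.testBit_and, e, Nat.testBit_two_pow_mul_add _ (by omega), Nat.testBit_two_pow_mul_add _ (by omega),
    Nat.testBit_two_pow_mul_add _ hbd]
  split_ifs <;> rw [Nat.testBit_and]

theorem xor_byte {a b c d : ℕ} (hb : b < 256) (hd : d < 256) :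
    (256 * a + b) ^^^ (256 * c + d) = 256 * (a ^^^ c) + (b ^^^ d) := by
  apply Nat.eq_of_testBit_eq
  intro j
  have e : (256 : ℕ) = 2^8 := by norm_num
  have hbd : b ^^^ d < 2^8 := Nat.xor_lt_two_pow (by omega) (by omega)
  rw [Nat.testBit_xor, e, Nat.testBit_two_pow_mul_add _ (by omega), Nat.testBit_two_pow_mul_add _ (by omega),
    Nat.testBit_two_pow_mul_add _ hbd]
  split_ifs <;> rw [Nat.testBit_xor]

theorem pk_land (K : ℕ) : ∀ (f g : ℕ → ℕ) (hf : ∀ i, f i < 256) (hg : ∀ i, g i < 256),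
    pk K f &&& pk K g = pk K (fun i => f i &&& g i) := by
  induction K with
  | zero => intro f g _ _; simp [pk]
  | succ K ih =>
    intro f g hf hg
    rw [pk_succ, pk_succ, pk_succ, land_byte (hf 0) (hg 0), ih _ _ (fun i => hf _) (fun i => hg _)]

theorem pk_xor (K : ℕ) : ∀ (f g : ℕ → ℕ) (hf : ∀ i, f i < 256) (hg : ∀ i, g i < 256),
    pk K f ^^^ pk K g = pk K (fun i => f i ^^^ g i) := by
  induction K with
  | zero => intro f g _ _; simp [pk]
  | succ K ih =>
    intro f g hf hg
    rw [pk_succ, pk_succ, pk_succ, xor_byte (hf 0) (hg 0), ih _ _ (fun i => hf _) (fun i => hg _)]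

theorem bm_lt (p : ℕ → Bool) (i : ℕ) : bm p i < 256 := by unfold bm; split_ifs <;> norm_num

theorem land255 {a : ℕ} (h : a < 256) : a &&& 255 = a := by
  have := Nat.and_two_pow_sub_one_eq_mod a 8
  norm_num at this
  rw [this, Nat.mod_eq_of_lt h]

theorem land_bm {K : ℕ} {f : ℕ → ℕ} (hf : ∀ i, f i < 256) (p : ℕ → Bool) :
    pk K f &&& pk K (bm p) = pk K (fun i => if p i then f i else 0) := by
  rw [pk_land K _ _ hf (bm_lt p)]
  apply pk_congr
  intro i _
  unfold bm
  split_ifs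
  · exact land255 (hf i)
  · simp

theorem bm_land (K : ℕ) (p q : ℕ → Bool) :
    pk K (bm p) &&& pk K (bm q) = pk K (bm fun i => p i && q i) := by
  rw [land_bm (bm_lt p)]
  apply pk_congr
  intro i _
  cases hp : p i <;> cases hq : q i <;> simp [bm, hp, hq]

theorem bm_xor (K : ℕ) (p q : ℕ → Bool) :
    pk K (bm p) ^^^ pk K (bm q) = pk K (bm fun i => p i ^^ q i) := by
  rw [pk_xor K _ _ (bm_lt p) (bm_lt q)]
  apply pk_congr
  intro i _
  cases hp : p i <;> cases hq : q i <;> simp [bm, hp, hq]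

theorem pk_mod (K : ℕ) : ∀ (f : ℕ → ℕ), pk K f % 255 = (∑ i ∈ Finset.range K, f i) % 255 := by
  intro f
  unfold pk
  rw [Finset.sum_nat_mod, Finset.sum_nat_mod (Finset.range K) 255 f]
  congr 1
  apply Finset.sum_congr rfl
  intro i _
  rw [Nat.mul_mod, Nat.pow_mod]
  norm_num

theorem land_mod {K : ℕ} {f : ℕ → ℕ} (hf : ∀ i, f i < 256) (p : ℕ → Bool) (h : wt K p f < 255) :
    (pk K f &&& pk K (bm p)) % 255 = wt K p f := by
  rw [land_bm hf, pk_mod]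
  exact Nat.mod_eq_of_lt h

theorem pk_inj {K : ℕ} : ∀ {f g : ℕ → ℕ} (hf : ∀ i, f i < 256) (hg : ∀ i, g i < 256),
    pk K f = pk K g → ∀ i < K, f i = g i := by
  induction K with
  | zero => intro f g _ _ _ i hi; omega
  | succ K ih =>
    intro f g hf hg h i hi
    rw [pk_succ, pk_succ] at h
    have h0 := hf 0
    have h1 := hg 0
    cases i with
    | zero => omega
    | succ i =>
      exact ih (f := fun i => f (i+1)) (g := fun i => g (i+1)) (fun i => hf _) (fun i => hg _) (by omega) i (by omega)

theorem bm_inj {K : ℕ} {p q : ℕ → Bool} : pk K (bm p) = pk K (bm q) ↔ ∀ i < K, p i = q i := by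
  constructor
  · intro h i hi
    have := pk_inj (bm_lt p) (bm_lt q) h i hi
    unfold bm at this
    revert this
    cases p i <;> cases q i <;> simp
  · intro h
    apply pk_congr; intro i hi; unfold bm; rw [h i hi]

theorem bm_zero {K : ℕ} {p : ℕ → Bool} : pk K (bm p) = 0 ↔ ∀ i < K, p i = false := by
  have : pk K (bm fun _ => false) = 0 := by simp [pk, bm]
  rw [← this, bm_inj]

theorem pk_div (i K : ℕ) (hi : i < K) : ∀ {f : ℕ → ℕ} (hf : ∀ i, f i < 256), pk K f / 256^i % 256 = f i := by
  induction i generalizing K with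
  | zero =>
    intro f hf
    obtain ⟨K, rfl⟩ : ∃ K', K = K' + 1 := ⟨K - 1, by omega⟩
    rw [pk_succ]
    have := hf 0
    simp; omega
  | succ i ih =>
    intro f hf
    obtain ⟨K, rfl⟩ : ∃ K', K = K' + 1 := ⟨K - 1, by omega⟩
    rw [pk_succ, pow_succ', ← Nat.div_div_eq_div_mul]
    have := hf 0
    rw [show (256 * pk K (fun i => f (i+1)) + f 0) / 256 = pk K (fun i => f (i+1)) by omega]
    exact ih K (by omega) (fun i => hf _)

theorem pk_upd {K i : ℕ} (hi : i < K) {f g : ℕ → ℕ} {x : ℕ} (h1 : g i = f i + x) (h2 : ∀ j, j ≠ i → g j = f j) :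
    pk K g = pk K f + x * 256^i := by
  unfold pk
  rw [← Finset.add_sum_erase _ _ (Finset.mem_range.2 hi), ← Finset.add_sum_erase (Finset.range K) (fun i => f i * 256^i) (Finset.mem_range.2 hi),
    Finset.sum_congr rfl (g := fun j => f j * 256^j), h1]
  · ring
  · intro j hj; rw [h2 j (Finset.ne_of_mem_erase hj)]

theorem wt_upd {K i : ℕ} (hi : i < K) {p q : ℕ → Bool} {f : ℕ → ℕ} (h1 : p i = false) (h1' : q i = true)
    (h2 : ∀ j, j ≠ i → q j = p j) : wt K q f = wt K p f + f i := by
  unfold wt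
  rw [← Finset.add_sum_erase _ _ (Finset.mem_range.2 hi), ← Finset.add_sum_erase (Finset.range K) (fun i => if p i then f i else 0) (Finset.mem_range.2 hi),
    Finset.sum_congr rfl (g := fun j => if p j then f j else 0), h1, h1']
  · simp; ring
  · intro j hj; rw [h2 j (Finset.ne_of_mem_erase hj)]

theorem wt_split (K : ℕ) (p q : ℕ → Bool) (f : ℕ → ℕ) :
    wt K p f = wt K (fun i => p i && q i) f + wt K (fun i => p i && !q i) f := by
  unfold wt
  rw [← Finset.sum_add_distrib]
  apply Finset.sum_congr rfl
  intro i _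
  cases hp : p i <;> cases hq : q i <;> simp [hp, hq]

theorem wt_mono {K : ℕ} (p : ℕ → Bool) {f g : ℕ → ℕ} (h : ∀ i < K, f i ≤ g i) : wt K p f ≤ wt K p g := by
  apply Finset.sum_le_sum
  intro i hi
  split_ifs
  · exact h i (Finset.mem_range.1 hi)
  · exact le_rfl

theorem wt_sub {K : ℕ} {p q : ℕ → Bool} (f : ℕ → ℕ) (h : ∀ i < K, p i = true → q i = true) : wt K p f ≤ wt K q f := by
  apply Finset.sum_le_sum
  intro i hi
  have := h i (Finset.mem_range.1 hi)
  cases hp : p i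
  · simp
  · rw [this hp]

theorem expand_eq (K : ℕ) : ∀ s, expand K s = pk K (bm s.testBit) := by
  induction K with
  | zero => intro s; rfl
  | succ K ih =>
    intro s
    have : expand (K+1) s = 255 * (s % 2) + 256 * (expand K (s / 2)) := rfl
    rw [this, ih, pk_succ, Nat.add_comm]
    congr 1
    · congr 1
      apply pk_congr; intro i _; unfold bm; rw [Nat.testBit_succ]
    · unfold bm
      rw [Nat.testBit_zero]
      rcases Nat.mod_two_eq_zero_or_one s with h | h <;> simp [h]

theorem expandAll_eq (K : ℕ) (l : List ℕ) : expandAll K l = l.map (expand K) := by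
  induction l with
  | nil => rfl
  | cons x l ih =>
    have : expandAll K (x :: l) = expand K x :: expandAll K l := rfl
    rw [this, ih]; rfl


section Solver

structure Sol (K k : ℕ) (al mn : ℕ → ℕ) : Prop where
  kK : k ≤ K
  tot : wt K (fun _ => true) al < 255
  alb : ∀ i, al i < 256
  mnb : ∀ i, mn i < 256
  mle : ∀ i < K, mn i ≤ al i
  par : ∀ i < K, al i % 2 = mn i % 2

structure St (K k : ℕ) (al : ℕ → ℕ) (fr : ℕ → Bool) (W U rem : ℕ) : Prop where
  sub : ∀ i, fr i = true → i < k
  hW : W = pk K (fun i => if fr i then 0 else al i)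
  hU : U = pk K (bm fr)
  hrem : rem = wt K fr al

variable {K k : ℕ} {al mn : ℕ → ℕ} {fr : ℕ → Bool} {W U rem : ℕ}

theorem bit_eq {i : ℕ} (hi : i < K) : 255 * 256^i = pk K (bm fun j => j == i) := by
  have h : pk K (bm fun _ => false) = 0 := bm_zero.2 (fun _ _ => rfl)
  rw [pk_upd hi (f := bm fun _ => false) (x := 255), h, Nat.zero_add]
  · simp [bm]
  · intro j hj; simp [bm, hj]

theorem bm_remove {i : ℕ} (hi : i < K) {X : ℕ → Bool} (hX : X i = true) :
    pk K (bm X) - 255 * 256^i = pk K (bm fun j => X j && !(j == i)) := by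
  rw [pk_upd hi (f := bm fun j => X j && !(j == i)) (g := bm X) (x := 255), Nat.add_sub_cancel]
  · simp [bm, hX]
  · intro j hj; simp [bm, hj]

theorem wt_remove {i : ℕ} (hi : i < K) {X : ℕ → Bool} (hX : X i = true) (f : ℕ → ℕ) :
    wt K X f = wt K (fun j => X j && !(j == i)) f + f i := by
  apply wt_upd hi
  · simp
  · exact hX
  · intro j hj; simp [hj]

theorem St.step (S : Sol K k al mn) (T : St K k al fr W U rem) {i : ℕ} (hi : fr i = true) :
    St K k al (fun j => fr j && !(j == i)) (W + al i * 256^i) (U - 255 * 256^i) (rem - al i) := by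
  have hik : i < K := lt_of_lt_of_le (T.sub i hi) S.kK
  refine ⟨?_, ?_, ?_, ?_⟩
  · intro j hj
    simp at hj
    exact T.sub j hj.1
  · rw [T.hW]
    symm
    apply pk_upd hik
    · simp [hi]
    · intro j hj; simp [hj]
  · rw [T.hU, bm_remove hik hi]
  · rw [T.hrem, wt_remove hik hi, Nat.add_sub_cancel]

theorem loopX_sound (f : ℕ → Bool) (c : ℕ) : ∀ x, loopX f c x = true → ∀ t < c, f (x + 2 * t) = true := by
  induction c with
  | zero => intro x _ t ht; omega
  | succ c ih =>
    intro x h t ht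
    have e : loopX f (c+1) x = @Bool.rec (fun _ => Bool) false (loopX f c (x+2)) (f x) := rfl
    rw [e, brec] at h
    cases hf : f x
    · rw [hf] at h; simp at h
    · rw [hf] at h
      cases t with
      | zero => simpa using hf
      | succ t =>
        have := ih (x+2) h t (by omega)
        rwa [show x + 2 * (t+1) = x + 2 + 2 * t by ring]

theorem assign_succ (Mn : ℕ) (cont : ℕ → ℕ → ℕ → Bool) (c p X r W U rem : ℕ) :
    assign Mn cont (c+1) p X r W U rem =
      bif Nat.beq (X &&& (255 * p)) 0 then assign Mn cont c (256 * p) X r W U rem else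
      bif Nat.beq X (255 * p) then cont (W + r * p) (U - 255 * p) (rem - r) else
      bif Nat.ble ((Mn &&& (X - 255 * p)) % 255 + Mn / p % 256) r then
        loopX (fun x => assign Mn cont c (256 * p) (X - 255 * p) (r - x) (W + x * p) (U - 255 * p) (rem - x))
          ((r - ((Mn &&& (X - 255 * p)) % 255 + Mn / p % 256)) / 2 + 1) (Mn / p % 256)
      else true := by
  simp only [assign, brec, frc_eq]
  rfl

theorem wt_le_tot (S : Sol K k al mn) (p : ℕ → Bool) : wt K p al < 255 :=
  lt_of_le_of_lt (wt_sub al (fun _ _ _ => rfl)) S.tot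

theorem wtm_le_tot (S : Sol K k al mn) (p : ℕ → Bool) : wt K p mn < 255 :=
  lt_of_le_of_lt (wt_mono p S.mle) (wt_le_tot S p)

theorem assign_sound (S : Sol K k al mn) (cont : ℕ → ℕ → ℕ → Bool) (c : ℕ) :
    ∀ (i : ℕ) (_ : i + c = k) (X fr : ℕ → Bool) (r W U rem : ℕ), St K k al fr W U rem →
      (∀ j, X j = true → fr j = true) → (∀ j < i, X j = false) → (∃ j, X j = true) → r = wt K X al →
      assign (pk K mn) cont c (256^i) (pk K (bm X)) r W U rem = true →
      ∃ W' U' rem', St K k al (fun j => fr j && !X j) W' U' rem' ∧ cont W' U' rem' = true := by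
  induction c with
  | zero =>
    rintro i hi X fr r W U rem T hX h0 ⟨j, hj⟩ hr h
    have h1 := T.sub j (hX j hj)
    rw [h0 j (by omega)] at hj
    exact absurd hj (by simp)
  | succ c ih =>
    rintro i hi X fr r W U rem T hX h0 hne hr h
    have hiK : i < K := by have := S.kK; omega
    rw [assign_succ, bit_eq hiK, bm_land, ← bit_eq hiK, ← pow_succ'] at h
    by_cases hXi : X i = true
    · have e1 : Nat.beq (pk K (bm fun j => X j && j == i)) 0 = false := by
        rw [beq_eq_beq, beq_eq_false_iff_ne, Ne, bm_zero]
        intro h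
        have := h i hiK
        simp [hXi] at this
      rw [e1, cond_false] at h
      have T' := T.step S (hX i hXi)
      by_cases hs : ∀ j, X j = true → j = i
      · have e2 : Nat.beq (pk K (bm X)) (255 * 256^i) = true := by
          rw [Nat.beq_eq, bit_eq hiK, bm_inj]
          intro j _
          by_cases hj : j = i
          · subst hj; simpa using hXi
          · cases hxj : X j
            · simp [hj]
            · exact absurd (hs j hxj) hj
        rw [e2, cond_true] at h
        have hr' : r = al i := by
          rw [hr, wt_remove hiK hXi]
          have : wt K (fun j => X j && !(j == i)) al = 0 := by
            apply Finset.sum_eq_zero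
            intro j _
            rw [if_neg]
            intro h
            simp at h
            exact h.2 (hs j h.1)
          omega
        have ef : (fun j => fr j && !X j) = fun j => fr j && !(j == i) := by
          funext j
          by_cases hj : j = i
          · subst hj; simp [hXi]
          · have : X j = false := by
              cases hxj : X j
              · rfl
              · exact absurd (hs j hxj) hj
            simp [hj, this]
        rw [ef]
        rw [hr'] at h
        exact ⟨_, _, _, T', h⟩
      · have e2 : Nat.beq (pk K (bm X)) (255 * 256^i) = false := by
          rw [beq_eq_beq, beq_eq_false_iff_ne, Ne, bit_eq hiK, bm_inj]
          intro h
          apply hs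
          intro j hj
          have h1 := T.sub j (hX j hj)
          have h2 := h j (by have := S.kK; omega)
          rw [hj] at h2
          simpa using h2.symm
        rw [e2, cond_false, bm_remove hiK hXi, land_mod S.mnb _ (wtm_le_tot S _), pk_div i K hiK S.mnb] at h
        have hrr := wt_remove hiK hXi al
        have hm := wt_mono (K := K) (fun j => X j && !(j == i)) S.mle
        have hmi := S.mle i hiK
        have hpar := S.par i hiK
        have e3 : Nat.ble (wt K (fun j => X j && !(j == i)) mn + mn i) r = true := by
          rw [Nat.ble_eq]; omega
        rw [e3, cond_true] at h
        have := loopX_sound _ _ _ h ((al i - mn i) / 2) (by omega)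
        rw [show mn i + 2 * ((al i - mn i) / 2) = al i by omega] at this
        obtain ⟨W', U', rem', T'', hc⟩ := ih (i+1) (by omega) (fun j => X j && !(j == i)) _ _ _ _ _ T' (by
            intro j hj
            simp at hj
            simp [hX j hj.1, hj.2]) (by
            intro j hj
            by_cases hji : j = i
            · simp [hji]
            · simp [h0 j (by omega)]) (by
            push Not at hs
            obtain ⟨j, h1, h2⟩ := hs
            exact ⟨j, by simp [h1, h2]⟩) (by omega) this
        refine ⟨W', U', rem', ?_, hc⟩
        have ef : (fun j => fr j && !X j) = fun j => (fr j && !(j == i)) && !(X j && !(j == i)) := by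
          funext j
          by_cases hj : j = i
          · subst hj; simp [hXi]
          · have hj' : (j == i) = false := by simpa using hj
            simp [hj']
        rw [ef]; exact T''
    · have hXi : X i = false := by simpa using hXi
      have e1 : Nat.beq (pk K (bm fun j => X j && j == i)) 0 = true := by
        rw [Nat.beq_eq, bm_zero]
        intro j _
        by_cases hj : j = i
        · simp [hj, hXi]
        · simp [hj]
      rw [e1, cond_true] at h
      exact ih (i+1) (by omega) X fr r W U rem T hX (by
        intro j hj
        rcases Nat.lt_succ_iff_lt_or_eq.1 hj with h | h
        · exact h0 j h
        · rw [h, hXi]) hne hr h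
end Solver


section Solver2
variable {K k : ℕ} {al mn : ℕ → ℕ} {fr : ℕ → Bool} {W U rem : ℕ}

/-- real length of a mask -/
def Ln (K : ℕ) (al : ℕ → ℕ) (s : ℕ) : ℕ := wt K s.testBit al

def cnt (K : ℕ) (al : ℕ → ℕ) (l : ℕ) (L : List ℕ) : ℕ := L.countP fun s => Ln K al s = l

/-- the whole list of cycles is as required -/
structure Good (K : ℕ) (al : ℕ → ℕ) (ok : ℕ → Prop) (all : List ℕ) : Prop where
  val : ∀ s ∈ all, ok (Ln K al s)
  two : ∀ l, ok l → cnt K al l all = 2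

def BI (K : ℕ) (al : ℕ → ℕ) (ok : ℕ → Prop) (done : List ℕ) (s1 s2 : ℕ) : Prop :=
  ∀ l, ok l → cnt K al l done = (s1.testBit l).toNat + (s2.testBit l).toNat ∧
    (s2.testBit l = true → s1.testBit l = true)

def mixed (fr : ℕ → Bool) (s : ℕ) : Prop :=
  (∃ i, fr i = true ∧ s.testBit i = true) ∧ (∃ i, fr i = true ∧ s.testBit i = false)

def msk (K s : ℕ) : ℕ := pk K (bm s.testBit)

noncomputable def reg (s1 s2 b : ℕ) (F : ℕ → ℕ → Bool) : Bool :=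
  bif Nat.beq (s2 &&& b) 0 then (bif Nat.beq (s1 &&& b) 0 then F (s1 ||| b) s2 else F s1 (s2 ||| b)) else true

theorem beq_land (s l : ℕ) : Nat.beq (s &&& 2^l) 0 = !s.testBit l := by
  rw [beq_eq_beq, Nat.and_two_pow]
  cases s.testBit l <;> simp

variable {ok : ℕ → Prop}

theorem reg_sound {done : List ℕ} {s1 s2 s : ℕ} {F : ℕ → ℕ → Bool} (hBI : BI K al ok done s1 s2)
    (hok : ok (Ln K al s)) (hc : cnt K al (Ln K al s) (s :: done) ≤ 2) (h : reg s1 s2 (2^(Ln K al s)) F = true) :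
    ∃ s1' s2', BI K al ok (s :: done) s1' s2' ∧ F s1' s2' = true := by
  unfold reg at h
  rw [beq_land, beq_land] at h
  set l := Ln K al s with hl
  have hcl : cnt K al l (s :: done) = cnt K al l done + 1 := by
    unfold cnt; rw [List.countP_cons_of_pos]; simp [hl]
  have hcn : ∀ l', l' ≠ l → cnt K al l' (s :: done) = cnt K al l' done := by
    intro l' h'; unfold cnt; rw [List.countP_cons_of_neg]; simp; intro h; exact h' h.symm
  obtain ⟨h1, h2⟩ := hBI l hok
  cases hs2 : s2.testBit l
  · rw [hs2] at h h1 h2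
    cases hs1 : s1.testBit l
    · rw [hs1] at h h1 h2
      refine ⟨_, _, ?_, h⟩
      intro l' hl'
      by_cases e : l' = l
      · subst e
        rw [hcl, h1, Nat.testBit_or, Nat.testBit_two_pow_self, hs2]
        simp
      · rw [hcn _ e, Nat.testBit_or, Nat.testBit_two_pow_of_ne (Ne.symm e), Bool.or_false]
        exact hBI l' hl'
    · rw [hs1] at h h1 h2
      refine ⟨_, _, ?_, h⟩
      intro l' hl'
      by_cases e : l' = l
      · subst e
        rw [hcl, h1, Nat.testBit_or, Nat.testBit_two_pow_self, hs2, hs1]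
        simp
      · rw [hcn _ e, Nat.testBit_or, Nat.testBit_two_pow_of_ne (Ne.symm e), Bool.or_false]
        exact hBI l' hl'
  · have hs1 := h2 hs2
    rw [hs1, hs2] at h1
    simp at h1
    omega

theorem scan_cons (W U rem : ℕ) (kk : ℕ → ℕ → List ℕ → Bool) (s : ℕ) (l : List ℕ) (s1 s2 : ℕ) (und : List ℕ) :
    scan W U rem kk (s :: l) s1 s2 und =
      bif Nat.beq (U &&& s) 0 then
        reg s1 s2 (2^((W &&& s) % 255)) (fun s1 s2 => scan W U rem kk l s1 s2 und) else
      bif Nat.beq (U &&& s) U then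
        reg s1 s2 (2^((W &&& s) % 255 + rem)) (fun s1 s2 => scan W U rem kk l s1 s2 und) else
      scan W U rem kk l s1 s2 (s :: und) := by
  simp only [scan, brec, frc_eq, reg]
  rfl

theorem St.det (S : Sol K k al mn) (T : St K k al fr W U rem) (s : ℕ) :
    (W &&& msk K s) % 255 + wt K (fun i => fr i && s.testBit i) al = Ln K al s := by
  have h1 : Ln K al s = wt K s.testBit (fun i => if fr i then 0 else al i) + wt K (fun i => fr i && s.testBit i) al := by
    unfold Ln wt
    rw [← Finset.sum_add_distrib]
    apply Finset.sum_congr rfl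
    intro i _
    cases h : fr i <;> cases h' : s.testBit i <;> simp [h, h']
  have h2 := wt_le_tot S s.testBit
  rw [T.hW, msk, land_mod, h1]
  · intro i; have := S.alb i; split_ifs <;> omega
  · unfold Ln at h1; omega

theorem St.land_zero (S : Sol K k al mn) (T : St K k al fr W U rem) (s : ℕ) :
    U &&& msk K s = 0 ↔ ∀ i, fr i = true → s.testBit i = false := by
  rw [T.hU, msk, bm_land, bm_zero]
  constructor
  · intro h i hi
    have := h i (lt_of_lt_of_le (T.sub i hi) S.kK)
    rwa [hi, Bool.true_and] at this
  · intro h i _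
    cases hf : fr i
    · simp
    · simp [h i hf]

theorem St.land_all (S : Sol K k al mn) (T : St K k al fr W U rem) (s : ℕ) :
    U &&& msk K s = U ↔ ∀ i, fr i = true → s.testBit i = true := by
  rw [T.hU, msk, bm_land, bm_inj]
  constructor
  · intro h i hi
    have := h i (lt_of_lt_of_le (T.sub i hi) S.kK)
    rwa [hi, Bool.true_and] at this
  · intro h i _
    cases hf : fr i
    · simp
    · simp [h i hf]

theorem cnt_perm {l : ℕ} {A B : List ℕ} (h : A.Perm B) : cnt K al l A = cnt K al l B := h.countP_eq _

theorem scan_sound (S : Sol K k al mn) (T : St K k al fr W U rem) {all : List ℕ} (G : Good K al ok all)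
    (kk : ℕ → ℕ → List ℕ → Bool) (cy : List ℕ) : ∀ (done und : List ℕ) (s1 s2 : ℕ),
    BI K al ok done s1 s2 → (done ++ cy ++ und).Perm all → (∀ s ∈ und, mixed fr s) →
    scan W U rem kk (cy.map (msk K)) s1 s2 (und.map (msk K)) = true →
    ∃ done' und' s1' s2', BI K al ok done' s1' s2' ∧ (done' ++ und').Perm all ∧ (∀ s ∈ und', mixed fr s) ∧
      kk s1' s2' (und'.map (msk K)) = true := by
  induction cy with
  | nil =>
    intro done und s1 s2 hB hp hm h
    rw [List.append_nil] at hp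
    exact ⟨done, und, s1, s2, hB, hp, hm, h⟩
  | cons s cy ih =>
    intro done und s1 s2 hB hp hm h
    rw [List.map_cons, scan_cons] at h
    have hp1 : (s :: done ++ cy ++ und).Perm all := by
      refine List.Perm.trans ?_ hp
      simp only [List.cons_append, List.append_assoc]
      exact List.perm_middle.symm
    have hmem : s ∈ all := hp1.subset (by simp)
    have hc : cnt K al (Ln K al s) (s :: done) ≤ 2 := by
      rw [← G.two _ (G.val s hmem), ← cnt_perm hp1]
      unfold cnt
      rw [List.append_assoc, List.countP_append]
      omega
    have hdet := T.det S s
    by_cases h0 : U &&& msk K s = 0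
    · have e0 : Nat.beq (U &&& msk K s) 0 = true := by rw [Nat.beq_eq]; exact h0
      rw [e0, cond_true] at h
      rw [T.land_zero S] at h0
      have : wt K (fun i => fr i && s.testBit i) al = 0 := by
        apply Finset.sum_eq_zero
        intro i _
        rw [if_neg]
        intro hh
        simp at hh
        rw [h0 i hh.1] at hh
        exact absurd hh.2 (by simp)
      rw [show (W &&& msk K s) % 255 = Ln K al s by omega] at h
      obtain ⟨s1', s2', hB', h'⟩ := reg_sound hB (G.val s hmem) hc h
      exact ih (s :: done) und s1' s2' hB' hp1 hm h'
    · have e0 : Nat.beq (U &&& msk K s) 0 = false := by rw [beq_eq_beq, beq_eq_false_iff_ne]; exact h0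
      rw [e0, cond_false] at h
      by_cases h1 : U &&& msk K s = U
      · have e1 : Nat.beq (U &&& msk K s) U = true := by rw [Nat.beq_eq]; exact h1
        rw [e1, cond_true] at h
        rw [T.land_all S] at h1
        have : wt K (fun i => fr i && s.testBit i) al = rem := by
          rw [T.hrem]
          apply wt_congr
          intro i _
          cases hf : fr i
          · simp
          · simp [h1 i hf]
        rw [show (W &&& msk K s) % 255 + rem = Ln K al s by omega] at h
        obtain ⟨s1', s2', hB', h'⟩ := reg_sound hB (G.val s hmem) hc h
        exact ih (s :: done) und s1' s2' hB' hp1 hm h'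
      · have e1 : Nat.beq (U &&& msk K s) U = false := by rw [beq_eq_beq, beq_eq_false_iff_ne]; exact h1
        rw [e1, cond_false] at h
        rw [T.land_zero S] at h0
        rw [T.land_all S] at h1
        push Not at h0 h1
        refine ih done (s :: und) s1 s2 hB ?_ ?_ h
        · refine List.Perm.trans ?_ hp
          simp only [List.append_assoc, List.cons_append]
          exact List.Perm.append_left _ List.perm_middle
        · intro t ht
          rcases List.mem_cons.1 ht with rfl | ht
          · obtain ⟨i, hi, hi'⟩ := h0
            obtain ⟨j, hj, hj'⟩ := h1
            exact ⟨⟨i, hi, by simpa using hi'⟩, ⟨j, hj, by simpa using hj'⟩⟩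
          · exact hm t ht

theorem nextT_sound (s2 : ℕ) (l : List ℕ) : (∀ x ∈ nextT s2 l, x ∈ l) ∧
    ∀ x r, nextT s2 l = x :: r → s2.testBit x = false := by
  induction l with
  | nil => exact ⟨fun x hx => hx, fun x r h => by simp [nextT] at h⟩
  | cons y l ih =>
    have e : nextT s2 (y :: l) = @Bool.rec (fun _ => List ℕ) (nextT s2 l) (y :: l) (Nat.beq (s2 &&& 2^y) 0) := rfl
    rw [e, brec, beq_land]
    cases h : s2.testBit y
    · refine ⟨fun x hx => hx, fun x r hx => ?_⟩
      simp at hx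
      rw [← hx.1]; exact h
    · refine ⟨fun x hx => List.mem_cons_of_mem _ (ih.1 x hx), fun x r hx => ih.2 x r hx⟩

theorem branch_cons (Mn k l W U rem : ℕ) (cont : ℕ → ℕ → ℕ → Bool) (s : ℕ) (und : List ℕ) :
    branch Mn k l W U rem cont (s :: und) =
      bif (bif Nat.ble ((W &&& s) % 255 + (Mn &&& (U &&& s)) % 255) l then
            bif Nat.ble ((l - (W &&& s) % 255) + (Mn &&& (U ^^^ (U &&& s))) % 255) rem then
              bif Nat.ble ((l - (W &&& s) % 255) + (l - (W &&& s) % 255)) rem then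
                assign Mn cont k 1 (U &&& s) (l - (W &&& s) % 255) W U rem
              else assign Mn cont k 1 (U ^^^ (U &&& s)) (rem - (l - (W &&& s) % 255)) W U rem
            else true else true) then branch Mn k l W U rem cont und else false := by
  simp only [branch, brec, frc_eq]
  rfl

theorem cond_split {B t : Bool} (h : (bif B then t else false) = true) : B = true ∧ t = true := by
  cases B <;> simp_all

theorem branch_sound (S : Sol K k al mn) (T : St K k al fr W U rem) (l : ℕ) (cont : ℕ → ℕ → ℕ → Bool)
    (und : List ℕ) (hm : ∀ s ∈ und, mixed fr s) (h : branch (pk K mn) k l W U rem cont (und.map (msk K)) = true)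
    (hs : ∃ s ∈ und, Ln K al s = l) :
    ∃ fr' W' U' rem', St K k al fr' W' U' rem' ∧ cont W' U' rem' = true := by
  induction und with
  | nil => obtain ⟨s, hs, _⟩ := hs; simp at hs
  | cons s und ih =>
    rw [List.map_cons, branch_cons] at h
    obtain ⟨hb, ht⟩ := cond_split h
    obtain ⟨t, ht1, ht2⟩ := hs
    rcases List.mem_cons.1 ht1 with rfl | ht1
    swap
    · exact ih (fun s hs => hm s (List.mem_cons_of_mem _ hs)) ht ⟨t, ht1, ht2⟩
    obtain ⟨hm1, hm2⟩ := hm t List.mem_cons_self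
    have hdet := T.det S t
    rw [ht2] at hdet
    have eA : U &&& msk K t = pk K (bm fun i => fr i && t.testBit i) := by
      rw [T.hU, msk, bm_land]
    have eB : U ^^^ (U &&& msk K t) = pk K (bm fun i => fr i && !t.testBit i) := by
      rw [eA, T.hU, bm_xor, bm_inj]
      intro i _
      cases fr i <;> cases t.testBit i <;> rfl
    rw [eB, eA, land_mod S.mnb _ (wtm_le_tot S _), land_mod S.mnb _ (wtm_le_tot S _)] at hb
    have hmA := wt_mono (K := K) (fun i => fr i && t.testBit i) S.mle
    have hmB := wt_mono (K := K) (fun i => fr i && !t.testBit i) S.mle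
    have hsp := wt_split K fr t.testBit al
    rw [← T.hrem] at hsp
    have e1 : Nat.ble ((W &&& msk K t) % 255 + wt K (fun i => fr i && t.testBit i) mn) l = true := by
      rw [Nat.ble_eq]; omega
    have er : l - (W &&& msk K t) % 255 = wt K (fun i => fr i && t.testBit i) al := by omega
    rw [e1, cond_true, er] at hb
    have e2 : Nat.ble (wt K (fun i => fr i && t.testBit i) al + wt K (fun i => fr i && !t.testBit i) mn) rem = true := by
      rw [Nat.ble_eq]; omega
    rw [e2, cond_true] at hb
    have h1 : (1 : ℕ) = 256^0 := rfl
    rw [h1] at hb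
    cases e3 : Nat.ble (wt K (fun i => fr i && t.testBit i) al + wt K (fun i => fr i && t.testBit i) al) rem
    · rw [e3, cond_false] at hb
      obtain ⟨W', U', rem', h⟩ := assign_sound S cont k 0 (by omega) (fun i => fr i && !t.testBit i) fr _ W U rem T
        (by intro j hj; simp at hj; exact hj.1) (by intro j hj; omega)
        (by obtain ⟨i, h1, h2⟩ := hm2; exact ⟨i, by simp [h1, h2]⟩) (by omega) hb
      exact ⟨_, W', U', rem', h⟩
    · rw [e3, cond_true] at hb
      obtain ⟨W', U', rem', h⟩ := assign_sound S cont k 0 (by omega) (fun i => fr i && t.testBit i) fr _ W U rem T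
        (by intro j hj; simp at hj; exact hj.1) (by intro j hj; omega)
        (by obtain ⟨i, h1, h2⟩ := hm1; exact ⟨i, by simp [h1, h2]⟩) rfl hb
      exact ⟨_, W', U', rem', h⟩

theorem node_succ (Mn k : ℕ) (leaf : ℕ → Bool) (fuel : ℕ) (tg cyc : List ℕ) (s1 s2 W U rem : ℕ) :
    node Mn k leaf (fuel+1) tg cyc s1 s2 W U rem =
      scan W U rem (fun s1 s2 und =>
        match nextT s2 tg with
        | [] => bif Nat.beq U 0 then leaf W else assign Mn (fun W _ _ => leaf W) k 1 U rem W U rem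
        | l :: tg => branch Mn k l W U rem (fun W U rem => node Mn k leaf fuel (l :: tg) und s1 s2 W U rem) und) cyc s1 s2 [] := by
  have : node Mn k leaf (fuel+1) tg cyc s1 s2 W U rem = scan W U rem (fun s1 s2 und =>
        @List.rec ℕ (fun _ => Bool)
          (@Bool.rec (fun _ => Bool)
            (assign Mn (fun W _ _ => leaf W) k (nat_lit 1) U rem W U rem)
            (leaf W)
            (Nat.beq U (nat_lit 0)))
          (fun l tg _ => branch Mn k l W U rem (node Mn k leaf fuel (l :: tg) und s1 s2) und)
          (nextT s2 tg)) cyc s1 s2 [] := rfl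
  rw [this]
  congr 1
  funext s1 s2 und
  cases nextT s2 tg with
  | nil => simp only [brec]
  | cons l tg => rfl

theorem St.full (T : St K k al fr W U rem) (S : Sol K k al mn) (h : ∀ i, fr i = false) : W = pk K al := by
  rw [T.hW]; apply pk_congr; intro i _; simp [h i]

theorem node_sound (S : Sol K k al mn) {all : List ℕ} (G : Good K al ok all) (leaf : ℕ → Bool) (fuel : ℕ) :
    ∀ (tg : List ℕ) (htg : ∀ l ∈ tg, ok l) (cy done : List ℕ) (s1 s2 : ℕ) (fr : ℕ → Bool) (W U rem : ℕ),
      St K k al fr W U rem → BI K al ok done s1 s2 → (done ++ cy).Perm all →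
      node (pk K mn) k leaf fuel tg (cy.map (msk K)) s1 s2 W U rem = true → leaf (pk K al) = true := by
  induction fuel with
  | zero => intro tg _ cy done s1 s2 fr W U rem _ _ _ h; exact absurd h (by simp [node])
  | succ fuel ih =>
    intro tg htg cy done s1 s2 fr W U rem T hB hp h
    rw [node_succ] at h
    obtain ⟨done', und, t1, t2, hB', hp', hm, h⟩ := scan_sound S T G _ cy done [] s1 s2 hB (by simpa using hp) (by simp) h
    cases hn : nextT t2 tg with
    | nil =>
      simp only [hn] at h
      cases hU : Nat.beq U 0
      · rw [hU, cond_false, T.hU] at h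
        obtain ⟨W', U', rem', T', h'⟩ := assign_sound S (fun W _ _ => leaf W) k 0 (by omega) fr fr _ W _ rem (T.hU ▸ T)
          (by intro j hj; exact hj) (by intro j hj; omega)
          (by
            by_contra hne
            push Not at hne
            rw [beq_eq_beq, beq_eq_false_iff_ne] at hU
            apply hU
            rw [T.hU, bm_zero]
            intro i _; simpa using hne i) T.hrem h
        rw [← T'.full S (by intro i; simp)]
        exact h'
      · rw [hU, cond_true] at h
        rw [Nat.beq_eq, T.hU, bm_zero] at hU
        rw [← T.full S]
        · exact h
        · intro i
          cases hf : fr i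
          · rfl
          · rw [← hf]; exact hU i (lt_of_lt_of_le (T.sub i hf) S.kK)
    | cons l tg' =>
      simp only [hn] at h
      obtain ⟨ha, hb⟩ := nextT_sound t2 tg
      have hbit := hb l tg' hn
      have hmem : ∀ x ∈ l :: tg', x ∈ tg := by rw [← hn]; exact ha
      have hok : ok l := htg l (hmem l List.mem_cons_self)
      have hex : ∃ s ∈ und, Ln K al s = l := by
        have h2 := G.two l hok
        rw [← cnt_perm hp'] at h2
        have h3 := (hB' l hok).1
        have h4 : (t1.testBit l).toNat ≤ 1 := Bool.toNat_le _
        rw [hbit] at h3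
        have h5 : 0 < cnt K al l und := by
          unfold cnt at *
          rw [List.countP_append] at h2
          simp at h3
          omega
        unfold cnt at h5
        rw [List.countP_pos_iff] at h5
        simpa using h5
      obtain ⟨fr', W', U', rem', T', h'⟩ := branch_sound S T l _ und hm h hex
      exact ih (l :: tg') (fun x hx => htg x (hmem x hx)) und done' t1 t2 fr' W' U' rem' T' hB' hp' h'
end Solver2


section Solver3

theorem allEven_iff (w : ℕ) (l : List ℕ) : allEven w l = l.all fun s => ((w &&& s) % 255) % 2 == 0 := by
  induction l with
  | nil => rfl
  | cons s l ih =>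
    have : allEven w (s :: l) = @Bool.rec (fun _ => Bool) false (allEven w l) (Nat.beq (((w &&& s) % 255) % 2) 0) := rfl
    rw [this, brec, ih, List.all_cons, beq_eq_beq]
    cases (((w &&& s) % 255) % 2 == 0) <;> simp

theorem cols_sound {K k : ℕ} (hkK : k ≤ K) {mn : ℕ → ℕ} (h12 : ∀ i < k, mn i = 1 ∨ mn i = 2) (gs : List ℕ) (f : ℕ → Bool)
    (hev : allEven (pk K mn) gs = true) (c : ℕ) : ∀ (i : ℕ) (_ : i + c = k),
    cols gs f c (256^i) (pk K fun j => if j < i ∨ k ≤ j then mn j else 0) = true → f (pk K mn) = true := by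
  induction c with
  | zero =>
    intro i hi h
    have e : (pk K fun j => if j < i ∨ k ≤ j then mn j else 0) = pk K mn := by
      apply pk_congr; intro j _; rw [if_pos (by omega)]
    rw [e] at h
    have : cols gs f 0 (256^i) (pk K mn) = frc (pk K mn) fun w => @Bool.rec (fun _ => Bool) true (f w) (allEven w gs) := rfl
    rw [this, frc_eq, brec, hev, cond_true] at h
    exact h
  | succ c ih =>
    intro i hi h
    have : ∀ p w, cols gs f (c+1) p w = frc (256 * p) fun p' => @Bool.rec (fun _ => Bool) false
      (cols gs f c p' (w + p + p)) (cols gs f c p' (w + p)) := fun _ _ => rfl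
    rw [this, frc_eq, brec] at h
    obtain ⟨h1, h2⟩ := cond_split h
    apply ih (i+1) (by omega)
    rw [pow_succ']
    rcases h12 i (by omega) with hm | hm
    · convert h1 using 1
      rw [pk_upd (i := i) (by omega) (x := 1) (f := fun j => if j < i ∨ k ≤ j then mn j else 0), one_mul]
      · rw [if_pos (by omega), if_neg (by omega), hm]
      · intro j hj
        by_cases hh : j < i ∨ k ≤ j
        · rw [if_pos (by omega), if_pos hh]
        · rw [if_neg (by omega), if_neg hh]
    · convert h2 using 1
      rw [pk_upd (i := i) (by omega) (x := 2) (f := fun j => if j < i ∨ k ≤ j then mn j else 0)]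
      · rw [two_mul, ← Nat.add_assoc]
      · rw [if_pos (by omega), if_neg (by omega), hm]
      · intro j hj
        by_cases hh : j < i ∨ k ≤ j
        · rw [if_pos (by omega), if_pos hh]
        · rw [if_neg (by omega), if_neg hh]

theorem cols_sound' {K k : ℕ} (hkK : k ≤ K) {mn : ℕ → ℕ} (h12 : ∀ i < k, mn i = 1 ∨ mn i = 2) (gs : List ℕ) (f : ℕ → Bool)
    (hev : allEven (pk K mn) gs = true) {w : ℕ} (hw : w = pk K fun j => if j < 0 ∨ k ≤ j then mn j else 0)
    (h : cols gs f k 1 w = true) : f (pk K mn) = true := by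
  subst hw
  exact cols_sound hkK h12 gs f hev k 0 (by omega) h

theorem ones_eq (m : ℕ) : ∀ k, ones (256^k) m = pk (k+m) (fun j => if k ≤ j then 1 else 0) := by
  induction m with
  | zero =>
    intro k
    symm
    apply Finset.sum_eq_zero
    intro i hi
    have hi' : i < k := by simpa using hi
    change (if k ≤ i then 1 else 0) * 256^i = 0
    rw [if_neg (by omega), zero_mul]
  | succ m ih =>
    intro k
    have : ones (256^k) (m+1) = 256^k + ones (256 * 256^k) m := rfl
    rw [this, ← pow_succ', ih, show k + (m+1) = k + 1 + m by ring]
    rw [pk_upd (i := k) (by omega) (f := fun j => if k + 1 ≤ j then 1 else 0) (g := fun j => if k ≤ j then 1 else 0) (x := 1)]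
    · omega
    · simp
    · intro j hj
      by_cases h : k ≤ j
      · rw [if_pos h, if_pos (by omega)]
      · rw [if_neg h, if_neg (by omega)]

theorem full_eq (k : ℕ) : ∀ m, pk (k+m) (bm fun j => decide (j < k)) = 256^k - 1 := by
  induction k with
  | zero => intro m; rw [bm_zero.2] <;> simp
  | succ k ih =>
    intro m
    rw [show k + 1 + m = (k + m) + 1 by ring, pk_succ]
    have : pk (k+m) (fun i => bm (fun j => decide (j < k+1)) (i+1)) = 256^k - 1 := by
      rw [← ih m]; apply pk_congr; intro i _; simp [bm]
    rw [this]
    simp only [bm]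
    have := Nat.one_le_pow k 256 (by norm_num)
    rw [pow_succ']
    simp
    omega

theorem targets_ok (n c : ℕ) : ∀ lo hi, lo % 2 = 0 → hi % 2 = 0 → 4 ≤ lo → lo + 2 * c ≤ n + 2 → hi ≤ n → 4 + 2 * c ≤ hi + 2 →
    ∀ x ∈ targets c lo hi, 4 ≤ x ∧ x ≤ n ∧ x % 2 = 0 := by
  induction c with
  | zero => intro lo hi _ _ _ _ _ _ x hx; exact absurd hx (by simp [targets])
  | succ c ih =>
    intro lo hi h1 h2 h3 h4 h5 h6 x hx
    have : targets (c+1) lo hi = @Bool.rec (fun _ => List ℕ) (hi :: lo :: targets c (lo+2) (hi-2)) [lo] (Nat.beq lo hi) := rfl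
    rw [this, brec] at hx
    cases h : Nat.beq lo hi
    · rw [h, cond_false] at hx
      rcases List.mem_cons.1 hx with rfl | hx
      · omega
      rcases List.mem_cons.1 hx with rfl | hx
      · omega
      cases c with
      | zero => exact absurd hx (by simp [targets])
      | succ c => exact ih (lo+2) (hi-2) (by omega) (by omega) (by omega) (by omega) (by omega) (by omega) x hx
    · rw [h, cond_true] at hx
      rw [List.mem_singleton] at hx
      omega

theorem wt_mod2 (K : ℕ) (p : ℕ → Bool) {f g : ℕ → ℕ} (h : ∀ i < K, f i % 2 = g i % 2) : wt K p f % 2 = wt K p g % 2 := by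
  unfold wt
  rw [Finset.sum_nat_mod, Finset.sum_nat_mod (Finset.range K) 2 (fun i => if p i then g i else 0)]
  congr 1
  apply Finset.sum_congr rfl
  intro i hi
  have := h i (Finset.mem_range.1 hi)
  split_ifs
  · exact this
  · rfl

theorem typeOK_eq (leaf : ℕ → ℕ → Bool) (k m : ℕ) (gs ps : List ℕ) : typeOK leaf k m gs ps =
    bif Nat.ble ps.length 200 then
      bif Nat.beq (ps.length % 2) 0 then
        cols (gs.map (msk (k+m))) (fun w => node w k (leaf (ps.length + 2)) 12 (targets (ps.length / 4 + 1) 4 (ps.length + 2))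
          (ps.map (msk (k+m))) 0 (15 ||| (2^(ps.length+2+1) * (2^64 - 1))) (ones (256^k) m) (256^k - 1) (ps.length+2)) k 1 (ones (256^k) m)
      else true
    else false := by
  have : ∀ l, expandAll (k+m) l = l.map (msk (k+m)) := by
    intro l; rw [expandAll_eq]; apply List.map_congr_left; intro s _; rw [expand_eq]; rfl
  rw [← this, ← this, ← len_eq]
  simp only [typeOK, frc_eq, frcL_eq, brec]
  rfl

theorem typeOK_sound (leaf : ℕ → ℕ → Bool) {k m n : ℕ} (gs ps : List ℕ) {al : ℕ → ℕ} (hn4 : 4 ≤ n) (hne : n % 2 = 0) (hm : m ≤ 5)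
    (hT : ps.length + 2 = n) (hal : ∀ i, 1 ≤ al i) (hal1 : ∀ i, k ≤ i → al i = 1)
    (hsum : ∑ i ∈ Finset.range k, al i = n)
    (G : Good (k+m) al (fun l => 4 ≤ l ∧ l ≤ n ∧ l % 2 = 0) ps)
    (hgs : ∀ g ∈ gs, Ln (k+m) al g % 2 = 0) (h : typeOK leaf k m gs ps = true) : leaf n (pk (k+m) al) = true := by
  rw [typeOK_eq] at h
  obtain ⟨h200, h⟩ := cond_split h
  rw [Nat.ble_eq] at h200
  have e0 : Nat.beq (ps.length % 2) 0 = true := by rw [Nat.beq_eq]; omega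
  rw [e0, cond_true, hT, full_eq k m |>.symm, ones_eq] at h
  have hkn : ∀ i < k, al i ≤ n := by
    intro i hi; rw [← hsum]; exact Finset.single_le_sum (f := al) (fun _ _ => Nat.zero_le _) (Finset.mem_range.2 hi)
  set mn : ℕ → ℕ := fun i => if k ≤ i then 1 else if al i % 2 = 1 then 1 else 2 with hmn
  have S : Sol (k+m) k al mn := by
    refine ⟨by omega, ?_, ?_, ?_, ?_, ?_⟩
    · have : wt (k+m) (fun _ => true) al = n + m := by
        unfold wt
        simp only [if_true]
        rw [Finset.sum_range_add, hsum, Finset.sum_congr rfl (g := fun _ => 1)]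
        · simp
        · intro i _; exact hal1 _ (by omega)
      omega
    · intro i
      by_cases hi : k ≤ i
      · rw [hal1 i hi]; norm_num
      · have := hkn i (by omega); omega
    · intro i; simp only [hmn]; split_ifs <;> norm_num
    · intro i _; have := hal i; simp only [hmn]; split_ifs <;> omega
    · intro i _
      have := hal1 i
      simp only [hmn]; split_ifs <;> omega
  have hev : allEven (pk (k+m) mn) (gs.map (msk (k+m))) = true := by
    rw [allEven_iff, List.all_eq_true]
    intro x hx
    obtain ⟨g, hg, rfl⟩ := List.mem_map.1 hx
    rw [msk, land_mod S.mnb _ (wtm_le_tot S _), beq_iff_eq, ← hgs g hg, Ln]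
    exact (wt_mod2 _ _ S.par).symm
  have hE : (pk (k+m) fun j => if k ≤ j then 1 else 0) = pk (k+m) fun j => if j < 0 ∨ k ≤ j then mn j else 0 := by
    apply pk_congr
    intro i _
    simp only [hmn]
    by_cases hi : k ≤ i
    · simp [hi]
    · simp [hi]
  have h3 := cols_sound' (by omega) (by intro i hi; simp only [hmn]; split_ifs <;> omega) _ _ hev hE h
  refine node_sound S G (leaf n) 12 _ ?_ ps [] _ _ (fun j => decide (j < k)) _ _ _ ?_ ?_ ?_ h3
  · apply targets_ok n <;> omega
  · refine ⟨by intro i hi; simpa using hi, ?_, rfl, ?_⟩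
    · apply pk_congr
      intro i _
      by_cases hi : k ≤ i
      · simp [hi, hal1 i hi]
      · simp [hi]
    · unfold wt
      rw [Finset.sum_range_add, ← hsum, Finset.sum_congr rfl (g := fun i => if decide (i < k) = true then al i else 0)]
      · simp
      · intro i hi; simp at hi; simp [hi]
  · intro l hl
    simp only [Nat.zero_testBit, cnt, List.countP_nil, Nat.testBit_or, Nat.testBit_two_pow_mul]
    have : Nat.testBit 15 l = false := Nat.testBit_lt_two_pow (lt_of_lt_of_le (by norm_num : 15 < 2^4) (Nat.pow_le_pow_right (by norm_num) hl.1))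
    rw [this]
    have : decide (l ≥ n + 1) = false := by simp; omega
    rw [this]
    simp
  · simp
end Solver3


section Explore

def xiC (C : List ℕ) (t : ℕ) : ℕ := if t = 0 then 0 else C.getD (t-1) 0 / 16
def xjC (k : ℕ) (C : List ℕ) (t : ℕ) : ℕ := if t = 0 then k else C.getD (t-1) 0 % 16

def GS (k : ℕ) (xi xj : ℕ → ℕ) : ℕ → List ℕ
  | 0 => [2^k - 1]
  | t+1 => gen k (xi (t+1)) (xj (t+1)) (t+1) :: GS k xi xj t

def covF (cov : ℕ) (R : List ℕ) : ℕ := R.foldl (fun cov c => cov ||| (2^(c/16) ||| 2^(c%16))) cov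

theorem covF_testBit (R : List ℕ) : ∀ (cov b : ℕ), (covF cov R).testBit b = true ↔
    cov.testBit b = true ∨ ∃ c ∈ R, c / 16 = b ∨ c % 16 = b := by
  induction R with
  | nil => intro cov b; simp [covF]
  | cons c R ih =>
    intro cov b
    have : covF cov (c :: R) = covF (cov ||| (2^(c/16) ||| 2^(c%16))) R := rfl
    rw [this, ih]
    simp only [Nat.testBit_or, Nat.testBit_two_pow, Bool.or_eq_true, decide_eq_true_eq, List.mem_cons, exists_eq_or_imp]
    rw [or_assoc]

theorem beq_t {a b : ℕ} (h : a = b) : Nat.beq a b = true := by rw [Nat.beq_eq]; exact h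

theorem popc_succ (c s : ℕ) : popc (c+1) s = s % 2 + popc c (s / 2) := rfl

theorem popc_eq (c : ℕ) : ∀ s, popc c s = ∑ i ∈ Finset.range c, (s.testBit i).toNat := by
  induction c with
  | zero => intro s; rfl
  | succ c ih =>
    intro s
    rw [popc_succ, ih, Finset.sum_range_succ', Nat.add_comm]
    congr 1
    · apply Finset.sum_congr rfl; intro i _; rw [Nat.testBit_succ]
    · rw [Nat.testBit_zero]
      rcases Nat.mod_two_eq_zero_or_one s with h | h <;> simp [h]

theorem popc_or (c s t : ℕ) : popc c (s ||| t) ≤ popc c s + popc c t := by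
  rw [popc_eq, popc_eq, popc_eq, ← Finset.sum_add_distrib]
  apply Finset.sum_le_sum
  intro i _
  rw [Nat.testBit_or]
  cases s.testBit i <;> cases t.testBit i <;> simp

theorem popc_pow (c i : ℕ) : popc c (2^i) ≤ 1 := by
  rw [popc_eq]
  by_cases hi : i ∈ Finset.range c
  · rw [Finset.sum_eq_single i]
    · exact Bool.toNat_le _
    · intro j _ hj; rw [Nat.testBit_two_pow_of_ne (Ne.symm hj)]; rfl
    · intro h; exact absurd hi h
  · rw [Finset.sum_eq_zero]
    · omega
    · intro j hj
      rw [Nat.testBit_two_pow_of_ne]; rfl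
      rintro rfl; exact hi hj

theorem popc_covF (c : ℕ) (R : List ℕ) : ∀ cov, popc c (covF cov R) ≤ popc c cov + 2 * R.length := by
  induction R with
  | nil => intro cov; exact le_rfl
  | cons x R ih =>
    intro cov
    have : covF cov (x :: R) = covF (cov ||| (2^(x/16) ||| 2^(x%16))) R := rfl
    rw [this, List.length_cons]
    have h1 := ih (cov ||| (2^(x/16) ||| 2^(x%16)))
    have h2 := popc_or c cov (2^(x/16) ||| 2^(x%16))
    have h3 := popc_or c (2^(x/16)) (2^(x%16))
    have h4 := popc_pow c (x/16)
    have h5 := popc_pow c (x%16)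
    omega

theorem popc_full (c : ℕ) : popc c (2^c - 1) = c := by
  rw [popc_eq, Finset.sum_congr rfl (g := fun _ => 1)]
  · simp
  · intro i hi; rw [Nat.testBit_two_pow_sub_one]; simpa using hi

theorem explore_nil (k : ℕ) (leaf : List ℕ → ℕ → ℕ → Bool) (m cov : ℕ) (sp : Bool) (acc gs el pass : List ℕ) :
    explore k leaf [] m cov sp acc gs el pass =
      bif Nat.beq cov (2^(k+1) - 1) then (bif sp then typeOK (leaf acc) k m gs pass else true) else true := by
  simp only [explore, brec]; rfl

theorem explore_cons (k : ℕ) (leaf : List ℕ → ℕ → ℕ → Bool) (c : ℕ) (ps : List ℕ) (m cov : ℕ) (sp : Bool) (acc gs el pass : List ℕ) :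
    explore k leaf (c :: ps) m cov sp acc gs el pass =
      bif Nat.beq m 5 then
        bif Nat.beq cov (2^(k+1) - 1) then (bif sp then typeOK (leaf acc) k m gs pass else true) else true
      else
      bif Nat.beq (cov &&& (2^(c/16) - 1)) (2^(c/16) - 1) then
        bif Nat.ble (k+1) (popc (k+1) cov + 2 * (5 - m)) then
          bif explore k leaf ps m cov sp acc gs el pass then
            explore k leaf ps (m+1) (cov ||| (2^(c/16) ||| 2^(c%16))) (bif Nat.beq (c%16) k then true else sp) (c :: acc)
              (gen k (c/16) (c%16) m :: gs)
              (el.map (· ^^^ gen k (c/16) (c%16) m) ++ el)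
              ((el.map (· ^^^ gen k (c/16) (c%16) m)).filter (noSub pass) ++ pass)
          else false
        else true
      else true := by
  have hg : gen k (c/16) (c%16) m = (((2^(c%16) - 1) ^^^ (2^(c/16) - 1)) ^^^ 2^(k+m)) ^^^
      (bif Nat.beq (c%16) k then 2^k else 0) := by
    unfold gen
    congr 1
    by_cases h : c % 16 = k
    · rw [if_pos h, beq_t h, cond_true]
    · have : Nat.beq (c%16) k = false := by rw [beq_eq_beq, beq_eq_false_iff_ne]; exact h
      rw [if_neg h, this, cond_false]
  rw [hg, ← xorAll_eq, ← keepMin_eq, ← app_eq]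
  simp only [explore, brec, frc_eq, frcL_eq]
  rfl

theorem explore_sound {k : ℕ} (hk : k < 16) (leaf : List ℕ → ℕ → ℕ → Bool) (C : List ℕ) (hC : C.length ≤ 4) (ps : List ℕ) :
    ∀ (R : List ℕ) (t cov : ℕ) (sp : Bool), R.Sublist ps → ps.Pairwise (fun c c' => c / 16 ≤ c' / 16) →
      (∀ c ∈ ps, c / 16 < c % 16 ∧ c % 16 ≤ k) → C.drop t = R → t ≤ C.length →
      covF cov R = 2^(k+1) - 1 → (sp = true ∨ ∃ c ∈ R, c % 16 = k) →
      explore k leaf ps (t+1) cov sp (C.take t).reverse (GS k (xiC C) (xjC k C) t)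
        (EL k (xiC C) (xjC k C) t) (PS k (xiC C) (xjC k C) t) = true →
      typeOK (leaf C.reverse) k (C.length+1) (GS k (xiC C) (xjC k C) C.length) (PS k (xiC C) (xjC k C) C.length) = true := by
  have fin : ∀ (t cov : ℕ) (sp : Bool), C.drop t = [] → t ≤ C.length → covF cov [] = 2^(k+1) - 1 → (sp = true ∨ ∃ c ∈ ([] : List ℕ), c % 16 = k) →
      (bif Nat.beq cov (2^(k+1) - 1) then (bif sp then typeOK (leaf (C.take t).reverse) k (t+1) (GS k (xiC C) (xjC k C) t) (PS k (xiC C) (xjC k C) t) else true) else true) = true → 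
      typeOK (leaf C.reverse) k (C.length+1) (GS k (xiC C) (xjC k C) C.length) (PS k (xiC C) (xjC k C) C.length) = true := by
    intro t cov sp hd ht hcov hsp h
    have ht' : t = C.length := by
      rw [List.drop_eq_nil_iff] at hd; omega
    have hsp : sp = true := by simpa using hsp
    have hcov : Nat.beq cov (2^(k+1) - 1) = true := by rw [Nat.beq_eq]; exact hcov
    rw [hcov, cond_true, hsp, cond_true, ht', List.take_length] at h
    exact h
  induction ps with
  | nil =>
    intro R t cov sp hR _ _ hd ht hcov hsp h
    rw [explore_nil] at h
    have : R = [] := by simpa using hR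
    subst this
    exact fin t cov sp hd ht hcov hsp h
  | cons c ps ih =>
    intro R t cov sp hR hpw hps hd ht hcov hsp h
    have hlen : t + R.length = C.length := by rw [← hd, List.length_drop]; omega
    rw [explore_cons] at h
    by_cases ht5 : t + 1 = 5
    · rw [beq_t ht5, cond_true] at h
      have : R = [] := by rw [← List.length_eq_zero_iff]; omega
      subst this
      exact fin t cov sp hd ht hcov hsp h
    have e1 : Nat.beq (t+1) 5 = false := by rw [beq_eq_beq, beq_eq_false_iff_ne]; exact ht5
    rw [e1, cond_false] at h
    rw [List.pairwise_cons] at hpw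
    have hRi : ∀ x ∈ R, c / 16 ≤ x / 16 ∧ x / 16 < x % 16 := by
      intro x hx
      have hx' := hR.subset hx
      refine ⟨?_, (hps x hx').1⟩
      rcases List.mem_cons.1 hx' with rfl | hx'
      · exact le_rfl
      · exact hpw.1 x hx'
    have hcc := hps c List.mem_cons_self
    have e2 : Nat.beq (cov &&& (2^(c/16) - 1)) (2^(c/16) - 1) = true := by
      rw [Nat.beq_eq]
      apply Nat.eq_of_testBit_eq
      intro b
      rw [Nat.testBit_and, Nat.testBit_two_pow_sub_one]
      by_cases hb : b < c / 16
      · have h1 : (covF cov R).testBit b = true := by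
          rw [hcov, Nat.testBit_two_pow_sub_one]; simp; omega
        rw [covF_testBit] at h1
        rcases h1 with h1 | ⟨x, hx, h1⟩
        · simp [h1]
        · have := hRi x hx
          omega
      · simp [hb]
    have e3 : Nat.ble (k+1) (popc (k+1) cov + 2 * (5 - (t+1))) = true := by
      rw [Nat.ble_eq]
      have := popc_covF (k+1) R cov
      rw [hcov, popc_full] at this
      omega
    rw [e2, cond_true, e3, cond_true] at h
    obtain ⟨h1, h2⟩ := cond_split h
    cases hR with
    | cons _ hR' =>
      exact ih R t cov sp hR' hpw.2 (fun x hx => hps x (List.mem_cons_of_mem _ hx)) hd ht hcov hsp h1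
    | cons_cons _ hR' =>
      rename_i R'
      have htl : t < C.length := by rw [← hlen]; simp
      have hg : C[t] = c := by
        have := List.drop_eq_getElem_cons htl
        rw [hd] at this
        simpa using (List.cons.inj this).1.symm
      have hd' : C.drop (t+1) = R' := by
        have := List.drop_eq_getElem_cons htl
        rw [hd] at this
        exact (List.cons.inj this).2.symm
      have hgd : C.getD t 0 = c := by rw [List.getD_eq_getElem _ _ htl, hg]
      have ei : xiC C (t+1) = c / 16 := by simp only [xiC, Nat.add_sub_cancel, hgd]; simp
      have ej : xjC k C (t+1) = c % 16 := by simp only [xjC, Nat.add_sub_cancel, hgd]; simp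
      refine ih R' (t+1) (cov ||| (2^(c/16) ||| 2^(c%16))) (bif Nat.beq (c%16) k then true else sp) hR' hpw.2
        (fun x hx => hps x (List.mem_cons_of_mem _ hx)) hd' htl hcov ?_ ?_
      · rcases hsp with hh | ⟨x, hx, hh⟩
        · left; rw [hh]; cases Nat.beq (c%16) k <;> rfl
        · rcases List.mem_cons.1 hx with rfl | hx
          · left; rw [beq_t hh]; rfl
          · right; exact ⟨x, hx, hh⟩
      · rw [List.take_add_one, List.getElem?_eq_getElem htl, hg]
        simp only [GS, EL, PS, ei, ej, Option.toList_some, List.reverse_append, List.reverse_cons, List.reverse_nil, List.nil_append, List.cons_append]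
        exact h2

theorem kOK_sound {k : ℕ} (hk : k < 16) (leaf : ℕ → List ℕ → ℕ → ℕ → Bool) (C : List ℕ) (hC : C.length ≤ 4)
    (hsub : C.Sublist (pairs k)) (hcov : ∀ b ≤ k, b = 0 ∨ b = k ∨ ∃ c ∈ C, c / 16 = b ∨ c % 16 = b)
    (hsp : ∃ c ∈ C, c % 16 = k) (h : kOK leaf k = true) (hpw : (pairs k).Pairwise (fun c c' => c / 16 ≤ c' / 16))
    (hps : ∀ c ∈ pairs k, c / 16 < c % 16 ∧ c % 16 ≤ k) :
    typeOK (leaf k C.reverse) k (C.length+1) (GS k (xiC C) (xjC k C) C.length) (PS k (xiC C) (xjC k C) C.length) = true := by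
  have : kOK leaf k = explore k (leaf k) (pairs k) 1 (2^k + 1) false [] [2^k - 1] [2^k - 1, 0] [2^k - 1] := by
    simp only [kOK, frc_eq, frcL_eq]; rfl
  rw [this] at h
  have hk1 : ∀ b, (2^k + 1).testBit b = true → b ≤ k := by
    intro b hb
    by_contra hbk
    have h1 : 2^k + 1 < 2^b := by
      have h2 : 2^(k+1) ≤ 2^b := Nat.pow_le_pow_right (by norm_num) (by omega)
      have h3 : 2^(k+1) = 2 * 2^k := pow_succ' _ _
      rcases Nat.eq_zero_or_pos k with rfl | hk0
      · exfalso
        obtain ⟨c, hc, hc'⟩ := hsp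
        have := hps c (hsub.subset hc)
        omega
      · have : 2^1 ≤ 2^k := Nat.pow_le_pow_right (by norm_num) hk0
        omega
    rw [Nat.testBit_lt_two_pow h1] at hb
    exact absurd hb (by simp)
  refine explore_sound hk (leaf k) C hC (pairs k) C 0 (2^k+1) false hsub hpw hps (by simp) (by omega) ?_ (Or.inr hsp) ?_
  · apply Nat.eq_of_testBit_eq
    intro b
    rw [Bool.eq_iff_iff, covF_testBit, Nat.testBit_two_pow_sub_one, decide_eq_true_eq]
    constructor
    · rintro (h | ⟨c, hc, h⟩)
      · have := hk1 b h; omega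
      · have := hps c (hsub.subset hc); omega
    · intro hb
      rcases hcov b (by omega) with rfl | rfl | h
      · left
        rw [Nat.testBit_zero]
        obtain ⟨c, hc, hc'⟩ := hsp
        have := hps c (hsub.subset hc)
        have : 2^k % 2 = 0 := by
          obtain ⟨k, rfl⟩ : ∃ k', k = k' + 1 := ⟨k - 1, by omega⟩
          rw [pow_succ]; omega
        simp; omega
      · left
        obtain ⟨c, hc, hc'⟩ := hsp
        have := hps c (hsub.subset hc)
        have h1 : (1 : ℕ) < 2^b := Nat.one_lt_two_pow (by omega)
        have := Nat.testBit_two_pow_mul_add 1 h1 b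
        rw [mul_one] at this
        rw [this]; simp
      · right; exact h
  · exact h
end Explore


/-! ### Part E: from a model graph to a successful leaf -/

section Bip
variable {V : Type*} [Fintype V]

theorem cyc_len {G : SimpleGraph V} {f : Sym2 V → ZMod 2} (hf : IsCyc G.edgeSet f) :
    3 ≤ {e | f e ≠ 0}.ncard ∧ {e | f e ≠ 0}.ncard ≤ Fintype.card V := by
  have nd : ∀ v, f s(v,v) = 0 := by
    intro v
    by_contra h
    have := hf.sub _ h
    simp at this
  obtain ⟨m, ⟨c⟩⟩ := exists_copy hf.ne hf.even nd
  have hle : fromEdgeSet {e | f e ≠ 0} ≤ G := by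
    intro x y hxy
    rw [fromEdgeSet_adj] at hxy
    exact hf.sub _ hxy.1
  let c' : Copy (cycleGraph (m+3)) G := (Copy.ofLE _ _ hle).comp c
  have hc' : ∀ i, c' i = c i := fun i => rfl
  have h1 := copy_isCyc c'
  have h2 : chi c'.toSubgraph = f := by
    apply hf.min _ h1.1.ne h1.1.even
    intro e he
    rw [chi_ne, copy_edge] at he
    obtain ⟨i, rfl⟩ := he
    rw [hc', hc']
    have := c.toSubgraph.edgeSet_subset ((copy_edge c _).2 ⟨i, rfl⟩)
    rw [mem_edgeSet, fromEdgeSet_adj] at this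
    exact this.1
  have h3 := h1.2
  rw [h2] at h3
  rw [h3]
  refine ⟨by omega, ?_⟩
  have := Fintype.card_le_of_injective _ c'.injective
  simpa using this

theorem even_of_bip {G : SimpleGraph V} (hc : G.Colorable 2) {f : Sym2 V → ZMod 2} (hb : ∀ v, bd f v = 0)
    (hs : ∀ e, f e ≠ 0 → e ∈ G.edgeSet) : Even {e | f e ≠ 0}.ncard := by
  classical
  obtain ⟨c⟩ := hc
  let A : Finset (V × V) := ((Finset.univ.filter fun v => c v = 0) ×ˢ Finset.univ).filter fun p => f s(p.1, p.2) ≠ 0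
  have hset : {e | f e ≠ 0} = (fun p : V × V => s(p.1, p.2)) '' (A : Set (V × V)) := by
    ext e
    rw [Set.mem_ofPred_eq]
    constructor
    · intro he
      induction e with | _ a b =>
      have hab : G.Adj a b := hs _ he
      have hne := c.valid hab
      rcases (by revert hne; generalize c a = x; generalize c b = y; revert x y; decide : c a = 0 ∨ c b = 0) with h | h
      · exact ⟨(a, b), by simp [A, h]; exact he, rfl⟩
      · exact ⟨(b, a), by simp [A, h]; rw [Sym2.eq_swap]; exact he, Sym2.eq_swap⟩
    · rintro ⟨p, hp, rfl⟩
      simp [A] at hp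
      exact hp.2
  have hinj : Set.InjOn (fun p : V × V => s(p.1, p.2)) (A : Set (V × V)) := by
    rintro ⟨a, b⟩ h1 ⟨a', b'⟩ h2 h
    simp [A] at h1 h2
    simp only [Sym2.eq_iff] at h
    rcases h with ⟨rfl, rfl⟩ | ⟨rfl, rfl⟩
    · rfl
    · exfalso
      have hab : G.Adj a b := hs _ h1.2
      exact c.valid hab (h1.1.trans h2.1.symm)
  rw [hset, Set.InjOn.ncard_image hinj, Set.ncard_coe_finset, ← ZMod.natCast_eq_zero_iff_even]
  rw [Finset.card_eq_sum_ones, Nat.cast_sum]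
  have : ∑ p ∈ A, ((1 : ℕ) : ZMod 2) = ∑ p ∈ (Finset.univ.filter fun v => c v = 0) ×ˢ Finset.univ, f s(p.1, p.2) := by
    rw [Finset.sum_filter]
    apply Finset.sum_congr rfl
    intro p _
    split_ifs with h
    · rw [(zmod2_ne _).1 h]; rfl
    · exact (not_not.1 h).symm
  rw [this, Finset.sum_product]
  apply Finset.sum_eq_zero
  intro v _
  exact hb v
end Bip

theorem length_fiber {α : Type*} (f : α → ℕ) (S : Finset ℕ) (l : List α) (h : ∀ a ∈ l, f a ∈ S) :
    l.length = ∑ x ∈ S, l.countP (fun a => f a = x) := by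
  induction l with
  | nil => simp
  | cons a l ih =>
    have h1 := ih (fun b hb => h b (List.mem_cons_of_mem _ hb))
    have h2 := h a List.mem_cons_self
    simp only [List.countP_cons, Finset.sum_add_distrib, List.length_cons, ← h1]
    simp [h2]

theorem even_range_card (n : ℕ) (hn : 4 ≤ n) (he : n % 2 = 0) :
    ((Finset.range (n+1)).filter (fun l => 4 ≤ l ∧ l ≤ n ∧ l % 2 = 0)).card * 2 + 2 = n := by
  have : (Finset.range (n+1)).filter (fun l => 4 ≤ l ∧ l ≤ n ∧ l % 2 = 0) =
      (Finset.range (n/2-1)).image (fun i => 2*i+4) := by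
    ext l
    simp only [Finset.mem_filter, Finset.mem_range, Finset.mem_image]
    constructor
    · rintro ⟨h1, h2, h3, h4⟩
      exact ⟨l/2-2, by omega, by omega⟩
    · rintro ⟨i, h1, rfl⟩
      omega
  rw [this, Finset.card_image_of_injective, Finset.card_range]
  · omega
  · intro a b h; simp only at h; omega

section ModelLeaf
variable {n k : ℕ} [NeZero n] {P : ℕ → ℕ}

theorem GS_mem {xi xj : ℕ → ℕ} : ∀ (M g : ℕ), g ∈ GS k xi xj M →
    g = 2^k - 1 ∨ ∃ t, 0 < t ∧ t ≤ M ∧ g = gen k (xi t) (xj t) t := by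
  intro M
  induction M with
  | zero => intro g hg; left; simpa [GS] using hg
  | succ M ih =>
    intro g hg
    rw [GS, List.mem_cons] at hg
    rcases hg with rfl | hg
    · exact Or.inr ⟨M+1, by omega, le_rfl, rfl⟩
    · rcases ih g hg with h | ⟨t, h1, h2, h3⟩
      · exact Or.inl h
      · exact Or.inr ⟨t, h1, by omega, h3⟩

theorem model_leaf (leaf : ℕ → List ℕ → ℕ → ℕ → Bool) (C : List ℕ) (hC : C.length ≤ 4) (hk16 : k < 16)
    (hsub : C.Sublist (pairs k)) (hcov : ∀ b ≤ k, b = 0 ∨ b = k ∨ ∃ c ∈ C, c / 16 = b ∨ c % 16 = b)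
    (hsp : ∃ c ∈ C, c % 16 = k) (h : kOK leaf k = true) (hpw : (pairs k).Pairwise (fun c c' => c / 16 ≤ c' / 16))
    (hps : ∀ c ∈ pairs k, c / 16 < c % 16 ∧ c % 16 ≤ k)
    (hn4 : 4 ≤ n) (hne : n % 2 = 0)
    (D : Data n k P (xiC C) (xjC k C) (C.length+1)) (G : SimpleGraph (Option (ZMod n)))
    (hG : G.edgeSet = Em n k P (xiC C) (xjC k C) (C.length+1)) (hcol : G.Colorable 2)
    (hcc : ∀ l, 4 ≤ l → l ≤ n → Even l → cycleCount G l = 2) :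
    leaf k C.reverse n (pk (k + (C.length+1)) (alen k P)) = true := by
  have I := inv_all D C.length (by omega)
  have hcyc : ∀ s ∈ PS k (xiC C) (xjC k C) C.length,
      4 ≤ mlen k P (k + (C.length+1)) s ∧ mlen k P (k + (C.length+1)) s ≤ n ∧ mlen k P (k + (C.length+1)) s % 2 = 0 := by
    intro s hs
    have h1 := (I.psspec _).2 ⟨s, hs, rfl⟩
    rw [← hG] at h1
    have h2 := cyc_len h1
    have h3 := even_of_bip hcol h1.even h1.sub
    rw [beta_card D, Fintype.card_option, ZMod.card] at h2
    rw [beta_card D, Nat.even_iff] at h3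
    omega
  have hcnt : ∀ l, 4 ≤ l ∧ l ≤ n ∧ l % 2 = 0 →
      (PS k (xiC C) (xjC k C) C.length).countP (fun s => mlen k P (k+(C.length+1)) s = l) = 2 := by
    rintro l ⟨h1, h2, h3⟩
    rw [← cycleCount_model D G hG (by omega)]
    exact hcc l h1 h2 (Nat.even_iff.2 h3)
  have hT : (PS k (xiC C) (xjC k C) C.length).length + 2 = n := by
    rw [length_fiber (mlen k P (k+(C.length+1))) ((Finset.range (n+1)).filter (fun l => 4 ≤ l ∧ l ≤ n ∧ l % 2 = 0)),
      Finset.sum_congr rfl (g := fun _ => 2)]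
    · rw [Finset.sum_const, smul_eq_mul]; exact even_range_card n hn4 hne
    · intro l hl; exact hcnt l (Finset.mem_filter.1 hl).2
    · intro s hs
      have := hcyc s hs
      exact Finset.mem_filter.2 ⟨Finset.mem_range.2 (by omega), this⟩
  have hgs : ∀ g ∈ GS k (xiC C) (xjC k C) C.length, mlen k P (k + (C.length+1)) g % 2 = 0 := by
    intro g hg
    rw [← beta_card D, ← Nat.even_iff]
    rcases GS_mem _ _ hg with rfl | ⟨t, h1, h2, rfl⟩
    · apply even_of_bip hcol
      · intro v
        rw [bd_low D le_rfl, D.Pk, ZMod.natCast_self]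
        have : ∀ a : ZMod 2, a + a = 0 := by decide
        exact this _
      · intro e he
        rw [hG]
        refine beta_sub_Em D le_rfl ?_ e he
        have : 2^k ≤ 2^(k+(C.length+1)) := Nat.pow_le_pow_right (by norm_num) (by omega)
        have : 0 < 2^k := by positivity
        omega
    · apply even_of_bip hcol
      · intro v; exact gen_even D h1 (by omega) v
      · intro e he
        rw [hG]
        refine beta_sub_Em D le_rfl ?_ e he
        refine (gen_lt (D.lt t (by omega)) (D.le t (by omega))).trans_le ?_
        exact Nat.pow_le_pow_right (by norm_num) (by omega)
  have hsum : ∀ q ≤ k, ∑ i ∈ Finset.range q, alen k P i = P q := by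
    intro q
    induction q with
    | zero => intro _; rw [D.P0]; rfl
    | succ q ih =>
      intro hq
      rw [Finset.sum_range_succ, ih (by omega), alen, if_pos (by omega)]
      have := D.mono q (by omega)
      omega
  refine typeOK_sound (leaf k C.reverse) _ _ hn4 hne (by omega) hT ?_ ?_ ((hsum k le_rfl).trans D.Pk) ⟨hcyc, hcnt⟩ hgs
    (kOK_sound hk16 leaf C hC hsub hcov hsp h hpw hps)
  · intro i
    unfold alen
    split_ifs with hi
    · have := D.mono i hi; omega
    · exact le_rfl
  · intro i hi
    unfold alen
    rw [if_neg (by omega)]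
end ModelLeaf


/-! ### Part F: isomorphism invariance, concrete graphs -/

section IsoInv
variable {V W : Type*} [Fintype V] [Fintype W] {G : SimpleGraph V} {H : SimpleGraph W}

noncomputable def mapCoeIso (φ : G ≃g H) (S : G.Subgraph) : S.coe ≃g (S.map φ.toHom).coe where
  toEquiv := Equiv.Set.image φ S.verts φ.injective
  map_rel_iff' := by
    rintro ⟨a, ha⟩ ⟨b, hb⟩
    constructor
    · rintro ⟨x, y, h, hx, hy⟩
      have hx' : x = a := φ.injective hx
      have hy' : y = b := φ.injective hy
      subst hx'; subst hy'
      exact h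
    · intro h
      exact ⟨a, b, h, rfl, rfl⟩

theorem cycleCount_le (φ : G ≃g H) (k : ℕ) : cycleCount G k ≤ cycleCount H k := by
  unfold cycleCount
  refine Set.ncard_le_ncard_of_injOn (fun S => S.map φ.toHom) ?_ ?_ (Set.toFinite _)
  · rintro S ⟨h⟩
    exact ⟨(mapCoeIso φ S).symm.trans h⟩
  · intro S _ S' _ h
    have h' := congrArg (fun S => S.map φ.symm.toHom) h
    simp only [← Subgraph.map_comp] at h'
    have e : φ.symm.toHom.comp φ.toHom = Hom.id := by
      ext x; exact φ.symm_apply_apply x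
    rwa [e, Subgraph.map_id, Subgraph.map_id] at h'

theorem cycleCount_iso (φ : G ≃g H) (k : ℕ) : cycleCount G k = cycleCount H k :=
  le_antisymm (cycleCount_le φ k) (cycleCount_le φ.symm k)

theorem edge_iso (φ : G ≃g H) : G.edgeSet.ncard = H.edgeSet.ncard :=
  Nat.card_congr φ.mapEdgeSet

theorem isOddly_iso (φ : G ≃g H) {r : ℕ} (h : IsOddlyRBipancyclic G r) : IsOddlyRBipancyclic H r := by
  obtain ⟨h1, h2, h3, h4⟩ := h
  have hc : Fintype.card V = Fintype.card W := Fintype.card_congr φ.toEquiv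
  refine ⟨Colorable.of_hom φ.symm.toHom h1, hc ▸ h2, ?_, ?_⟩
  · intro x
    have := h3 (φ.symm x)
    have e : (H.neighborSet x).ncard = (G.neighborSet (φ.symm x)).ncard := Nat.card_congr (φ.symm.mapNeighborSet x)
    rw [e]; exact this
  · intro k hk hk' he
    rw [← cycleCount_iso φ]
    exact h4 k hk (hc ▸ hk') he

/-- refinement invariant -/
def ref (adj : V → V → Bool) (F : V → ℕ) (x : V) : ℕ := F x ^ 2 + ∑ y, if adj x y then F y else 0

def gInv (adj : V → V → Bool) : ℕ :=
  ∑ x, (ref adj (ref adj (ref adj (fun _ => 1))) x) ^ 2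

theorem gInv_iso (φ : V ≃ W) {a : V → V → Bool} {b : W → W → Bool} (h : ∀ x y, b (φ x) (φ y) = a x y) :
    gInv a = gInv b := by
  have hr : ∀ (F : V → ℕ) (F' : W → ℕ), (∀ x, F' (φ x) = F x) → ∀ x, ref b F' (φ x) = ref a F x := by
    intro F F' hF x
    unfold ref
    rw [hF, ← Equiv.sum_comp φ]
    simp only [h, hF]
  unfold gInv
  rw [← Equiv.sum_comp φ]
  apply Finset.sum_congr rfl
  intro x _
  rw [hr _ _ (hr _ _ (hr _ _ (fun _ => rfl)))]
end IsoInv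

section Concrete

def symmem (E : List (ℕ × ℕ)) (x y : ℕ) : Bool :=
  E.any fun p => (Nat.beq p.1 x && Nat.beq p.2 y) || (Nat.beq p.1 y && Nat.beq p.2 x)

def adjB (n : ℕ) (E : List (ℕ × ℕ)) (x y : ℕ) : Bool :=
  (Nat.blt x n && Nat.blt y n && (Nat.beq ((x+1) % n) y || Nat.beq ((y+1) % n) x)) || symmem E x y

theorem symmem_iff {E : List (ℕ × ℕ)} {x y : ℕ} : symmem E x y = true ↔
    ∃ p ∈ E, (p.1 = x ∧ p.2 = y) ∨ (p.1 = y ∧ p.2 = x) := by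
  simp only [symmem, List.any_eq_true, Bool.or_eq_true, Bool.and_eq_true, Nat.beq_eq]

theorem adjB_iff {n : ℕ} {E : List (ℕ × ℕ)} {x y : ℕ} : adjB n E x y = true ↔
    (x < n ∧ y < n ∧ ((x+1) % n = y ∨ (y+1) % n = x)) ∨ symmem E x y = true := by
  simp only [adjB, Bool.or_eq_true, Bool.and_eq_true, Nat.beq_eq, Nat.blt_eq, and_assoc]

theorem symmem_comm {E : List (ℕ × ℕ)} {x y : ℕ} (h : symmem E x y = true) : symmem E y x = true := by
  rw [symmem_iff] at *
  obtain ⟨p, hp, h⟩ := h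
  exact ⟨p, hp, h.symm⟩

theorem adjB_comm {n : ℕ} {E : List (ℕ × ℕ)} {x y : ℕ} (h : adjB n E x y = true) : adjB n E y x = true := by
  rw [adjB_iff] at *
  rcases h with ⟨h1, h2, h3⟩ | h
  · exact Or.inl ⟨h2, h1, h3.symm⟩
  · exact Or.inr (symmem_comm h)

/-- the graph on `Fin (n+1)`: cycle on the first `n` vertices plus the extra edges `E` -/
def gN (n : ℕ) (E : List (ℕ × ℕ)) : SimpleGraph (Fin (n+1)) where
  Adj x y := x ≠ y ∧ adjB n E x y = true
  symm := ⟨fun _ _ h => ⟨h.1.symm, adjB_comm h.2⟩⟩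
  loopless := ⟨fun _ h => h.1 rfl⟩

instance (n : ℕ) (E : List (ℕ × ℕ)) : DecidableRel (gN n E).Adj := fun _ _ => inferInstanceAs (Decidable (_ ∧ _))

/-- the extras in terms of positions -/
def exl (n : ℕ) (P : ℕ → ℕ) (C : List ℕ) : List (ℕ × ℕ) := (0, n) :: C.map fun c => (P (c/16), P (c%16))

def lab (n : ℕ) [NeZero n] : Option (ZMod n) → Fin (n+1)
  | none => Fin.last n
  | some x => ⟨x.val, (ZMod.val_lt x).trans (Nat.lt_succ_self n)⟩

theorem lab_inj (n : ℕ) [NeZero n] : Function.Injective (lab n) := by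
  intro a b h
  have h := congrArg Fin.val h
  rcases a with _ | a <;> rcases b with _ | b
  · rfl
  · simp only [lab, Fin.val_last] at h; have := ZMod.val_lt b; omega
  · simp only [lab, Fin.val_last] at h; have := ZMod.val_lt a; omega
  · simp only [lab] at h; rw [ZMod.val_injective n h]

noncomputable def labE (n : ℕ) [NeZero n] : Option (ZMod n) ≃ Fin (n+1) :=
  Equiv.ofBijective (lab n) ((Fintype.bijective_iff_injective_and_card _).2 ⟨lab_inj n, by
    rw [Fintype.card_option, ZMod.card, Fintype.card_fin]⟩)

theorem mem_cycE {n : ℕ} [NeZero n] (u v : Option (ZMod n)) : s(u, v) ∈ cycE n ↔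
    ((lab n u).val < n ∧ (lab n v).val < n ∧ (((lab n u).val+1) % n = (lab n v).val ∨ ((lab n v).val+1) % n = (lab n u).val)) := by
  have key : ∀ a b : ZMod n, b = a + 1 ↔ (a.val + 1) % n = b.val := by
    intro a b
    have : ((a.val + 1 : ℕ) : ZMod n).val = (a.val + 1) % n := ZMod.val_natCast _ _
    rw [← this]
    push_cast
    rw [ZMod.natCast_zmod_val]
    constructor
    · rintro rfl; rfl
    · intro h; exact (ZMod.val_injective n h).symm
  constructor
  · rintro ⟨x, hx, h⟩
    rw [ce, Sym2.eq_iff] at h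
    rcases h with ⟨rfl, rfl⟩ | ⟨rfl, rfl⟩
    · exact ⟨ZMod.val_lt _, ZMod.val_lt _, Or.inl ((key _ _).1 rfl)⟩
    · exact ⟨ZMod.val_lt _, ZMod.val_lt _, Or.inr ((key _ _).1 rfl)⟩
  · rintro ⟨h1, h2, h3⟩
    rcases u with _ | a
    · simp [lab] at h1
    rcases v with _ | b
    · simp [lab] at h2
    rcases h3 with h3 | h3
    · have := (key a b).2 h3
      exact ⟨a.val, ZMod.val_lt a, by rw [ce, ZMod.natCast_zmod_val, this]⟩
    · have := (key b a).2 h3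
      exact ⟨b.val, ZMod.val_lt b, by rw [ce, ZMod.natCast_zmod_val, this, Sym2.eq_swap]⟩

theorem xC_iff {k : ℕ} {C : List ℕ} (Q : ℕ → ℕ → Prop) :
    (∃ t < C.length + 1, Q (xiC C t) (xjC k C t)) ↔ Q 0 k ∨ ∃ c ∈ C, Q (c/16) (c%16) := by
  constructor
  · rintro ⟨t, ht, h⟩
    rcases Nat.eq_zero_or_pos t with rfl | h0
    · exact Or.inl h
    · right
      have hl : t - 1 < C.length := by omega
      refine ⟨C[t-1], List.getElem_mem _, ?_⟩
      simp only [xiC, xjC, if_neg (by omega : t ≠ 0), List.getD_eq_getElem _ _ hl] at h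
      exact h
  · rintro (h | ⟨c, hc, h⟩)
    · exact ⟨0, by omega, h⟩
    · obtain ⟨t, ht, rfl⟩ := List.getElem_of_mem hc
      refine ⟨t+1, by omega, ?_⟩
      simp only [xiC, xjC, if_neg (by omega : t + 1 ≠ 0), Nat.add_sub_cancel, List.getD_eq_getElem _ _ ht]
      exact h

theorem lab_pt {n k : ℕ} [NeZero n] {P xi xj : ℕ → ℕ} {M : ℕ} (D : Data n k P xi xj M) {q : ℕ} (hq : q ≤ k) :
    (lab n (pt n k P q)).val = P q := by
  unfold pt
  split_ifs with h
  · rw [h, D.Pk]; rfl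
  · have := D.P_lt (i := q) (by omega)
    simp only [lab]
    rw [ZMod.val_natCast, Nat.mod_eq_of_lt this]

theorem mem_xC_le {k : ℕ} {C : List ℕ} (hC : ∀ c ∈ C, c / 16 < c % 16 ∧ c % 16 ≤ k) : ∀ c ∈ C, c/16 ≤ k ∧ c%16 ≤ k := by
  intro c hc; have := hC c hc; omega

theorem model_iso {n k : ℕ} [NeZero n] {P : ℕ → ℕ} {C : List ℕ}
    (D : Data n k P (xiC C) (xjC k C) (C.length+1)) (hC : ∀ c ∈ C, c / 16 < c % 16 ∧ c % 16 ≤ k)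
    (G : SimpleGraph (Option (ZMod n)))
    (hG : G.edgeSet = Em n k P (xiC C) (xjC k C) (C.length+1)) : Nonempty (G ≃g gN n (exl n P C)) := by
  refine ⟨⟨labE n, ?_⟩⟩
  intro u v
  have hl : ∀ u, labE n u = lab n u := fun u => rfl
  rw [hl, hl]
  show lab n u ≠ lab n v ∧ _ ↔ _
  have hed : (∃ t < C.length + 1, s(u, v) = ed n k P (xiC C) (xjC k C) t) ↔
      symmem (exl n P C) (lab n u).val (lab n v).val = true := by
    have := xC_iff (k := k) (C := C) (fun i j => s(u, v) = s(pt n k P i, pt n k P j))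
    unfold ed
    rw [this, symmem_iff]
    have e : ∀ i j, i ≤ k → j ≤ k → (s(u, v) = s(pt n k P i, pt n k P j) ↔
        (P i = (lab n u).val ∧ P j = (lab n v).val) ∨ (P i = (lab n v).val ∧ P j = (lab n u).val)) := by
      intro i j hi hj
      have inj : ∀ a b, a = b ↔ (lab n b).val = (lab n a).val := fun a b =>
        ⟨fun h => by rw [h], fun h => (lab_inj n (Fin.ext h)).symm⟩
      rw [Sym2.eq_iff, inj u, inj v, inj u, inj v, lab_pt D hi, lab_pt D hj]
      tauto
    rw [e 0 k (by omega) le_rfl, D.P0, D.Pk]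
    unfold exl
    simp only [List.mem_cons, List.mem_map, exists_eq_or_imp, exists_exists_and_eq_and]
    apply or_congr Iff.rfl
    apply exists_congr
    intro c
    apply and_congr_right
    intro hc
    exact e _ _ (mem_xC_le hC c hc).1 (mem_xC_le hC c hc).2
  have hA : G.Adj u v ↔ adjB n (exl n P C) (lab n u).val (lab n v).val = true := by
    rw [← mem_edgeSet, hG, adjB_iff, ← mem_cycE, ← hed]
    rfl
  rw [hA]
  constructor
  · exact fun h => h.2
  · intro h
    refine ⟨?_, h⟩
    intro h'
    rw [← hA, lab_inj n h'] at h
    exact G.loopless.irrefl _ h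

theorem mod2 {a n : ℕ} (h : a < 2 * n) : a % n = if a < n then a else a - n := by
  split_ifs with h'
  · exact Nat.mod_eq_of_lt h'
  · rw [Nat.mod_eq_sub_mod (by omega), Nat.mod_eq_of_lt (by omega)]

/-- dihedral maps -/
def dih (n s : ℕ) (sg : Bool) (x : ℕ) : ℕ :=
  bif Nat.beq x n then n else bif sg then (s + x) % n else (s + n - x) % n

theorem dih_n (n s : ℕ) (sg : Bool) : dih n s sg n = n := by
  unfold dih; rw [beq_t rfl]; rfl

theorem dih_lt {n s : ℕ} (sg : Bool) {x : ℕ} (hs : s < n) (hx : x < n) :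
    dih n s sg x = if sg = true then (if s + x < n then s + x else s + x - n) else (if x ≤ s then s - x else s + n - x) := by
  unfold dih
  have : Nat.beq x n = false := by rw [beq_eq_beq, beq_eq_false_iff_ne]; omega
  rw [this, cond_false]
  cases sg
  · simp only [cond_false, Bool.false_eq_true, if_false]
    rcases Nat.eq_zero_or_pos x with rfl | h0
    · rw [Nat.sub_zero, Nat.add_mod_right, Nat.mod_eq_of_lt hs]; simp
    · rw [mod2 (by omega)]
      split_ifs <;> omega
  · simp only [cond_true, if_true]
    rw [mod2 (by omega)]

theorem dih_lt' {n s : ℕ} (sg : Bool) {x : ℕ} (hs : s < n) (hx : x < n) : dih n s sg x < n := by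
  rw [dih_lt sg hs hx]; split_ifs <;> omega

theorem dih_inj {n s : ℕ} (sg : Bool) {x y : ℕ} (hs : s < n) (hx : x ≤ n) (hy : y ≤ n)
    (h : dih n s sg x = dih n s sg y) : x = y := by
  rcases Nat.eq_or_lt_of_le hx with rfl | hx <;> rcases Nat.eq_or_lt_of_le hy with rfl | hy
  · rfl
  · rw [dih_n] at h; have := dih_lt' sg hs hy; omega
  · rw [dih_n] at h; have := dih_lt' sg hs hx; omega
  · rw [dih_lt sg hs hx, dih_lt sg hs hy] at h
    split_ifs at h <;> omega

theorem dih_cyc {n s : ℕ} (sg : Bool) {x y : ℕ} (hs : s < n) (hx : x < n) (hy : y < n) :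
    ((dih n s sg x + 1) % n = dih n s sg y ∨ (dih n s sg y + 1) % n = dih n s sg x) ↔
    ((x + 1) % n = y ∨ (y + 1) % n = x) := by
  have h1 := dih_lt' sg hs hx
  have h2 := dih_lt' sg hs hy
  rw [mod2 (by omega), mod2 (by omega), mod2 (by omega), mod2 (by omega), dih_lt sg hs hx, dih_lt sg hs hy]
  cases sg
  · simp only [Bool.false_eq_true, if_false]
    constructor <;> intro h <;> split_ifs at h ⊢ <;> omega
  · simp only [if_true]
    constructor <;> intro h <;> split_ifs at h ⊢ <;> omega

def dchk (n : ℕ) (E E' : List (ℕ × ℕ)) (sg : Bool) (s : ℕ) : Bool :=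
  Nat.blt s n &&
  (E.all (fun p => Nat.ble p.1 n && (Nat.ble p.2 n && symmem E' (dih n s sg p.1) (dih n s sg p.2))) &&
  E'.all (fun q => E.any fun p => (Nat.beq (dih n s sg p.1) q.1 && Nat.beq (dih n s sg p.2) q.2) ||
    (Nat.beq (dih n s sg p.1) q.2 && Nat.beq (dih n s sg p.2) q.1)))

theorem dchk_iso {n : ℕ} {E E' : List (ℕ × ℕ)} {sg : Bool} {s : ℕ} (h : dchk n E E' sg s = true) :
    Nonempty (gN n E ≃g gN n E') := by
  simp only [dchk, Bool.and_eq_true, List.all_eq_true, List.any_eq_true, Nat.blt_eq, Nat.ble_eq, Bool.or_eq_true, Nat.beq_eq] at h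
  obtain ⟨hs, h1, h2⟩ := h
  have hle : ∀ x, x ≤ n → dih n s sg x < n + 1 := by
    intro x hx
    rcases Nat.eq_or_lt_of_le hx with rfl | hx
    · rw [dih_n]; omega
    · have := dih_lt' sg hs hx; omega
  let f : Fin (n+1) → Fin (n+1) := fun x => ⟨dih n s sg x.val, hle _ (by omega)⟩
  have hf : Function.Injective f := by
    intro x y hxy
    exact Fin.ext (dih_inj sg hs (by omega) (by omega) (congrArg Fin.val hxy))
  refine ⟨⟨Equiv.ofBijective f (Finite.injective_iff_bijective.1 hf), ?_⟩⟩
  intro x y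
  show f x ≠ f y ∧ adjB n E' (dih n s sg x) (dih n s sg y) = true ↔ x ≠ y ∧ adjB n E x y = true
  rw [hf.ne_iff]
  apply and_congr_right
  intro _
  rw [adjB_iff, adjB_iff]
  have hx : x.val ≤ n := by omega
  have hy : y.val ≤ n := by omega
  apply or_congr
  · rcases Nat.eq_or_lt_of_le hx with hx | hx
    · rw [hx, dih_n]; simp
    rcases Nat.eq_or_lt_of_le hy with hy | hy
    · rw [hy, dih_n]; simp
    have h1 := dih_lt' sg hs hx
    have h2 := dih_lt' sg hs hy
    have := dih_cyc sg hs hx hy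
    simp only [hx, hy, h1, h2, true_and]
    exact this
  · constructor
    · intro h
      rw [symmem_iff] at h
      obtain ⟨q, hq, h⟩ := h
      obtain ⟨p, hp, h'⟩ := h2 q hq
      have hp1 := (h1 p hp).1
      have hp2 := (h1 p hp).2.1
      rw [symmem_iff]
      refine ⟨p, hp, ?_⟩
      have i1 := fun h => dih_inj sg hs hp1 hx h
      have i2 := fun h => dih_inj sg hs hp1 hy h
      have i3 := fun h => dih_inj sg hs hp2 hx h
      have i4 := fun h => dih_inj sg hs hp2 hy h
      rcases h with ⟨a, b⟩ | ⟨a, b⟩ <;> rcases h' with ⟨c, d⟩ | ⟨c, d⟩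
      · exact Or.inl ⟨i1 (c.trans a), i4 (d.trans b)⟩
      · exact Or.inr ⟨i2 (c.trans b), i3 (d.trans a)⟩
      · exact Or.inr ⟨i2 (c.trans a), i3 (d.trans b)⟩
      · exact Or.inl ⟨i1 (c.trans b), i4 (d.trans a)⟩
    · intro h
      rw [symmem_iff] at h
      obtain ⟨p, hp, h⟩ := h
      have := (h1 p hp).2.2
      rcases h with ⟨a, b⟩ | ⟨a, b⟩
      · rw [a, b] at this; exact this
      · rw [a, b] at this; exact symmem_comm this

end Concrete


/-! ### Part G: the leaf test -/

/-- the list of extra edges of each of the exceptional graphs -/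
def tl (n : ℕ) : List (List (ℕ × ℕ)) :=
  if n = 8 then [[(0, 8), (2, 8), (0, 5)], [(0, 8), (2, 8), (3, 6)]]
  else if n = 14 then [[(0, 14), (2, 14), (0, 11), (4, 13)], [(0, 14), (2, 14), (0, 5), (4, 7)],
    [(0, 14), (2, 14), (3, 6), (4, 13)]]
  else if n = 20 then [[(0, 20), (4, 20), (0, 5), (0, 13), (12, 19)], [(0, 20), (4, 20), (0, 5), (5, 12), (6, 13)],
    [(0, 20), (4, 20), (0, 5), (6, 13), (7, 14)], [(0, 20), (4, 20), (0, 5), (7, 14), (8, 15)],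
    [(0, 20), (4, 20), (0, 5), (8, 15), (9, 16)], [(0, 20), (4, 20), (0, 5), (9, 16), (10, 17)],
    [(0, 20), (4, 20), (0, 5), (10, 17), (11, 18)], [(0, 20), (4, 20), (0, 5), (11, 18), (12, 19)]]
  else if n = 24 then [[(0, 24), (14, 24), (12, 15), (15, 20), (16, 21)], [(0, 24), (14, 24), (0, 19), (12, 15), (18, 23)],
    [(0, 24), (14, 24), (12, 15), (17, 22), (18, 23)], [(0, 24), (14, 24), (12, 15), (16, 21), (17, 22)]]
  else []

/-- position of the `i`-th point -/
noncomputable def posW (k n W i : ℕ) : ℕ := bif Nat.beq i k then n else (W % 256^i) % 255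

noncomputable def leafT (n : ℕ) (E : List (ℕ × ℕ)) : Bool :=
  (tl n).any fun E' => E'.any fun q => Nat.beq q.2 n && (dchk n E E' true q.1 || dchk n E E' false q.1)

noncomputable def leafB (k : ℕ) (acc : List ℕ) (n W : ℕ) : Bool := leafT n (exl n (posW k n W) acc)

theorem pk_low (i K : ℕ) (hi : i ≤ K) (f : ℕ → ℕ) (hf : ∀ i, f i < 256) : pk K f % 256^i = pk i f := by
  have h1 : pk i f < 256^i := by
    induction i with
    | zero => simp [pk]
    | succ i ih =>
      have := ih (by omega)
      have h2 := hf i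
      unfold pk at this ⊢
      rw [Finset.sum_range_succ, pow_succ]
      have h3 := Nat.mul_le_mul_right (256^i) (Nat.le_of_lt_succ h2)
      linarith
  obtain ⟨d, rfl⟩ := Nat.exists_eq_add_of_le hi
  have h2 : ∃ q, pk (i+d) f = pk i f + 256^i * q := by
    unfold pk
    rw [Finset.sum_range_add]
    refine ⟨∑ x ∈ Finset.range d, f (i+x) * 256^x, ?_⟩
    rw [Finset.mul_sum]
    congr 1
    apply Finset.sum_congr rfl
    intro x _
    rw [pow_add]; ring
  obtain ⟨q, hq⟩ := h2
  rw [hq, Nat.add_mul_mod_self_left, Nat.mod_eq_of_lt h1]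

theorem tl_le {n : ℕ} {E : List (ℕ × ℕ)} (h : E ∈ tl n) : n = 8 ∨ n = 14 ∨ n = 20 ∨ n = 24 := by
  unfold tl at h
  split_ifs at h with h1 h2 h3 h4
  · exact Or.inl h1
  · exact Or.inr (Or.inl h2)
  · exact Or.inr (Or.inr (Or.inl h3))
  · exact Or.inr (Or.inr (Or.inr h4))
  · simp at h

theorem leaf_sound {n k : ℕ} [NeZero n] {P : ℕ → ℕ} {C : List ℕ}
    (D : Data n k P (xiC C) (xjC k C) (C.length+1)) (hC : ∀ c ∈ C, c / 16 < c % 16 ∧ c % 16 ≤ k)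
    (h : leafB k C.reverse n (pk (k + (C.length+1)) (alen k P)) = true) :
    ∃ E ∈ tl n, Nonempty (gN n (exl n P C.reverse) ≃g gN n E) := by
  unfold leafB leafT at h
  rw [List.any_eq_true] at h
  obtain ⟨E, hE, h⟩ := h
  refine ⟨E, hE, ?_⟩
  have hn : n ≤ 24 := by have := tl_le hE; omega
  have hal : ∀ i, alen k P i < 256 := by
    intro i
    unfold alen
    split_ifs with hi
    · have := D.P_le (i := i+1) (by omega); omega
    · norm_num
  have hsum : ∀ q ≤ k, ∑ i ∈ Finset.range q, alen k P i = P q := by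
    intro q
    induction q with
    | zero => intro _; rw [D.P0]; rfl
    | succ q ih =>
      intro hq
      rw [Finset.sum_range_succ, ih (by omega), alen, if_pos (by omega)]
      have := D.mono q (by omega)
      omega
  have hpos : ∀ i ≤ k, posW k n (pk (k + (C.length+1)) (alen k P)) i = P i := by
    intro i hi
    unfold posW
    by_cases hik : i = k
    · rw [beq_t hik, cond_true, hik, D.Pk]
    · have : Nat.beq i k = false := by rw [beq_eq_beq, beq_eq_false_iff_ne]; omega
      rw [this, cond_false, pk_low _ _ (by omega) _ hal, pk_mod, hsum i hi]
      have := D.P_le hi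
      exact Nat.mod_eq_of_lt (by omega)
  have hex : exl n (posW k n (pk (k + (C.length+1)) (alen k P))) C.reverse = exl n P C.reverse := by
    unfold exl
    congr 1
    apply List.map_congr_left
    intro c hc
    rw [List.mem_reverse] at hc
    have := hC c hc
    rw [hpos _ (by omega), hpos _ (by omega)]
  rw [hex, List.any_eq_true] at h
  obtain ⟨q, _, h⟩ := h
  rw [Bool.and_eq_true, Bool.or_eq_true] at h
  rcases h.2 with h | h
  · exact dchk_iso h
  · exact dchk_iso h

theorem gN_congr {n : ℕ} {E E' : List (ℕ × ℕ)} (h : ∀ p, p ∈ E ↔ p ∈ E') : gN n E = gN n E' := by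
  have : ∀ x y, symmem E x y = true ↔ symmem E' x y = true := by
    intro x y
    rw [symmem_iff, symmem_iff]
    simp only [h]
  ext x y
  show x ≠ y ∧ adjB n E x y = true ↔ x ≠ y ∧ adjB n E' x y = true
  rw [adjB_iff, adjB_iff, this]

theorem exl_rev (n : ℕ) (P : ℕ → ℕ) (C : List ℕ) : gN n (exl n P C.reverse) = gN n (exl n P C) := by
  apply gN_congr
  intro p
  simp only [exl, List.mem_cons, List.mem_map, List.mem_reverse]


/-! ### Part H: extracting the model data from a graph -/

section Extract
variable {n : ℕ} [NeZero n]

theorem mem_pairs {k c : ℕ} (hk : k < 16) : c ∈ pairs k ↔ c / 16 < c % 16 ∧ c % 16 ≤ k ∧ c ≠ k := by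
  unfold pairs
  simp only [List.mem_flatMap, List.mem_range, List.mem_filterMap]
  constructor
  · rintro ⟨i, hi, j, hj, h⟩
    split_ifs at h with hc
    simp at hc h
    omega
  · rintro ⟨h1, h2, h3⟩
    refine ⟨c/16, by omega, c%16, by omega, ?_⟩
    rw [if_pos]
    · congr 1; omega
    · simp; omega

theorem pairs_pw {k : ℕ} (hk : k ≤ 9) : (pairs k).Pairwise (fun c c' => c / 16 ≤ c' / 16) ∧ (pairs k).Nodup := by
  interval_cases k <;> decide +kernel

theorem xC_all {k : ℕ} {C : List ℕ} (Q : ℕ → ℕ → Prop) (h0 : Q 0 k) (h1 : ∀ c ∈ C, Q (c/16) (c%16)) :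
    ∀ t < C.length + 1, Q (xiC C t) (xjC k C t) := by
  intro t ht
  by_contra h
  have := (xC_iff (k := k) (C := C) (fun i j => ¬ Q i j)).1 ⟨t, ht, h⟩
  rcases this with h | ⟨c, hc, h⟩
  · exact h h0
  · exact h (h1 c hc)

theorem mkData {k : ℕ} {P : ℕ → ℕ} {C : List ℕ} (hn : 3 ≤ n) (hk : 1 ≤ k) (P0 : P 0 = 0) (Pk : P k = n)
    (mono : ∀ i < k, P i < P (i+1)) (hnd : C.Nodup) (hC : ∀ c ∈ C, c / 16 < c % 16 ∧ c % 16 ≤ k ∧ c ≠ k)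
    (hk16 : k < 16)
    (hnc : ∀ c ∈ C, s(pt n k P (c/16), pt n k P (c%16)) ∉ cycE n) :
    Data n k P (xiC C) (xjC k C) (C.length+1) := by
  have D0 : Data n k P (xiC C) (xjC k C) 0 := ⟨hn, hk, P0, Pk, mono, rfl, rfl, by simp, by simp, by simp, by simp⟩
  have hlt : ∀ t < C.length + 1, xiC C t < xjC k C t := xC_all (fun i j => i < j) (by omega) (fun c hc => (hC c hc).1)
  have hle : ∀ t < C.length + 1, xjC k C t ≤ k := xC_all (fun i j => j ≤ k) le_rfl (fun c hc => (hC c hc).2.1)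
  refine ⟨hn, hk, P0, Pk, mono, rfl, rfl, hlt, hle, ?_, ?_⟩
  · refine xC_all (fun i j => s(pt n k P i, pt n k P j) ∉ cycE n) ?_ hnc
    rw [mem_cycE]
    rintro ⟨_, h, _⟩
    rw [lab_pt D0 le_rfl, Pk] at h
    omega
  · intro t ht t' ht' h
    have a1 := hlt t ht
    have a2 := hle t ht
    have b1 := hlt t' ht'
    have b2 := hle t' ht'
    rw [ed, ed, Sym2.eq_iff] at h
    have key : xiC C t = xiC C t' ∧ xjC k C t = xjC k C t' := by
      rcases h with ⟨h1, h2⟩ | ⟨h1, h2⟩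
      · exact ⟨D0.pt_inj (by omega) (by omega) h1, D0.pt_inj (by omega) (by omega) h2⟩
      · have e1 := D0.pt_inj (by omega) (by omega) h1
        have e2 := D0.pt_inj (by omega) (by omega) h2
        omega
    have main : ∀ t < C.length + 1, t ≠ 0 → ∃ h : t - 1 < C.length, xiC C t = C[t-1] / 16 ∧ xjC k C t = C[t-1] % 16 := by
      intro t ht h0
      have hl : t - 1 < C.length := by omega
      refine ⟨hl, ?_⟩
      simp only [xiC, xjC, if_neg h0, List.getD_eq_getElem _ _ hl, and_self]
    have z1 : xiC C 0 = 0 := rfl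
    have z2 : xjC k C 0 = k := rfl
    rcases Nat.eq_zero_or_pos t with rfl | h0 <;> rcases Nat.eq_zero_or_pos t' with rfl | h0'
    · rfl
    · exfalso
      obtain ⟨hl, e1, e2⟩ := main t' ht' (by omega)
      have := (hC _ (List.getElem_mem hl)).2.2
      omega
    · exfalso
      obtain ⟨hl, e1, e2⟩ := main t ht (by omega)
      have := (hC _ (List.getElem_mem hl)).2.2
      omega
    · obtain ⟨hl, e1, e2⟩ := main t ht (by omega)
      obtain ⟨hl', e1', e2'⟩ := main t' ht' (by omega)
      have : C[t-1] = C[t'-1] := by omega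
      have := (hnd.getElem_inj_iff).1 this
      omega

theorem cycE_ncard (hn : 3 ≤ n) : (cycE n).ncard = n := by
  have : cycE n = ce n '' (Finset.range n : Set ℕ) := by
    ext e
    simp only [cycE, Set.mem_ofPred_eq, Set.mem_image, Finset.coe_range, Set.mem_Iio]
    constructor
    · rintro ⟨x, hx, rfl⟩; exact ⟨x, hx, rfl⟩
    · rintro ⟨x, hx, rfl⟩; exact ⟨x, hx, rfl⟩
  rw [this, Set.InjOn.ncard_image, Set.ncard_coe_finset, Finset.card_range]
  intro x hx y hy h
  simp at hx hy
  exact ce_inj hn hx hy h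

theorem extract (hn4 : 4 ≤ n) (G : SimpleGraph (Option (ZMod n))) (hcyc : cycE n ⊆ G.edgeSet)
    (h0 : G.Adj (some 0) none) (hdeg : 2 ≤ (G.neighborSet none).ncard) (hE : G.edgeSet.ncard ≤ n + 5) :
    ∃ (k : ℕ) (P : ℕ → ℕ) (C : List ℕ), 1 ≤ k ∧ k ≤ 9 ∧ C.Sublist (pairs k) ∧ C.length ≤ 4 ∧
      Data n k P (xiC C) (xjC k C) (C.length+1) ∧ G.edgeSet = Em n k P (xiC C) (xjC k C) (C.length+1) ∧
      (∀ b ≤ k, b = 0 ∨ b = k ∨ ∃ c ∈ C, c / 16 = b ∨ c % 16 = b) ∧ (∃ c ∈ C, c % 16 = k) := by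
  classical
  set X : Finset (Sym2 (Option (ZMod n))) := Finset.univ.filter (fun e => e ∈ G.edgeSet ∧ e ∉ cycE n) with hX
  have hXc : (X : Set _) = G.edgeSet \ cycE n := by
    ext e; simp [hX]
  have hX5 : X.card ≤ 5 := by
    rw [← Set.ncard_coe_finset, hXc, Set.ncard_sdiff hcyc (Set.toFinite _), cycE_ncard (by omega)]
    omega
  have hmX : ∀ e, e ∈ X ↔ e ∈ G.edgeSet ∧ e ∉ cycE n := by intro e; simp [hX]
  have hnone : ∀ v, s(none, v) ∉ cycE n := by
    intro v hv
    rw [mem_cycE] at hv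
    simp [lab] at hv
  have he0 : s(some 0, none) ∈ X := (hmX _).2 ⟨h0, by rw [Sym2.eq_swap]; exact hnone _⟩
  set S : Finset ℕ := (X.biUnion fun e => e.toFinset).image (fun v => (lab n v).val) with hS
  have hSmem : ∀ u v, s(u, v) ∈ X → (lab n u).val ∈ S := by
    intro u v h
    exact Finset.mem_image.2 ⟨u, Finset.mem_biUnion.2 ⟨_, h, by simp⟩, rfl⟩
  have hScard : S.card ≤ 10 := by
    refine Finset.card_image_le.trans ?_
    refine (Finset.card_biUnion_le_card_mul X _ 2 ?_).trans (by omega)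
    intro e _
    rw [Sym2.card_toFinset]
    split_ifs <;> omega
  have hS0 : 0 ∈ S := by
    have := hSmem _ _ he0
    simpa [lab] using this
  have hSn : n ∈ S := by
    have := hSmem none (some 0) (by rw [Sym2.eq_swap]; exact he0)
    simpa [lab] using this
  have hSle : ∀ x ∈ S, x ≤ n := by
    intro x hx
    obtain ⟨v, _, rfl⟩ := Finset.mem_image.1 hx
    omega
  have hS2 : 2 ≤ S.card := by
    have : ({0, n} : Finset ℕ) ⊆ S := by
      intro x hx
      simp at hx
      rcases hx with rfl | rfl <;> assumption
    have := Finset.card_le_card this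
    rwa [Finset.card_pair (by omega)] at this
  obtain ⟨k, hk⟩ : ∃ k, S.card = k + 1 := ⟨S.card - 1, by omega⟩
  set f := S.orderEmbOfFin hk with hf
  let P : ℕ → ℕ := fun i => if h : i < k + 1 then f ⟨i, h⟩ else 0
  have hPf : ∀ (i : ℕ) (h : i < k + 1), P i = f ⟨i, h⟩ := fun i h => dif_pos h
  have hPS : ∀ i ≤ k, P i ∈ S := by
    intro i hi
    rw [hPf i (by omega)]
    exact Finset.orderEmbOfFin_mem _ _ _
  have hSP : ∀ x ∈ S, ∃ i ≤ k, P i = x := by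
    intro x hx
    have : x ∈ Set.range f := by rw [hf, Finset.range_orderEmbOfFin]; exact hx
    obtain ⟨⟨i, hi⟩, rfl⟩ := this
    exact ⟨i, by omega, hPf i hi⟩
  have hmonoS : ∀ i j, i < j → j ≤ k → P i < P j := by
    intro i j hij hj
    rw [hPf i (by omega), hPf j (by omega)]
    exact f.strictMono hij
  have P0 : P 0 = 0 := by
    obtain ⟨i, hi, h⟩ := hSP 0 hS0
    rcases Nat.eq_zero_or_pos i with rfl | h0
    · exact h
    · have := hmonoS 0 i h0 hi; omega
  have Pk : P k = n := by
    obtain ⟨i, hi, h⟩ := hSP n hSn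
    rcases Nat.eq_or_lt_of_le hi with rfl | h0
    · exact h
    · have := hmonoS i k h0 le_rfl
      have := hSle _ (hPS k le_rfl)
      omega
  have hk9 : k ≤ 9 := by omega
  have hk1 : 1 ≤ k := by omega
  have D0 : Data n k P (fun _ => 0) (fun _ => k) 0 :=
    ⟨by omega, hk1, P0, Pk, fun i hi => hmonoS i _ (by omega) (by omega), rfl, rfl, by simp, by simp, by simp, by simp⟩
  have hpt : ∀ v, (lab n v).val ∈ S → ∃ i ≤ k, v = pt n k P i := by
    intro v hv
    obtain ⟨i, hi, h⟩ := hSP _ hv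
    refine ⟨i, hi, lab_inj n (Fin.ext ?_)⟩
    rw [lab_pt D0 hi, h]
  let C := (pairs k).filter (fun c => s(pt n k P (c/16), pt n k P (c%16)) ∈ X)
  have hCm : ∀ c, c ∈ C ↔ c ∈ pairs k ∧ s(pt n k P (c/16), pt n k P (c%16)) ∈ X := by
    intro c; simp [C]
  have hsub : C.Sublist (pairs k) := List.filter_sublist
  have hpw := pairs_pw hk9
  have D : Data n k P (xiC C) (xjC k C) (C.length+1) := by
    refine mkData (by omega) hk1 P0 Pk (fun i hi => hmonoS i _ (by omega) (by omega)) (hpw.2.sublist hsub) ?_ (by omega) ?_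
    · intro c hc; exact (mem_pairs (by omega)).1 ((hCm c).1 hc).1
    · intro c hc; exact ((hmX _).1 ((hCm c).1 hc).2).2
  have hp0 : pt n k P 0 = some 0 := by unfold pt; rw [if_neg (by omega), P0]; simp
  have hpk : pt n k P k = none := by unfold pt; rw [if_pos rfl]
  have hedX : ∀ t < C.length + 1, ed n k P (xiC C) (xjC k C) t ∈ X := by
    refine xC_all (fun i j => s(pt n k P i, pt n k P j) ∈ X) ?_ ?_
    · rw [hp0, hpk]; exact he0
    · intro c hc; exact ((hCm c).1 hc).2
  have hlen : C.length + 1 ≤ 5 := by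
    refine le_trans ?_ hX5
    rw [← Finset.card_range (C.length+1)]
    refine Finset.card_le_card_of_injOn (ed n k P (xiC C) (xjC k C)) ?_ ?_
    · intro t ht; exact hedX t (by simpa using ht)
    · intro t ht t' ht' h
      exact D.inj t (by simpa using ht) t' (by simpa using ht') h
  have hXed : ∀ i j, i ≤ k → j ≤ k → s(pt n k P i, pt n k P j) ∈ X → i < j →
      (i = 0 ∧ j = k) ∨ 16 * i + j ∈ C := by
    intro i j hi hj h hij
    by_cases h' : i = 0 ∧ j = k
    · exact Or.inl h'
    · right
      have e1 : (16 * i + j) / 16 = i := by omega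
      have e2 : (16 * i + j) % 16 = j := by omega
      rw [hCm, mem_pairs (by omega), e1, e2]
      exact ⟨⟨hij, hj, by omega⟩, h⟩
  have hXne : ∀ i j, i ≤ k → j ≤ k → s(pt n k P i, pt n k P j) ∈ X → i ≠ j := by
    rintro i j hi hj h rfl
    have := ((hmX _).1 h).1
    simp at this
  refine ⟨k, P, C, hk1, hk9, hsub, by omega, D, ?_, ?_, ?_⟩
  · ext e
    constructor
    · intro he
      by_cases hce : e ∈ cycE n
      · exact Or.inl hce
      · right
        have heX : e ∈ X := (hmX e).2 ⟨he, hce⟩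
        have := (xC_iff (k := k) (C := C) (fun i j => e = s(pt n k P i, pt n k P j))).2
        apply this
        induction e with | _ u v =>
        obtain ⟨i, hi, rfl⟩ := hpt u (hSmem _ _ heX)
        obtain ⟨j, hj, rfl⟩ := hpt v (hSmem v _ (by rw [Sym2.eq_swap]; exact heX))
        have main : ∀ i j, i ≤ k → j ≤ k → s(pt n k P i, pt n k P j) ∈ X → i < j →
            s(pt n k P i, pt n k P j) = s(pt n k P 0, pt n k P k) ∨ ∃ c ∈ C, s(pt n k P i, pt n k P j) = s(pt n k P (c/16), pt n k P (c%16)) := by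
          intro i j hi hj h hij
          rcases hXed i j hi hj h hij with ⟨rfl, rfl⟩ | hc
          · exact Or.inl rfl
          · right
            refine ⟨_, hc, ?_⟩
            have e1 : (16 * i + j) / 16 = i := by omega
            have e2 : (16 * i + j) % 16 = j := by omega
            rw [e1, e2]
        rcases Nat.lt_or_gt_of_ne (hXne i j hi hj heX) with h | h
        · exact main i j hi hj heX h
        · rw [Sym2.eq_swap]
          exact main j i hj hi (by rw [Sym2.eq_swap]; exact heX) h
    · rintro (he | ⟨t, ht, rfl⟩)
      · exact hcyc he
      · exact ((hmX _).1 (hedX t ht)).1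
  · intro b hb
    by_cases hb0 : b = 0
    · exact Or.inl hb0
    by_cases hbk : b = k
    · exact Or.inr (Or.inl hbk)
    refine Or.inr (Or.inr ?_)
    obtain ⟨v, hv, hvb⟩ := Finset.mem_image.1 (hPS b hb)
    obtain ⟨e, he, hve⟩ := Finset.mem_biUnion.1 hv
    have hv' : v = pt n k P b := lab_inj n (Fin.ext (by rw [lab_pt D0 hb]; exact hvb))
    rw [Sym2.mem_toFinset] at hve
    obtain ⟨u, rfl⟩ := hve
    obtain ⟨j, hj, rfl⟩ := hpt u (hSmem u v (by rw [Sym2.eq_swap]; exact he))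
    rw [hv'] at he
    rcases Nat.lt_or_gt_of_ne (hXne b j hb hj he) with h | h
    · rcases hXed b j hb hj he h with h' | h'
      · omega
      · exact ⟨_, h', by omega⟩
    · rcases hXed j b hj hb (by rw [Sym2.eq_swap]; exact he) h with h' | h'
      · omega
      · exact ⟨_, h', by omega⟩
  · have : ∃ y ∈ G.neighborSet none, y ≠ some 0 := by
      by_contra hcon
      push Not at hcon
      have : G.neighborSet none ⊆ {some 0} := fun y hy => hcon y hy
      have := Set.ncard_le_ncard this
      rw [Set.ncard_singleton] at this
      omega
    obtain ⟨y, hy, hy0⟩ := this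
    have heX : s(y, none) ∈ X := (hmX _).2 ⟨by exact G.symm.symm _ _ hy, by rw [Sym2.eq_swap]; exact hnone y⟩
    obtain ⟨j, hj, rfl⟩ := hpt y (hSmem _ _ heX)
    rw [← hpk] at heX
    have hne := hXne j k hj le_rfl heX
    rcases hXed j k hj le_rfl heX (by omega) with ⟨h, _⟩ | h
    · rw [h, hp0] at hy0; exact absurd rfl hy0
    · exact ⟨_, h, by omega⟩

end Extract


/-! ### Part I: the classification -/

section Main
variable {V : Type*} [Fintype V]

theorem card_ge (G : SimpleGraph V) (h : IsOddlyRBipancyclic G 2) : 5 ≤ Fintype.card V := by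
  classical
  obtain ⟨⟨col⟩, hodd, hdeg, -⟩ := h
  by_contra hlt
  have hle : Fintype.card V ≤ 3 := by
    obtain ⟨m, hm⟩ := hodd; omega
  have hpos : 0 < Fintype.card V := hodd.pos
  obtain ⟨x⟩ := Fintype.card_pos_iff.1 hpos
  have hx := hdeg x
  obtain ⟨y, z, hy, hz, hyz⟩ := (Set.one_lt_ncard_iff (Set.toFinite _)).1 (by omega : 1 < (G.neighborSet x).ncard)
  have hxy : G.Adj x y := hy
  have hxz : G.Adj x z := hz
  have hc : ({x, y, z} : Finset V).card = 3 := by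
    rw [Finset.card_eq_three]
    exact ⟨x, y, z, hxy.ne, hxz.ne, hyz, rfl⟩
  have huniv : ({x, y, z} : Finset V) = Finset.univ := by
    apply Finset.eq_univ_of_card
    have := Finset.card_le_univ ({x, y, z} : Finset V)
    omega
  have hsub : G.neighborSet y ⊆ {x, z} := by
    intro u hu
    have hu' : G.Adj y u := hu
    have : u ∈ ({x, y, z} : Finset V) := by rw [huniv]; exact Finset.mem_univ _
    simp only [Finset.mem_insert, Finset.mem_singleton] at this
    rcases this with h | h | h
    · exact Or.inl h
    · exact absurd h.symm hu'.ne
    · exact Or.inr h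
  have hyz' : G.Adj y z := by
    by_contra hno
    have h2 : G.neighborSet y ⊆ {x} := by
      intro u hu
      rcases hsub hu with h | h
      · exact h
      · rw [Set.mem_singleton_iff] at h
        subst h; exact absurd hu hno
    have := Set.ncard_le_ncard h2
    rw [Set.ncard_singleton] at this
    have := hdeg y
    omega
  have c1 := col.valid hxy
  have c2 := col.valid hxz
  have c3 := col.valid hyz'
  generalize col x = a at *
  generalize col y = b at *
  generalize col z = c at *
  revert a b c
  decide

theorem exists_ham (G : SimpleGraph V) (h : IsOddlyRBipancyclic G 2) {n : ℕ} [NeZero n] (hn : Fintype.card V = n + 1)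
    (hn4 : 4 ≤ n) : ∃ φ : ZMod n → V, Function.Injective φ ∧ ∀ i, G.Adj (φ i) (φ (i+1)) := by
  obtain ⟨-, hodd, -, hcc⟩ := h
  have heven : Even n := by
    rw [hn] at hodd
    exact (Nat.odd_add_one.1 hodd |> Nat.not_odd_iff_even.1)
  have h2 := hcc n hn4 (by omega) heven
  have hne : {H : G.Subgraph | Nonempty (H.coe ≃g cycleGraph n)}.Nonempty := by
    apply Set.nonempty_of_ncard_ne_zero
    change cycleCount G n ≠ 0
    omega
  obtain ⟨H, ⟨e⟩⟩ := hne
  obtain ⟨l, rfl⟩ := Nat.exists_eq_add_of_le' hn4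
  refine ⟨fun i => H.hom (e.symm i), ?_, ?_⟩
  · intro i j hij
    exact e.symm.injective (Subtype.ext hij)
  · intro i
    apply H.hom.map_adj
    apply e.symm.map_adj_iff.2
    have : ∀ i : Fin (l+2+2), (cycleGraph (l+2+2)).Adj i (i+1) := by
      intro i
      rw [cycleGraph_adj]; right; simp
    exact this i

theorem classify (hk : ∀ k, 1 ≤ k → k ≤ 9 → kOK leafB k = true) (G : SimpleGraph V)
    (h : IsOddlyRBipancyclic G 2) (hE : G.edgeSet.ncard ≤ Fintype.card V + 4) :
    ∃ n, Fintype.card V = n + 1 ∧ ∃ E ∈ tl n, Nonempty (G ≃g gN n E) := by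
  classical
  have h5 := card_ge G h
  obtain ⟨n, hn⟩ : ∃ n, Fintype.card V = n + 1 := ⟨Fintype.card V - 1, by omega⟩
  have hn4 : 4 ≤ n := by omega
  have : NeZero n := ⟨by omega⟩
  refine ⟨n, hn, ?_⟩
  obtain ⟨φ, hinj, hadj⟩ := exists_ham G h hn hn4
  have hw : ∃ w, w ∉ Set.range φ := by
    by_contra hcon
    push Not at hcon
    have := Fintype.card_le_of_surjective φ hcon
    rw [ZMod.card] at this
    omega
  obtain ⟨w, hw⟩ := hw
  let f : ZMod n → Option (ZMod n) → V := fun a o => o.elim w (fun i => φ (a + i))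
  have finj : ∀ a, Function.Injective (f a) := by
    intro a x y hxy
    rcases x with _ | x <;> rcases y with _ | y
    · rfl
    · exact absurd ⟨_, hxy.symm⟩ hw
    · exact absurd ⟨_, hxy⟩ hw
    · have := hinj hxy
      rw [add_left_cancel this]
  have fbij : ∀ a, Function.Bijective (f a) := by
    intro a
    rw [Fintype.bijective_iff_injective_and_card]
    refine ⟨finj a, ?_⟩
    rw [Fintype.card_option, ZMod.card, hn]
  have hnb : (G.neighborSet w).Nonempty := by
    apply Set.nonempty_of_ncard_ne_zero
    have := h.2.2.1 w
    omega
  obtain ⟨u, hu⟩ := hnb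
  have hu' : G.Adj w u := hu
  obtain ⟨o, ho⟩ := (fbij 0).2 u
  rcases o with _ | a
  · exact absurd ho hu'.ne
  have ho' : φ a = u := by
    have : φ (0 + a) = u := ho
    rwa [zero_add] at this
  let F := Equiv.ofBijective (f a) (fbij a)
  let ψ := Iso.comap F G
  set G' := G.comap F with hG'
  have hG'adj : ∀ x y, G'.Adj x y ↔ G.Adj (f a x) (f a y) := fun x y => Iff.rfl
  have ho := isOddly_iso ψ.symm h
  have hc' : Fintype.card (Option (ZMod n)) = n + 1 := by rw [Fintype.card_option, ZMod.card]
  have hcyc : cycE n ⊆ G'.edgeSet := by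
    rintro e ⟨x, -, rfl⟩
    rw [ce, mem_edgeSet, hG'adj]
    have := hadj (a + x)
    rw [add_assoc] at this
    exact this
  have h0 : G'.Adj (some 0) none := by
    rw [hG'adj]
    have : G.Adj (φ (a + 0)) w := by rw [add_zero, ho']; exact hu'.symm
    exact this
  have hE' : G'.edgeSet.ncard ≤ n + 5 := by
    rw [edge_iso ψ]; omega
  obtain ⟨k, P, C, hk1, hk9, hsub, hC4, D, hGE, hcov, hsp⟩ := extract hn4 G' hcyc h0 (ho.2.2.1 none) hE'
  have hps : ∀ c ∈ pairs k, c / 16 < c % 16 ∧ c % 16 ≤ k := by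
    intro c hc
    have := (mem_pairs (by omega)).1 hc
    exact ⟨this.1, this.2.1⟩
  have hCp : ∀ c ∈ C, c / 16 < c % 16 ∧ c % 16 ≤ k := fun c hc => hps c (hsub.subset hc)
  have hne : n % 2 = 0 := by
    have := ho.2.1
    rw [hc'] at this
    obtain ⟨m, hm⟩ := this
    omega
  have hleaf := model_leaf leafB C hC4 (by omega) hsub hcov hsp (hk k hk1 hk9) (pairs_pw hk9).1 hps hn4 hne D G' hGE ho.1
    (fun l h4 hl he => ho.2.2.2 l h4 (by rw [hc']; omega) he)
  obtain ⟨E, hEt, ⟨χ⟩⟩ := leaf_sound D hCp hleaf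
  rw [exl_rev] at χ
  obtain ⟨μ⟩ := model_iso D hCp G' hGE
  exact ⟨E, hEt, ⟨(ψ.symm.trans μ).trans χ⟩⟩

end Main


/-! ### Part J: the exceptional graphs -/

section Targets

def pf (Pl : List ℕ) (i : ℕ) : ℕ := Pl.getD i 0

/-- finite conditions on a model -/
def tCond (n k : ℕ) (P : ℕ → ℕ) (C : List ℕ) : Prop :=
  (4 ≤ n ∧ 1 ≤ k ∧ k < 16 ∧ n % 2 = 0) ∧ (P 0 = 0 ∧ P k = n ∧ ∀ i < k, P i < P (i+1)) ∧
  (C.Nodup ∧ C.length ≤ 4 ∧ ∀ c ∈ C, c/16 < c%16 ∧ c%16 ≤ k ∧ c ≠ k ∧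
    (c%16 = k ∨ (P (c/16) + 1 < P (c%16) ∧ P (c%16) + 1 < P (c/16) + n))) ∧
  (∀ l < n + 1, 4 ≤ l → l % 2 = 0 →
    (PS k (xiC C) (xjC k C) C.length).countP (fun s => mlen k P (k+(C.length+1)) s = l) = 2)

/-- finite conditions on a graph -/
def gCond (n : ℕ) (E : List (ℕ × ℕ)) : Prop :=
  (∀ x < n + 1, ∀ y < n + 1, adjB n E x y = true →
    (if x = n then 1 else x % 2) ≠ (if y = n then 1 else y % 2)) ∧
  (∀ x < n + 1, 2 ≤ ((List.range (n+1)).filter (fun y => adjB n E x y)).length)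

instance (n k : ℕ) (P : ℕ → ℕ) (C : List ℕ) : Decidable (tCond n k P C) := by unfold tCond; infer_instance
instance (n : ℕ) (E : List (ℕ × ℕ)) : Decidable (gCond n E) := by unfold gCond; infer_instance

theorem target {n k : ℕ} [NeZero n] {P : ℕ → ℕ} {C : List ℕ} {E : List (ℕ × ℕ)}
    (h : tCond n k P C) (hex : exl n P C = E) (hg : gCond n E) :
    IsOddlyRBipancyclic (gN n E) 2 ∧ (gN n E).edgeSet.ncard ≤ n + 5 := by
  classical
  obtain ⟨⟨hn4, hk1, hk16, hne⟩, ⟨hP0, hPk, hmono⟩, ⟨hnd, hl4, hC⟩, hcc⟩ := h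
  have D0 : Data n k P (xiC C) (xjC k C) 0 :=
    ⟨by omega, hk1, hP0, hPk, hmono, rfl, rfl, by simp, by simp, by simp, by simp⟩
  have D : Data n k P (xiC C) (xjC k C) (C.length+1) := by
    refine mkData (by omega) hk1 hP0 hPk hmono hnd (fun c hc => ⟨(hC c hc).1, (hC c hc).2.1, (hC c hc).2.2.1⟩) hk16 ?_
    intro c hc
    obtain ⟨h1, h2, h3, h4⟩ := hC c hc
    rw [mem_cycE, lab_pt D0 (by omega), lab_pt D0 h2]
    rintro ⟨a, b, d⟩
    have h4 : P (c/16) + 1 < P (c%16) ∧ P (c%16) + 1 < P (c/16) + n := by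
      rcases h4 with h4 | h4
      · rw [h4, hPk] at b; omega
      · exact h4
    clear h1 h2 h3
    generalize P (c/16) = p at *
    generalize P (c%16) = q at *
    rw [mod2 (by omega), mod2 (by omega)] at d
    split_ifs at d <;> omega
  let G := fromEdgeSet (Em n k P (xiC C) (xjC k C) (C.length+1))
  have hC' : ∀ c ∈ C, c / 16 < c % 16 ∧ c % 16 ≤ k := fun c hc => ⟨(hC c hc).1, (hC c hc).2.1⟩
  have hG : G.edgeSet = Em n k P (xiC C) (xjC k C) (C.length+1) := by
    rw [edgeSet_fromEdgeSet]
    rw [sdiff_eq_left, Set.disjoint_left]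
    intro e he hd
    induction e using Sym2.ind with
    | _ u v =>
    have huv : u = v := hd
    subst huv
    rcases he with he | ⟨t, ht, he⟩
    · rw [mem_cycE] at he
      obtain ⟨a, -, d⟩ := he
      rw [mod2 (by omega)] at d
      split_ifs at d <;> omega
    · have hlt := D.lt t ht
      have hle := D.le t ht
      unfold ed at he
      rw [Sym2.eq_iff] at he
      have : pt n k P (xiC C t) = pt n k P (xjC k C t) := by
        rcases he with ⟨a, b⟩ | ⟨a, b⟩
        · rw [← a, ← b]
        · rw [← a, ← b]
      have h1 := lab_pt D (q := xiC C t) (by omega)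
      have h2 := lab_pt D (q := xjC k C t) (by omega)
      have := D.pt_inj (by omega) (by omega) this
      omega
  obtain ⟨μ⟩ := model_iso D hC' G hG
  rw [hex] at μ
  refine ⟨⟨?_, ?_, ?_, ?_⟩, ?_⟩
  · refine ⟨Coloring.mk (fun x => if (if x.val = n then 1 else x.val % 2) = 0 then (0 : Fin 2) else 1) ?_⟩
    intro x y hxy
    have := hg.1 x.val x.isLt y.val y.isLt hxy.2
    split_ifs at this ⊢ <;> first | omega | simp_all
  · rw [Fintype.card_fin]
    exact ⟨n/2, by omega⟩
  · intro x
    have h2 := hg.2 x.val x.isLt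
    have hnb : (((List.range (n+1)).filter (fun y => adjB n E x y)).toFinset : Set ℕ) ⊆
        Fin.val '' (gN n E).neighborSet x := by
      intro y hy
      simp only [List.coe_toFinset, Set.mem_ofPred_eq, List.mem_filter, List.mem_range] at hy
      refine ⟨⟨y, hy.1⟩, ⟨?_, hy.2⟩, rfl⟩
      intro he
      have he' := congrArg Fin.val he
      have := hg.1 x.val x.isLt y hy.1 hy.2
      apply this
      change x.val = y at he'
      rw [he']
    have := Set.ncard_le_ncard hnb (Set.toFinite _)
    rw [Set.ncard_coe_finset, List.toFinset_card_of_nodup (List.nodup_range.filter _),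
      Set.ncard_image_of_injective _ Fin.val_injective] at this
    omega
  · intro l hl hl' he
    rw [Fintype.card_fin] at hl'
    rw [← cycleCount_iso μ, cycleCount_model D G hG (by omega)]
    exact hcc l (by omega) hl (Nat.even_iff.1 he)
  · rw [← edge_iso μ, hG]
    unfold Em
    have h1 := Set.ncard_union_le (cycE n) {e | ∃ t < C.length + 1, e = ed n k P (xiC C) (xjC k C) t}
    have h2 : {e | ∃ t < C.length + 1, e = ed n k P (xiC C) (xjC k C) t}.ncard ≤ C.length + 1 := by
      have : {e | ∃ t < C.length + 1, e = ed n k P (xiC C) (xjC k C) t} =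
          (((Finset.range (C.length+1)).image (ed n k P (xiC C) (xjC k C)) : Finset _) : Set _) := by
        ext e
        simp only [Set.mem_ofPred_eq, Finset.coe_image, Set.mem_image, Finset.mem_coe, Finset.mem_range]
        constructor
        · rintro ⟨t, ht, rfl⟩; exact ⟨t, ht, rfl⟩
        · rintro ⟨t, ht, rfl⟩; exact ⟨t, ht, rfl⟩
      rw [this, Set.ncard_coe_finset]
      exact Finset.card_image_le.trans (by rw [Finset.card_range])
    rw [cycE_ncard (by omega)] at h1
    omega

/-- the invariant of a concrete graph -/
def inv (n : ℕ) (E : List (ℕ × ℕ)) : ℕ := gInv (V := Fin (n+1)) (fun x y => decide ((gN n E).Adj x y))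

theorem inv_iso {n : ℕ} {E E' : List (ℕ × ℕ)} (φ : gN n E ≃g gN n E') : inv n E = inv n E' := by
  apply gInv_iso φ.toEquiv
  intro x y
  exact decide_eq_decide.2 φ.map_adj_iff

theorem exactly (hcl : ∀ k, 1 ≤ k → k ≤ 9 → kOK leafB k = true) {n N : ℕ} (hN : (tl n).length = N)
    (hnd : ((tl n).map (inv n)).Nodup)
    (ht : ∀ E ∈ tl n, IsOddlyRBipancyclic (gN n E) 2 ∧ (gN n E).edgeSet.ncard ≤ n + 5) :
    ExactlyNUpToIso 2 N (n+1) (n+5) := by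
  subst hN
  refine ⟨fun i => gN n ((tl n)[i]), ?_, ?_, ?_⟩
  · intro i j hij
    constructor
    intro φ
    have := inv_iso φ
    apply hij
    rw [List.nodup_iff_injective_getElem] at hnd
    have h2 := @hnd ⟨i.val, by rw [List.length_map]; exact i.isLt⟩ ⟨j.val, by rw [List.length_map]; exact j.isLt⟩
      (by simpa using this)
    exact Fin.ext (by simpa using h2)
  · intro i
    exact ht _ (List.getElem_mem _)
  · intro W _ G hW hE hG
    obtain ⟨m, hm, E, hEt, hiso⟩ := classify hcl G hG (by omega)
    obtain rfl : m = n := by omega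
    obtain ⟨i, hi, rfl⟩ := List.getElem_of_mem hEt
    exact ⟨⟨i, hi⟩, hiso⟩

end Targets


section TargetData

set_option maxRecDepth 100000

theorem inv8 : ((tl 8).map (inv 8)).Nodup := by decide +kernel
theorem inv14 : ((tl 14).map (inv 14)).Nodup := by decide +kernel
theorem inv20 : ((tl 20).map (inv 20)).Nodup := by decide +kernel
theorem inv24 : ((tl 24).map (inv 24)).Nodup := by decide +kernel

theorem t8 : ∀ E ∈ tl 8, IsOddlyRBipancyclic (gN 8 E) 2 ∧ (gN 8 E).edgeSet.ncard ≤ 8 + 5 := by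
  rw [show tl 8 = [_, _] from rfl]
  simp only [List.forall_mem_cons, List.not_mem_nil, false_imp_iff, implies_true, and_true]
  refine ⟨?_, ?_⟩
  · exact target (k := 3) (P := pf [0,2,5,8]) (C := [19,2]) (by decide +kernel) (by decide +kernel) (by decide +kernel)
  · exact target (k := 4) (P := pf [0,2,3,6,8]) (C := [20,35]) (by decide +kernel) (by decide +kernel) (by decide +kernel)

theorem t14 : ∀ E ∈ tl 14, IsOddlyRBipancyclic (gN 14 E) 2 ∧ (gN 14 E).edgeSet.ncard ≤ 14 + 5 := by
  rw [show tl 14 = [_, _, _] from rfl]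
  simp only [List.forall_mem_cons, List.not_mem_nil, false_imp_iff, implies_true, and_true]
  refine ⟨?_, ?_, ?_⟩
  · exact target (k := 5) (P := pf [0,2,4,11,13,14]) (C := [21,3,36]) (by decide +kernel) (by decide +kernel) (by decide +kernel)
  · exact target (k := 5) (P := pf [0,2,4,5,7,14]) (C := [21,3,36]) (by decide +kernel) (by decide +kernel) (by decide +kernel)
  · exact target (k := 6) (P := pf [0,2,3,4,6,13,14]) (C := [22,36,53]) (by decide +kernel) (by decide +kernel) (by decide +kernel)

theorem t20 : ∀ E ∈ tl 20, IsOddlyRBipancyclic (gN 20 E) 2 ∧ (gN 20 E).edgeSet.ncard ≤ 20 + 5 := by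
  rw [show tl 20 = [_, _, _, _, _, _, _, _] from rfl]
  simp only [List.forall_mem_cons, List.not_mem_nil, false_imp_iff, implies_true, and_true]
  refine ⟨?_, ?_, ?_, ?_, ?_, ?_, ?_, ?_⟩
  · exact target (k := 6) (P := pf [0,4,5,12,13,19,20]) (C := [22,2,4,53]) (by decide +kernel) (by decide +kernel) (by decide +kernel)
  · exact target (k := 6) (P := pf [0,4,5,6,12,13,20]) (C := [22,2,36,53]) (by decide +kernel) (by decide +kernel) (by decide +kernel)
  · exact target (k := 7) (P := pf [0,4,5,6,7,13,14,20]) (C := [23,2,53,70]) (by decide +kernel) (by decide +kernel) (by decide +kernel)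
  · exact target (k := 7) (P := pf [0,4,5,7,8,14,15,20]) (C := [23,2,53,70]) (by decide +kernel) (by decide +kernel) (by decide +kernel)
  · exact target (k := 7) (P := pf [0,4,5,8,9,15,16,20]) (C := [23,2,53,70]) (by decide +kernel) (by decide +kernel) (by decide +kernel)
  · exact target (k := 7) (P := pf [0,4,5,9,10,16,17,20]) (C := [23,2,53,70]) (by decide +kernel) (by decide +kernel) (by decide +kernel)
  · exact target (k := 7) (P := pf [0,4,5,10,11,17,18,20]) (C := [23,2,53,70]) (by decide +kernel) (by decide +kernel) (by decide +kernel)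
  · exact target (k := 7) (P := pf [0,4,5,11,12,18,19,20]) (C := [23,2,53,70]) (by decide +kernel) (by decide +kernel) (by decide +kernel)

theorem t24 : ∀ E ∈ tl 24, IsOddlyRBipancyclic (gN 24 E) 2 ∧ (gN 24 E).edgeSet.ncard ≤ 24 + 5 := by
  rw [show tl 24 = [_, _, _, _] from rfl]
  simp only [List.forall_mem_cons, List.not_mem_nil, false_imp_iff, implies_true, and_true]
  refine ⟨?_, ?_, ?_, ?_⟩
  · exact target (k := 7) (P := pf [0,12,14,15,16,20,21,24]) (C := [39,19,53,70]) (by decide +kernel) (by decide +kernel) (by decide +kernel)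
  · exact target (k := 7) (P := pf [0,12,14,15,18,19,23,24]) (C := [39,5,19,70]) (by decide +kernel) (by decide +kernel) (by decide +kernel)
  · exact target (k := 8) (P := pf [0,12,14,15,17,18,22,23,24]) (C := [40,19,70,87]) (by decide +kernel) (by decide +kernel) (by decide +kernel)
  · exact target (k := 8) (P := pf [0,12,14,15,16,17,21,22,24]) (C := [40,19,70,87]) (by decide +kernel) (by decide +kernel) (by decide +kernel)

end TargetData

section Checks
set_option maxRecDepth 100000
theorem kOK_1 : kOK leafB 1 = true := by decide +kernel
theorem kOK_2 : kOK leafB 2 = true := by decide +kernel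
theorem kOK_3 : kOK leafB 3 = true := by decide +kernel
theorem kOK_4 : kOK leafB 4 = true := by decide +kernel
theorem kOK_5 : kOK leafB 5 = true := by decide +kernel
theorem kOK_6 : kOK leafB 6 = true := by decide +kernel
theorem kOK_7 : kOK leafB 7 = true := by decide +kernel
theorem kOK_8 : kOK leafB 8 = true := by decide +kernel
theorem kOK_9 : kOK leafB 9 = true := by decide +kernel

theorem kOK_all : ∀ k, 1 ≤ k → k ≤ 9 → kOK leafB k = true := by
  intro k h1 h9
  have : k = 1 ∨ k = 2 ∨ k = 3 ∨ k = 4 ∨ k = 5 ∨ k = 6 ∨ k = 7 ∨ k = 8 ∨ k = 9 := by omega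
  rcases this with h | h | h | h | h | h | h | h | h
  · rw [h]; exact kOK_1
  · rw [h]; exact kOK_2
  · rw [h]; exact kOK_3
  · rw [h]; exact kOK_4
  · rw [h]; exact kOK_5
  · rw [h]; exact kOK_6
  · rw [h]; exact kOK_7
  · rw [h]; exact kOK_8
  · rw [h]; exact kOK_9
end Checks

end OB

theorem oddly_2_bipancyclic_classification :
    (ExactlyNUpToIso 2 2 9 13 ∧
    ExactlyNUpToIso 2 3 15 19 ∧
    ExactlyNUpToIso 2 8 21 25 ∧
    ExactlyNUpToIso 2 4 25 29) ∧
    (∀ (V : Type) [Fintype V] (G : SimpleGraph V),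
      IsOddlyRBipancyclic G 2 → G.edgeSet.ncard ≤ Fintype.card V + 4 →
      Fintype.card V ∈ ({9, 15, 21, 25} : Set ℕ)) := by
  refine ⟨⟨?_, ?_, ?_, ?_⟩, ?_⟩
  · exact OB.exactly OB.kOK_all (n := 8) rfl OB.inv8 OB.t8
  · exact OB.exactly OB.kOK_all (n := 14) rfl OB.inv14 OB.t14
  · exact OB.exactly OB.kOK_all (n := 20) rfl OB.inv20 OB.t20
  · exact OB.exactly OB.kOK_all (n := 24) rfl OB.inv24 OB.t24
  · intro V _ G hG hE
    obtain ⟨n, hn, E, hEt, -⟩ := OB.classify OB.kOK_all G hG hE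
    rw [hn]
    rcases OB.tl_le hEt with rfl | rfl | rfl | rfl <;> simp
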